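/- arXiv:2509.11702 — 8 statements merged into one kernel-verified Lean document; each statement's English description precedes it below -/
import Mathlib

section
/- Let β > -1 be a real number and let α ∈ (0,1] be fixed. Then, as n → ∞, ∫₀^{α(n-2)} (1 - t/(n-2))^{n-2} t^β dt = Γ(β+1) - (Γ(β+3)/2)·n^{-1} + O(n^{-2}), where the integral is taken over real t and n ranges over integers n ≥ 3. -/
/-!
Put `m = n - 2`. Since `log (1 - x) = -x - x²/2 + O(x³)`, the function `(1 - t/m)^m` equals
`e^{-t} (1 - t²/(2m))` up to an error `8 e^{-t} (t² + t⁴) / m²`, and this bound holds on the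
*whole* range `0 ≤ t ≤ m` (`pow_sub_exp_bound`). Beyond the cutoff `t > α m` the factor
`1 ≤ (t/(αm))²` shows that `e^{-t} (1 - t²/(2m))` is itself of size
`O(e^{-t} (t² + t⁴) / (α m)²)`. So the truncated integrand and `e^{-t} (1 - t²/(2m)) t^β` differ
on `(0, ∞)` by an integrable function times `m⁻²`; integrating gives
`Γ(β+1) - Γ(β+3)/(2m) + O(m⁻²)` (`integral_bound`). Replacing `m` by `n` costs another `O(n⁻²)`.
-/

open Real Set MeasureTheory

lemma exp_neg_le_quadratic {u : ℝ} (hu : 0 ≤ u) : exp (-u) ≤ 1 - u + u ^ 2 / 2 := by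
  have h := quadratic_le_exp_of_nonneg hu
  have h1 : exp (-u) * exp u = 1 := by rw [← exp_add]; simp
  have h2 : 0 ≤ 1 - u + u ^ 2 / 2 := by nlinarith [sq_nonneg (u - 1)]
  have h3 : 1 ≤ (1 - u + u ^ 2 / 2) * exp u := by
    calc (1 : ℝ) ≤ (1 - u + u ^ 2 / 2) * (1 + u + u ^ 2 / 2) := by nlinarith [sq_nonneg (u ^ 2)]
      _ ≤ _ := by gcongr
  exact le_of_mul_le_mul_right (h1.trans_le h3) (exp_pos u)

lemma log_one_sub_le {x : ℝ} (h0 : 0 ≤ x) (h1 : x < 1) : log (1 - x) ≤ -x - x ^ 2 / 2 := by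
  have h := hasSum_pow_div_log_of_abs_lt_one (x := x) (by rwa [abs_of_nonneg h0])
  have := sum_le_hasSum (Finset.range 2) (fun i _ => by positivity) h
  norm_num [Finset.sum_range_succ] at this
  linarith

lemma le_log_one_sub {x : ℝ} (h0 : 0 ≤ x) (h1 : x ≤ 1 / 2) :
    -x - x ^ 2 / 2 - 2 * x ^ 3 ≤ log (1 - x) := by
  have h := abs_log_sub_add_sum_range_le (x := x) (by rw [abs_of_nonneg h0]; linarith) 2
  rw [abs_of_nonneg h0] at h
  norm_num [Finset.sum_range_succ] at h
  have h2 : x ^ 3 / (1 - x) ≤ 2 * x ^ 3 := by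
    rw [div_le_iff₀ (by linarith)]
    nlinarith [pow_nonneg h0 3]
  have := (abs_le.1 h).1
  linarith

lemma pow_sub_exp_bound {m : ℕ} (hm : 1 ≤ m) {t : ℝ} (h0 : 0 ≤ t) (h1 : t ≤ m) :
    |(1 - t / m) ^ m - exp (-t) * (1 - t ^ 2 / (2 * m))| ≤
      8 / (m : ℝ) ^ 2 * (exp (-t) * (t ^ 2 + t ^ 4)) := by
  have hm1 : (1 : ℝ) ≤ m := by exact_mod_cast hm
  have hm0 : (0 : ℝ) < m := by linarith
  obtain ⟨x, rfl⟩ : ∃ x, t = m * x := ⟨t / m, by field_simp⟩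
  have hx0 : 0 ≤ x := by
    by_contra! h
    nlinarith
  have hx1 : x ≤ 1 := by
    by_contra! h
    nlinarith
  generalize hM : (m : ℝ) = M at *
  have e1 : M * x / M = x := by field_simp
  have e2 : (M * x) ^ 2 / (2 * M) = M * x ^ 2 / 2 := by field_simp
  have e3 : 8 / M ^ 2 * (exp (-(M * x)) * ((M * x) ^ 2 + (M * x) ^ 4))
      = exp (-(M * x)) * (8 * x ^ 2 + 8 * M ^ 2 * x ^ 4) := by field_simp
  rw [e1, e2, e3]
  have hE := exp_pos (-(M * x))
  -- It suffices to bound the relative error.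
  suffices h : ∃ g : ℝ, (1 - x) ^ m = exp (-(M * x)) * g ∧
      g ≤ 1 - M * x ^ 2 / 2 + (M * x ^ 2 / 2) ^ 2 / 2 ∧
      1 - M * x ^ 2 / 2 - (8 * x ^ 2 + 8 * M ^ 2 * x ^ 4) ≤ g by
    obtain ⟨g, hg, hu, hl⟩ := h
    rw [hg, ← mul_sub, abs_mul, abs_of_pos hE]
    refine mul_le_mul_of_nonneg_left ?_ hE.le
    rw [abs_le]
    constructor
    · linarith
    · nlinarith [sq_nonneg x, sq_nonneg (M * x ^ 2)]
  refine ⟨exp (M * x) * (1 - x) ^ m, ?_, ?_, ?_⟩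
  · rw [← mul_assoc, ← exp_add]; simp
  · rcases hx1.eq_or_lt with rfl | hx1
    · rw [sub_self, zero_pow (by omega), mul_zero]
      nlinarith [sq_nonneg (M * 1 ^ 2 / 2 - 1)]
    · refine le_trans ?_ (exp_neg_le_quadratic (u := M * x ^ 2 / 2) (by positivity))
      rw [← exp_log (show 0 < 1 - x by linarith), ← exp_nat_mul, ← exp_add, exp_le_exp, hM]
      nlinarith [log_one_sub_le hx0 hx1]
  · rcases le_total x (1 / 2) with hx | hx
    · rw [← exp_log (show 0 < 1 - x by linarith), ← exp_nat_mul, ← exp_add, hM]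
      have h1 := add_one_le_exp (M * x + M * log (1 - x))
      have h2 := mul_le_mul_of_nonneg_left (le_log_one_sub hx0 hx) hm0.le
      -- `M x³ ≤ x² + M² x⁴` by the AM-GM inequality
      nlinarith [sq_nonneg (x - M * x ^ 2), sq_nonneg x, sq_nonneg (M * x ^ 2)]
    · -- the left-hand side is negative here, because `8 x² ≥ 2`
      have : 0 ≤ exp (M * x) * (1 - x) ^ m :=
        mul_nonneg (exp_pos _).le (pow_nonneg (by linarith) _)
      nlinarith [sq_nonneg (M * x ^ 2), mul_nonneg hm0.le (sq_nonneg x)]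

/-- Beyond the cutoff `α m` the approximant is itself within the error bound. -/
lemma tail_bound {m α t : ℝ} (hm : 1 ≤ m) (hα : 0 < α) (ht : α * m < t) :
    |exp (-t) * (1 - t ^ 2 / (2 * m))| ≤
      8 / α ^ 2 / m ^ 2 * (exp (-t) * (t ^ 2 + t ^ 4)) := by
  have hm0 : 0 < m := by linarith
  have hE := exp_pos (-t)
  have hA : 0 < α * m := by positivity
  rw [abs_mul, abs_of_pos hE, mul_left_comm]
  refine mul_le_mul_of_nonneg_left ?_ hE.le
  have h1 : |1 - t ^ 2 / (2 * m)| ≤ 1 + t ^ 2 := by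
    have h2 : t ^ 2 / (2 * m) ≤ t ^ 2 := div_le_self (sq_nonneg t) (by linarith)
    have h3 : 0 ≤ t ^ 2 / (2 * m) := by positivity
    rw [abs_le]; constructor <;> nlinarith [sq_nonneg t]
  refine h1.trans ?_
  rw [div_div, ← mul_pow, div_mul_eq_mul_div, le_div_iff₀ (by positivity)]
  have h4 : (α * m) ^ 2 ≤ t ^ 2 := by gcongr
  nlinarith [mul_le_mul_of_nonneg_left h4 (show 0 ≤ 1 + t ^ 2 by positivity), sq_nonneg t,
    sq_nonneg (t ^ 2)]

lemma integral_bound (β α : ℝ) (hβ : -1 < β) (hα : α ∈ Ioc (0 : ℝ) 1) {m : ℕ} (hm : 1 ≤ m) :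
    |(∫ t in (0 : ℝ)..(α * m), (1 - t / m) ^ m * t ^ β)
        - (Gamma (β + 1) - Gamma (β + 3) / (2 * m))|
      ≤ 8 / α ^ 2 / (m : ℝ) ^ 2 * (Gamma (β + 3) + Gamma (β + 5)) := by
  obtain ⟨hα0, hα1⟩ := hα
  have hm1 : (1 : ℝ) ≤ m := by exact_mod_cast hm
  have hm0 : (0 : ℝ) < m := by linarith
  have hA : 0 ≤ α * m := by positivity
  have key : ∀ k : ℕ, IntegrableOn (fun t => exp (-t) * (t ^ k * t ^ β)) (Ioi 0) ∧
      ∫ t in Ioi (0 : ℝ), exp (-t) * (t ^ k * t ^ β) = Gamma (β + k + 1) := by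
    intro k
    have hs : 0 < β + k + 1 := by
      have : (0 : ℝ) ≤ k := k.cast_nonneg
      linarith
    have he : EqOn (fun t : ℝ => exp (-t) * t ^ (β + k + 1 - 1))
        (fun t => exp (-t) * (t ^ k * t ^ β)) (Ioi 0) := by
      intro t ht
      simp only [add_sub_cancel_right, rpow_add ht, rpow_natCast]
      ring
    exact ⟨(GammaIntegral_convergent hs).congr_fun he measurableSet_Ioi, by
      rw [Gamma_eq_integral hs, setIntegral_congr_fun measurableSet_Ioi he]⟩
  obtain ⟨i0, v0⟩ := key 0
  obtain ⟨i2, v2⟩ := key 2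
  obtain ⟨i4, v4⟩ := key 4
  have g0 : β + ((0 : ℕ) : ℝ) + 1 = β + 1 := by push_cast; ring
  have g2 : β + ((2 : ℕ) : ℝ) + 1 = β + 3 := by push_cast; ring
  have g4 : β + ((4 : ℕ) : ℝ) + 1 = β + 5 := by push_cast; ring
  rw [g0] at v0
  rw [g2] at v2
  rw [g4] at v4
  set f : ℝ → ℝ := fun t => (1 - t / m) ^ m * t ^ β with hf
  have iF : IntegrableOn ((Ioc 0 (α * m)).indicator f) (Ioi 0) := by
    have : IntervalIntegrable f volume 0 (α * m) :=
      (intervalIntegral.intervalIntegrable_rpow' hβ).continuousOn_mul (by fun_prop)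
    rw [intervalIntegrable_iff_integrableOn_Ioc_of_le hA] at this
    exact (this.integrable_indicator measurableSet_Ioc).integrableOn
  have vF : ∫ t in (0 : ℝ)..(α * m), f t = ∫ t in Ioi (0 : ℝ), (Ioc 0 (α * m)).indicator f t := by
    rw [intervalIntegral.integral_of_le hA, setIntegral_indicator measurableSet_Ioc,
      inter_eq_right.2 Ioc_subset_Ioi_self]
  have iG : IntegrableOn (fun t => exp (-t) * (t ^ 0 * t ^ β)
      - exp (-t) * (t ^ 2 * t ^ β) / (2 * m)) (Ioi 0) := i0.sub (i2.div_const (2 * m : ℝ))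
  have vG : Gamma (β + 1) - Gamma (β + 3) / (2 * m) = ∫ t in Ioi (0 : ℝ),
      (exp (-t) * (t ^ 0 * t ^ β) - exp (-t) * (t ^ 2 * t ^ β) / (2 * m)) := by
    rw [integral_sub i0 (i2.div_const _), integral_div, v0, v2]
  have vB : 8 / α ^ 2 / (m : ℝ) ^ 2 * (Gamma (β + 3) + Gamma (β + 5)) =
      ∫ t in Ioi (0 : ℝ), 8 / α ^ 2 / (m : ℝ) ^ 2 *
        (exp (-t) * (t ^ 2 * t ^ β) + exp (-t) * (t ^ 4 * t ^ β)) := by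
    rw [integral_const_mul, integral_add i2 i4, v2, v4]
  rw [vF, vG, vB, ← integral_sub iF iG, ← Real.norm_eq_abs]
  refine norm_integral_le_of_norm_le ((i2.add i4).const_mul _) ?_
  refine (ae_restrict_iff' measurableSet_Ioi).2 (Filter.Eventually.of_forall fun t ht => ?_)
  have ht0 : 0 < t := ht
  have hb : 0 ≤ t ^ β := rpow_nonneg ht0.le _
  have eB : 8 / α ^ 2 / (m : ℝ) ^ 2 * (exp (-t) * (t ^ 2 * t ^ β) + exp (-t) * (t ^ 4 * t ^ β))
      = 8 / α ^ 2 / (m : ℝ) ^ 2 * (exp (-t) * (t ^ 2 + t ^ 4)) * t ^ β := by ring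
  have eG : exp (-t) * (t ^ 0 * t ^ β) - exp (-t) * (t ^ 2 * t ^ β) / (2 * m)
      = exp (-t) * (1 - t ^ 2 / (2 * m)) * t ^ β := by ring
  rw [eB, eG, Real.norm_eq_abs]
  by_cases h : t ≤ α * m
  · rw [indicator_of_mem (show t ∈ Ioc 0 (α * m) from ⟨ht0, h⟩), hf]
    simp only
    rw [← sub_mul, abs_mul, abs_of_nonneg hb]
    refine mul_le_mul_of_nonneg_right ?_ hb
    refine (pow_sub_exp_bound hm ht0.le (h.trans (mul_le_of_le_one_left hm0.le hα1))).trans ?_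
    have : (8 : ℝ) ≤ 8 / α ^ 2 := by
      rw [le_div_iff₀ (by positivity)]
      nlinarith
    gcongr
  · rw [indicator_of_notMem (fun hmem => h hmem.2), zero_sub, abs_neg, abs_mul, abs_of_nonneg hb]
    exact mul_le_mul_of_nonneg_right (tail_bound hm1 hα0 (not_le.1 h)) hb


/-- Let `β > -1` and `α ∈ (0,1]`. Then, as `n → ∞`,
`∫₀^{α(n-2)} (1 - t/(n-2))^(n-2) t^β dt = Γ(β+1) - (Γ(β+3)/2) n⁻¹ + O(n⁻²)`,
where `n` ranges over integers `n ≥ 3`. -/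
theorem stmt_0 (β α : ℝ) (hβ : -1 < β) (hα : α ∈ Set.Ioc (0 : ℝ) 1) :
    ∃ C : ℝ, 0 < C ∧ ∃ N : ℕ, 3 ≤ N ∧ ∀ n : ℕ, N ≤ n →
      |(∫ t in (0 : ℝ)..(α * ((n : ℝ) - 2)), (1 - t / ((n : ℝ) - 2)) ^ (n - 2) * t ^ β)
        - (Real.Gamma (β + 1) - Real.Gamma (β + 3) / 2 * ((n : ℝ))⁻¹)|
        ≤ C / (n : ℝ) ^ 2 := by

  have G3 : 0 < Gamma (β + 3) := Gamma_pos_of_pos (by linarith)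
  have G5 : 0 < Gamma (β + 5) := Gamma_pos_of_pos (by linarith)
  have hα0 : 0 < α := hα.1
  -- `m = n - 2 ≥ n / 2` for `n ≥ 4`, so `m⁻² ≤ 4 n⁻²` and `m⁻¹ - n⁻¹ = 2 / (m n) ≤ 4 n⁻²`.
  refine ⟨4 * (8 / α ^ 2 * (Gamma (β + 3) + Gamma (β + 5))) + 2 * Gamma (β + 3), by positivity,
    4, by norm_num, fun n hn => ?_⟩
  obtain ⟨m, rfl⟩ : ∃ m, n = m + 2 := ⟨n - 2, by omega⟩
  have hm2 : (2 : ℝ) ≤ m := by exact_mod_cast (show 2 ≤ m by omega)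
  have hm0 : (0 : ℝ) < m := by linarith
  have hb := integral_bound β α hβ hα (m := m) (by omega)
  have e : ((m + 2 : ℕ) : ℝ) - 2 = m := by push_cast; ring
  rw [e, Nat.add_sub_cancel]
  push_cast
  set I := ∫ t in (0 : ℝ)..(α * m), (1 - t / m) ^ m * t ^ β
  set K := 8 / α ^ 2 * (Gamma (β + 3) + Gamma (β + 5)) with hK
  have hK0 : 0 < K := by positivity
  have hb' : 8 / α ^ 2 / (m : ℝ) ^ 2 * (Gamma (β + 3) + Gamma (β + 5)) ≤
      4 * K / ((m : ℝ) + 2) ^ 2 := by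
    rw [div_mul_eq_mul_div, ← hK, div_le_div_iff₀ (by positivity) (by positivity)]
    have : ((m : ℝ) + 2) ^ 2 ≤ 4 * (m : ℝ) ^ 2 := by nlinarith
    nlinarith
  have hd : Gamma (β + 3) / (2 * m) - Gamma (β + 3) / 2 * ((m : ℝ) + 2)⁻¹
      = Gamma (β + 3) / (m * (m + 2)) := by
    field_simp
    ring
  have hd0 : 0 ≤ Gamma (β + 3) / (m * ((m : ℝ) + 2)) := by positivity
  have hd1 : Gamma (β + 3) / (m * ((m : ℝ) + 2)) ≤ 2 * Gamma (β + 3) / ((m : ℝ) + 2) ^ 2 := by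
    rw [div_le_div_iff₀ (by positivity) (by positivity)]
    have : ((m : ℝ) + 2) ^ 2 ≤ 2 * (m * ((m : ℝ) + 2)) := by nlinarith
    nlinarith
  rw [add_div]
  rw [abs_le] at hb ⊢
  constructor <;> linarith [hb.1, hb.2]
end

section
/- Let r : ℝ → ℝ² be C⁵ on a neighborhood of 0, with ‖r'(s)‖ = 1 for all s in that neighborhood (unit-speed curve), r(0) = (0,0), r'(0) = (1,0), and suppose there is a C³ function κ : ℝ → ℝ with r''(s) = κ(s)·(-(r'(s))₂, (r'(s))₁) for all s near 0 (κ is the signed curvature). Write r(s) = (σ(s), η(s)). Suppose f : ℝ → ℝ is C⁵ on a neighborhood of 0 and f(σ(s)) = η(s) for all s near 0. Then f(0) = 0, f'(0) = 0, f''(0) = κ(0), f'''(0) = κ'(0), f⁗(0) = κ''(0) + 3κ(0)³, and f⁽⁵⁾(0) = 19κ(0)²κ'(0) + κ'''(0). Equivalently, writing b_i = f⁽ⁱ⁾(0)/i!, one has b₂ = κ(0)/2!, b₃ = κ'(0)/3!, b₄ = (κ''(0) + 3κ(0)³)/4!, b₅ = (19κ(0)²κ'(0) + κ'''(0))/5!.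 -/
/-!
Write `c = σ'`, `d = η'`, so that `c' = -κ d`, `d' = κ c`, `c ^ 2 + d ^ 2 = 1`, `c 0 = 1`, `d 0 = 0`.
Differentiating `f (σ s) = η s` gives `f'(σ) c = d`; differentiating again and using the unit-speed
relation gives `f''(σ) c ^ 3 = κ`. The higher derivatives of `f` at `0` are read off by
differentiating this last identity three more times and evaluating at `s = 0`.
`graph_derivs` carries out this computation for functions related by these derivative rules near
`0`; `eventually_hasDerivAt_iteratedDeriv` supplies the rules from the smoothness hypotheses.
-/

open Filter Topology

/-- Two functions agreeing near a point have derivatives agreeing near that point. -/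
lemma eventually_deriv_eq {F G F' G' : ℝ → ℝ} {x : ℝ} (h : ∀ᶠ s in 𝓝 x, F s = G s)
    (hF : ∀ᶠ s in 𝓝 x, HasDerivAt F (F' s) s) (hG : ∀ᶠ s in 𝓝 x, HasDerivAt G (G' s) s) :
    ∀ᶠ s in 𝓝 x, F' s = G' s := by
  filter_upwards [h.eventually_nhds, hF, hG] with s h1 h2 h3
  exact h2.unique (h3.congr_of_eventuallyEq h1)

lemma eventually_hasDerivAt_iteratedDeriv {f : ℝ → ℝ} {n : ℕ} {x : ℝ} (hf : ContDiffAt ℝ n f x)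
    {i : ℕ} (hi : i < n) :
    ∀ᶠ s in 𝓝 x, HasDerivAt (iteratedDeriv i f) (iteratedDeriv (i + 1) f s) s := by
  filter_upwards [hf.eventually (by simp)] with s hs
  rw [iteratedDeriv_succ]
  have h := hs.contDiffWithinAt.differentiableWithinAt_iteratedDerivWithin (s := Set.univ)
    (m := i) (by exact_mod_cast hi) (by simp)
  rw [differentiableWithinAt_univ, iteratedDerivWithin_univ] at h
  exact h.hasDerivAt

/-- The computation behind the theorem: `(c, d)` is the unit tangent, `K i` stands for `κ⁽ⁱ⁾`,
and `G i` for `f⁽ⁱ⁾ ∘ σ`. -/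
lemma graph_derivs {c d η : ℝ → ℝ} {K G : ℕ → ℝ → ℝ}
    (hη : ∀ᶠ s in 𝓝 0, HasDerivAt η (d s) s)
    (hc : ∀ᶠ s in 𝓝 0, HasDerivAt c (-(K 0 s * d s)) s)
    (hd : ∀ᶠ s in 𝓝 0, HasDerivAt d (K 0 s * c s) s)
    (hK : ∀ i < 3, ∀ᶠ s in 𝓝 0, HasDerivAt (K i) (K (i + 1) s) s)
    (hG : ∀ i < 5, ∀ᶠ s in 𝓝 0, HasDerivAt (G i) (G (i + 1) s * c s) s)
    (hu : ∀ᶠ s in 𝓝 0, c s ^ 2 + d s ^ 2 = 1)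
    (hc0 : c 0 = 1) (hd0 : d 0 = 0)
    (h : ∀ᶠ s in 𝓝 0, G 0 s = η s) :
    G 1 0 = 0 ∧ G 2 0 = K 0 0 ∧ G 3 0 = K 1 0 ∧ G 4 0 = K 2 0 + 3 * K 0 0 ^ 3 ∧
      G 5 0 = 19 * K 0 0 ^ 2 * K 1 0 + K 3 0 := by
  have e1 : ∀ᶠ s in 𝓝 0, G 1 s * c s = d s := eventually_deriv_eq h (hG 0 (by simp)) hη
  have e2' : ∀ᶠ s in 𝓝 0, G 2 s * c s * c s + G 1 s * -(K 0 s * d s) = K 0 s * c s := by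
    refine eventually_deriv_eq e1 ?_ hd
    filter_upwards [hG 1 (by simp), hc] with s a1 a2 using a1.mul a2
  have e2 : ∀ᶠ s in 𝓝 0, G 2 s * c s ^ 3 = K 0 s := by
    filter_upwards [e1, e2', hu] with s a1 a2 a3
    linear_combination c s * a2 + K 0 s * d s * a1 + K 0 s * a3
  have e3 : ∀ᶠ s in 𝓝 0, G 3 s * c s ^ 4 - 3 * (K 0 s * d s * c s ^ 2 * G 2 s) = K 1 s := by
    refine eventually_deriv_eq e2 ?_ (hK 0 (by simp))
    filter_upwards [hG 2 (by simp), hc] with s a1 a2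
    refine (a1.mul (a2.pow 3)).congr_deriv ?_
    simp
    ring
  have e4 : ∀ᶠ s in 𝓝 0, G 4 s * c s ^ 5 - 7 * (K 0 s * d s * c s ^ 3 * G 3 s)
      - 3 * (K 1 s * d s * c s ^ 2 * G 2 s) - 3 * (K 0 s ^ 2 * c s ^ 3 * G 2 s)
      + 6 * (K 0 s ^ 2 * d s ^ 2 * c s * G 2 s) = K 2 s := by
    refine eventually_deriv_eq e3 ?_ (hK 1 (by simp))
    filter_upwards [hG 2 (by simp), hG 3 (by simp), hc, hd, hK 0 (by simp)] with s a1 a2 a3 a4 a5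
    refine ((a2.mul (a3.pow 4)).sub
      ((((a5.mul a4).mul (a3.pow 2)).mul a1).const_mul 3)).congr_deriv ?_
    simp
    ring
  -- Terms of the fifth identity that still carry a factor `d` vanish at `0`, hence only the value
  -- at `0` of the derivative of the fourth identity is recorded.
  have e5 : G 5 0 - 7 * (K 0 0 ^ 2 * G 3 0) - 3 * (K 1 0 * K 0 0 * G 2 0)
      - 6 * (K 0 0 * K 1 0 * G 2 0) - 3 * (K 0 0 ^ 2 * G 3 0) = K 3 0 := by
    have a0 := (hG 2 (by simp)).self_of_nhds
    have a1 := (hG 3 (by simp)).self_of_nhds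
    have a2 := (hG 4 (by simp)).self_of_nhds
    have a3 := hc.self_of_nhds
    have a4 := hd.self_of_nhds
    have a5 := (hK 0 (by simp)).self_of_nhds
    have a6 := (hK 1 (by simp)).self_of_nhds
    have a7 := (hK 2 (by simp)).self_of_nhds
    have key := ((((((a2.mul (a3.pow 5)).sub
      ((((a5.mul a4).mul (a3.pow 3)).mul a1).const_mul 7)).sub
      ((((a6.mul a4).mul (a3.pow 2)).mul a0).const_mul 3)).sub
      ((((a5.pow 2).mul (a3.pow 3)).mul a0).const_mul 3)).add
      (((((a5.pow 2).mul (a4.pow 2)).mul a3).mul a0).const_mul 6))).unique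
      (a7.congr_of_eventuallyEq e4)
    simp [hc0, hd0] at key
    linear_combination key
  have v1 := e1.self_of_nhds
  have v2 := e2.self_of_nhds
  have v3 := e3.self_of_nhds
  have v4 := e4.self_of_nhds
  simp only [hc0, hd0] at v1 v2 v3 v4
  have w2 : G 2 0 = K 0 0 := by linear_combination v2
  have w3 : G 3 0 = K 1 0 := by linear_combination v3
  rw [w2, w3] at e5
  rw [w2, w3] at v4
  refine ⟨by linear_combination v1, w2, w3, ?_, ?_⟩
  · linear_combination v4
  · linear_combination e5

/-- Derivatives at `0` of the local graph representation `f`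
of a unit-speed plane curve `r s = (σ s, η s)` with signed curvature `κ`:
if `f (σ s) = η s` for `s` near `0`, then
`f 0 = 0`, `f' 0 = 0`, `f'' 0 = κ 0`, `f''' 0 = κ' 0`,
`f⁗ 0 = κ'' 0 + 3 κ 0 ^ 3` and `f⁽⁵⁾ 0 = 19 κ 0 ^ 2 κ' 0 + κ''' 0`;
equivalently, with `b i = f⁽ⁱ⁾ 0 / i!`, one has `b₂ = κ 0 / 2!`, `b₃ = κ' 0 / 3!`,
`b₄ = (κ'' 0 + 3 κ 0 ^ 3) / 4!`, `b₅ = (19 κ 0 ^ 2 κ' 0 + κ''' 0) / 5!`. -/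
theorem stmt_4 (r : ℝ → ℝ × ℝ) (κ : ℝ → ℝ) (δ : ℝ) (hδ : 0 < δ)
    (hr : ContDiffOn ℝ 5 r (Set.Ioo (-δ) δ))
    (hκ : ContDiffOn ℝ 3 κ (Set.Ioo (-δ) δ))
    (hunit : ∀ s ∈ Set.Ioo (-δ) δ, (deriv r s).1 ^ 2 + (deriv r s).2 ^ 2 = 1)
    (hcurv : ∀ s ∈ Set.Ioo (-δ) δ,
      deriv (deriv r) s = κ s • (-(deriv r s).2, (deriv r s).1))
    (h0 : r 0 = (0, 0)) (h1 : deriv r 0 = (1, 0))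
    (f : ℝ → ℝ) (δ' : ℝ) (hδ' : 0 < δ')
    (hf : ContDiffOn ℝ 5 f (Set.Ioo (-δ') δ'))
    (hgraph : ∀ s ∈ Set.Ioo (-δ') δ', f ((r s).1) = (r s).2)
    (b : ℕ → ℝ) (hb : ∀ i, b i = iteratedDeriv i f 0 / (Nat.factorial i : ℝ)) :
    f 0 = 0 ∧ deriv f 0 = 0 ∧
    iteratedDeriv 2 f 0 = κ 0 ∧
    iteratedDeriv 3 f 0 = deriv κ 0 ∧
    iteratedDeriv 4 f 0 = iteratedDeriv 2 κ 0 + 3 * κ 0 ^ 3 ∧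
    iteratedDeriv 5 f 0 = 19 * κ 0 ^ 2 * deriv κ 0 + iteratedDeriv 3 κ 0 ∧
    b 2 = κ 0 / (Nat.factorial 2 : ℝ) ∧
    b 3 = deriv κ 0 / (Nat.factorial 3 : ℝ) ∧
    b 4 = (iteratedDeriv 2 κ 0 + 3 * κ 0 ^ 3) / (Nat.factorial 4 : ℝ) ∧
    b 5 = (19 * κ 0 ^ 2 * deriv κ 0 + iteratedDeriv 3 κ 0) / (Nat.factorial 5 : ℝ) := by
  have hI : Set.Ioo (-δ) δ ∈ 𝓝 (0 : ℝ) := Ioo_mem_nhds (by linarith) hδ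
  have hI' : Set.Ioo (-δ') δ' ∈ 𝓝 (0 : ℝ) := Ioo_mem_nhds (by linarith) hδ'
  have hrA : ContDiffAt ℝ 5 r 0 := hr.contDiffAt hI
  have hκA : ContDiffAt ℝ (3 : ℕ) κ 0 := hκ.contDiffAt hI
  have hfA : ContDiffAt ℝ (5 : ℕ) f 0 := hf.contDiffAt hI'
  have hr1 : ∀ᶠ s in 𝓝 0, HasDerivAt r (deriv r s) s := by
    filter_upwards [hrA.eventually (by simp)] with s hs
    exact (hs.differentiableAt (by simp)).hasDerivAt
  have hr2 : ∀ᶠ s in 𝓝 0,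
      HasDerivAt (deriv r) (κ s • (-(deriv r s).2, (deriv r s).1)) s := by
    filter_upwards [hrA.eventually (by simp), hI] with s hs hsI
    have h2 : ContDiffAt ℝ 1 (deriv r) s :=
      hs.derivWithin (m := 1) (by norm_num)
    rw [← hcurv s hsI]
    exact (h2.differentiableAt (by simp)).hasDerivAt
  have hc : ∀ᶠ s in 𝓝 0, HasDerivAt (fun s => (deriv r s).1)
      (-(iteratedDeriv 0 κ s * (deriv r s).2)) s := by
    filter_upwards [hr2] with s hs
    refine (HasDerivAt.hasFDerivAt hs).fst.hasDerivAt.congr_deriv ?_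
    simp
  have hd : ∀ᶠ s in 𝓝 0, HasDerivAt (fun s => (deriv r s).2)
      (iteratedDeriv 0 κ s * (deriv r s).1) s := by
    filter_upwards [hr2] with s hs
    refine (HasDerivAt.hasFDerivAt hs).snd.hasDerivAt.congr_deriv ?_
    simp
  have hσ : ∀ᶠ s in 𝓝 0, HasDerivAt (fun s => (r s).1) (deriv r s).1 s := by
    filter_upwards [hr1] with s hs using hs.fst
  have hσ0 : Tendsto (fun s => (r s).1) (𝓝 0) (𝓝 0) := by
    have := hσ.self_of_nhds.continuousAt.tendsto
    simpa [h0] using this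
  obtain ⟨g1, g2, g3, g4, g5⟩ := graph_derivs (c := fun s => (deriv r s).1)
    (d := fun s => (deriv r s).2) (η := fun s => (r s).2)
    (K := fun i => iteratedDeriv i κ) (G := fun i s => iteratedDeriv i f (r s).1)
    (by filter_upwards [hr1] with s hs using hs.snd)
    hc hd
    (fun i hi => eventually_hasDerivAt_iteratedDeriv hκA hi)
    (fun i hi => by
      filter_upwards [hσ0.eventually (eventually_hasDerivAt_iteratedDeriv hfA hi), hσ]
        with s a1 a2 using a1.comp s a2)
    (by filter_upwards [hI] with s hs using hunit s hs)
    (by simp [h1]) (by simp [h1])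
    (by filter_upwards [hI'] with s hs using by simpa using hgraph s hs)
  have hf0 : f 0 = 0 := by simpa [h0] using hgraph 0 (mem_of_mem_nhds hI')
  simp only [h0, iteratedDeriv_zero, iteratedDeriv_one] at g1 g2 g3 g4 g5
  refine ⟨hf0, g1, g2, g3, g4, g5, ?_, ?_, ?_, ?_⟩
  · rw [hb, g2]
  · rw [hb, g3]
  · rw [hb, g4]
  · rw [hb, g5]
end

section
/- Let r : ℝ → ℝ² be C⁵ on a neighborhood of 0, with ‖r'(s)‖ = 1 for all s in that neighborhood (unit-speed curve), r(0) = (0,0), r'(0) = (1,0), and suppose there is a C³ function κ : ℝ → ℝ with r''(s) = κ(s)·(-(r'(s))₂, (r'(s))₁) for all s near 0 (κ is the signed curvature). Write r(s) = (σ(s), η(s)). Since σ'(0) = 1, the function σ has a local inverse s = s(σ) near 0, and as σ → 0 it satisfies s(σ) = σ + κ(0)²·σ³/3! + 3κ(0)κ'(0)·σ⁴/4! + (9κ(0)⁴ + 3κ'(0)² + 4κ(0)κ''(0))·σ⁵/5! + O(σ⁶). -/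
/-!
Write `σ`, `η` for the coordinates of `r` and `p = σ'`, `q = η'`, so that `p' = -κ q` and
`q' = κ p`. Estimates are integrated with `isBigO_pow_succ_of_deriv`: if `f 0 = 0` and
`f' = O(s ^ n)`, then `f = O(s ^ (n + 1))`. Starting from the Taylor expansion of `κ` with remainder
`O(s³)`, the two equations yield alternately better expansions of `p` and `q`. Although `σ` is only
`C⁵`, its expansion has an `O(s⁶)` remainder: the `O(s³)` error of `κ` enters `p'` multiplied by
`q = O(s)`, so `p'` is known up to `O(s⁴)` and `σ` up to `O(s⁶)`.

The local inverse comes from the inverse function theorem. The expansion of the inverse is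
obtained by substituting `x = σ s` into the claimed polynomial, which returns `s` up to `O(s⁶)`
(`inverse_poly_expansion`), and by `s = O(x)`.
-/

open Asymptotics Filter Topology

/-- Integration of an order-of-vanishing estimate, by the mean value inequality. -/
lemma isBigO_pow_succ_of_deriv {f f' : ℝ → ℝ} {n : ℕ}
    (hf : ∀ᶠ s in 𝓝 (0 : ℝ), HasDerivAt f (f' s) s) (h0 : f 0 = 0)
    (hO : f' =O[𝓝 0] fun s : ℝ => s ^ n) :
    f =O[𝓝 0] fun s : ℝ => s ^ (n + 1) := by
  obtain ⟨C, hC0, hC⟩ := hO.exists_pos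
  obtain ⟨ρ, hρ, hball⟩ := Metric.eventually_nhds_iff.1 (hf.and hC.bound)
  refine IsBigO.of_bound C (Metric.eventually_nhds_iff.2 ⟨ρ, hρ, fun s hs => ?_⟩)
  have hs' : |s| < ρ := by simpa using hs
  -- the mean value inequality is applied on the interval of radius `|s|`
  have key := (convex_closedBall (0 : ℝ) |s|).norm_image_sub_le_of_norm_hasDerivWithin_le
    (f := f) (f' := f') (C := C * |s| ^ n) (x := 0) (y := s)
    (fun t ht => (hball ((Metric.mem_closedBall.1 ht).trans_lt hs')).1.hasDerivWithinAt)
    (fun t ht => by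
      simp only [Metric.mem_closedBall, dist_zero_right, Real.norm_eq_abs] at ht
      have h := (hball (y := t) (by simpa using ht.trans_lt hs')).2
      simp only [Real.norm_eq_abs, abs_pow] at h ⊢
      exact h.trans (by gcongr))
    (by simp) (by simp)
  simpa [h0, pow_succ, mul_assoc] using key

/-- If `f'` agrees up to `O(s ^ n)` with the derivative of a polynomial whose constant term is
`f 0`, then `f` agrees with that polynomial up to `O(s ^ (n + 1))`. -/
lemma isBigO_sub_poly {f f' : ℝ → ℝ} {n : ℕ} (c₀ c₁ c₂ c₃ c₄ c₅ : ℝ)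
    (hf : ∀ᶠ s in 𝓝 (0 : ℝ), HasDerivAt f (f' s) s) (h0 : f 0 = c₀)
    (hO : (fun s => f' s - (c₁ + 2 * c₂ * s + 3 * c₃ * s ^ 2 + 4 * c₄ * s ^ 3 + 5 * c₅ * s ^ 4))
      =O[𝓝 0] fun s : ℝ => s ^ n) :
    (fun s => f s - (c₀ + c₁ * s + c₂ * s ^ 2 + c₃ * s ^ 3 + c₄ * s ^ 4 + c₅ * s ^ 5))
      =O[𝓝 0] fun s : ℝ => s ^ (n + 1) := by
  refine isBigO_pow_succ_of_deriv ?_ (by simp [h0]) hO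
  filter_upwards [hf] with s hs
  refine hs.sub ?_
  have h1 := (hasDerivAt_id s).const_mul c₁
  have hp (c : ℝ) (m : ℕ) := (hasDerivAt_pow m s).const_mul c
  refine ((((((hasDerivAt_const s c₀).add h1).add (hp c₂ 2)).add (hp c₃ 3)).add (hp c₄ 4)).add
    (hp c₅ 5)).congr_deriv ?_
  norm_num
  ring

lemma isBigO_pow_mul_of_continuousAt {g : ℝ → ℝ} (n : ℕ) (hg : ContinuousAt g 0) :
    (fun s => s ^ n * g s) =O[𝓝 0] fun s : ℝ => s ^ n := by
  simpa using (isBigO_refl (fun s : ℝ => s ^ n) (𝓝 0)).mul (hg.tendsto.isBigO_one ℝ)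

/-- Product rule for a remainder: a continuous factor does not change the order of vanishing. -/
lemma isBigO_mul_of_continuousAt {f g : ℝ → ℝ} {n : ℕ} (hf : f =O[𝓝 0] fun s : ℝ => s ^ n)
    (hg : ContinuousAt g 0) : (fun s => f s * g s) =O[𝓝 0] fun s : ℝ => s ^ n := by
  simpa using hf.mul (hg.tendsto.isBigO_one ℝ)

/-- Second-order Taylor expansion of a `C³` function at `0`. -/
lemma taylor_two {κ : ℝ → ℝ} {U : Set ℝ} (hU : IsOpen U) (h0U : (0 : ℝ) ∈ U)
    (hκ : ContDiffOn ℝ 3 κ U) :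
    (fun s => κ s - (κ 0 + deriv κ 0 * s + iteratedDeriv 2 κ 0 / 2 * s ^ 2))
      =O[𝓝 0] fun s : ℝ => s ^ 3 := by
  have hκ1 : ContDiffOn ℝ 2 (deriv κ) U := hκ.deriv_of_isOpen hU (by norm_num)
  have hκ2 : ContDiffOn ℝ 1 (deriv (deriv κ)) U := hκ1.deriv_of_isOpen hU (by norm_num)
  have hnhds : ∀ᶠ s in 𝓝 (0 : ℝ), s ∈ U := hU.mem_nhds h0U
  have d0 : ∀ᶠ s in 𝓝 (0 : ℝ), HasDerivAt κ (deriv κ s) s := by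
    filter_upwards [hnhds] with s hs
    exact ((hκ.contDiffAt (hU.mem_nhds hs)).differentiableAt (by norm_num)).hasDerivAt
  have d1 : ∀ᶠ s in 𝓝 (0 : ℝ), HasDerivAt (deriv κ) (deriv (deriv κ) s) s := by
    filter_upwards [hnhds] with s hs
    exact ((hκ1.contDiffAt (hU.mem_nhds hs)).differentiableAt (by norm_num)).hasDerivAt
  have d2 : DifferentiableAt ℝ (deriv (deriv κ)) 0 :=
    (hκ2.contDiffAt (hU.mem_nhds h0U)).differentiableAt (by norm_num)
  have e : iteratedDeriv 2 κ 0 = deriv (deriv κ) 0 := by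
    rw [iteratedDeriv_succ, iteratedDeriv_one]
  rw [e]
  have b2 : (fun s => deriv (deriv κ) s - deriv (deriv κ) 0) =O[𝓝 0] fun s : ℝ => s ^ 1 := by
    simpa using d2.isBigO_sub
  have b1 := isBigO_sub_poly (deriv κ 0) (deriv (deriv κ) 0) 0 0 0 0 d1 rfl
    (b2.congr_left fun s => by ring)
  have b0 := isBigO_sub_poly (κ 0) (deriv κ 0) (deriv (deriv κ) 0 / 2) 0 0 0 d0 rfl
    (b1.congr_left fun s => by ring)
  exact b0.congr_left fun s => by ring

/-- The expansion of the first coordinate `σ` up to `O(s⁶)`, obtained from the system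
`σ' = p`, `p' = -κ q`, `q' = κ p`. -/
lemma sigma_expansion {σ p q κ : ℝ → ℝ} {k k₁ k₂ : ℝ}
    (hσ : ∀ᶠ s in 𝓝 (0 : ℝ), HasDerivAt σ (p s) s)
    (hp : ∀ᶠ s in 𝓝 (0 : ℝ), HasDerivAt p (-(κ s * q s)) s)
    (hq : ∀ᶠ s in 𝓝 (0 : ℝ), HasDerivAt q (κ s * p s) s)
    (hσ0 : σ 0 = 0) (hp0 : p 0 = 1) (hq0 : q 0 = 0)
    (hκ : (fun s => κ s - (k + k₁ * s + k₂ / 2 * s ^ 2)) =O[𝓝 0] fun s : ℝ => s ^ 3) :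
    (fun s => σ s - (s + -(k ^ 2) / 6 * s ^ 3 + -(3 * k * k₁) / 24 * s ^ 4
      + (k ^ 4 - 3 * k₁ ^ 2 - 4 * k * k₂) / 120 * s ^ 5)) =O[𝓝 0] fun s : ℝ => s ^ 6 := by
  have pc : ContinuousAt p 0 := hp.self_of_nhds.continuousAt
  have qc : ContinuousAt q 0 := hq.self_of_nhds.continuousAt
  have low {m n : ℕ} (hmn : m ≤ n) {f : ℝ → ℝ} (hf : f =O[𝓝 0] fun s : ℝ => s ^ n) :
      f =O[𝓝 0] fun s : ℝ => s ^ m := by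
    refine hf.trans ?_
    obtain ⟨j, rfl⟩ := Nat.exists_eq_add_of_le hmn
    exact (isBigO_pow_mul_of_continuousAt m (g := fun s => s ^ j) (by fun_prop)).congr_left
      fun s => by ring
  have p1 : (fun s => p s - 1) =O[𝓝 0] fun s : ℝ => s ^ 1 := by
    simpa [hp0] using hp.self_of_nhds.differentiableAt.isBigO_sub
  have q1 : q =O[𝓝 0] fun s : ℝ => s ^ 1 := by
    simpa [hq0] using hq.self_of_nhds.differentiableAt.isBigO_sub
  -- `q = k s + O(s²)`
  have q2 := isBigO_sub_poly (n := 1) 0 k 0 0 0 0 hq hq0 (by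
    refine (((isBigO_mul_of_continuousAt (low (by norm_num) hκ) pc).add
      (isBigO_mul_of_continuousAt p1 (g := fun s => k + k₁ * s + k₂ / 2 * s ^ 2)
        (by fun_prop))).add (isBigO_pow_mul_of_continuousAt 1 (g := fun s => k₁ + k₂ / 2 * s)
        (by fun_prop))).congr_left fun s => ?_
    ring)
  -- `p = 1 - k² s² / 2 + O(s³)`
  have p3 := isBigO_sub_poly (n := 2) 1 0 (-(k ^ 2) / 2) 0 0 0 hp hp0 (by
    refine (((isBigO_mul_of_continuousAt (low (by norm_num) hκ) qc).add
      (isBigO_mul_of_continuousAt q2 (g := fun s => k + k₁ * s + k₂ / 2 * s ^ 2)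
        (by fun_prop))).add (isBigO_pow_mul_of_continuousAt 2
        (g := fun s => k * (k₁ + k₂ / 2 * s)) (by fun_prop))).neg_left.congr_left fun s => ?_
    ring)
  -- `q = k s + k₁ s² / 2 + (k₂ - k³) s³ / 6 + O(s⁴)`
  have q4 := isBigO_sub_poly (n := 3) 0 k (k₁ / 2) ((k₂ - k ^ 3) / 6) 0 0 hq hq0 (by
    refine (((isBigO_mul_of_continuousAt hκ pc).add
      (isBigO_mul_of_continuousAt p3 (g := fun s => k + k₁ * s + k₂ / 2 * s ^ 2)
        (by fun_prop))).add (isBigO_pow_mul_of_continuousAt 3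
        (g := fun s => -(k ^ 2) / 2 * (k₁ + k₂ / 2 * s)) (by fun_prop))).congr_left fun s => ?_
    ring)
  -- the `O(s³)` error of `κ` is multiplied by `q = O(s)`, which gains the order needed here
  have κq : (fun s => (κ s - (k + k₁ * s + k₂ / 2 * s ^ 2)) * q s)
      =O[𝓝 0] fun s : ℝ => s ^ 4 := (hκ.mul q1).congr_right fun s => by ring
  have p5 := isBigO_sub_poly (n := 4) 1 0 (-(k ^ 2) / 2) (-(3 * k * k₁) / 6)
    ((k ^ 4 - 3 * k₁ ^ 2 - 4 * k * k₂) / 24) 0 hp hp0 (by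
    refine ((κq.add
      (isBigO_mul_of_continuousAt q4 (g := fun s => k + k₁ * s + k₂ / 2 * s ^ 2)
        (by fun_prop))).add (isBigO_pow_mul_of_continuousAt 4
        (g := fun s => k₁ * ((k₂ - k ^ 3) / 6) + k₂ / 2 * (k₁ / 2)
          + k₂ / 2 * ((k₂ - k ^ 3) / 6) * s) (by fun_prop))).neg_left.congr_left fun s => ?_
    ring)
  have σ6 := isBigO_sub_poly (n := 5) 0 1 0 (-(k ^ 2) / 6) (-(3 * k * k₁) / 24)
    ((k ^ 4 - 3 * k₁ ^ 2 - 4 * k * k₂) / 120) hσ hσ0 (p5.congr_left fun s => by ring)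
  exact σ6.congr_left fun s => by ring

/-- Reversion of a fifth-order expansion `σ = s + a s³ + b s⁴ + c s⁵ + O(s⁶)`: substituting `σ`
into the truncated inverse series returns `s` up to `O(s⁶)`. -/
lemma inverse_poly_expansion {σ : ℝ → ℝ} {a b c : ℝ} (hc : ContinuousAt σ 0)
    (hσ : (fun s => σ s - (s + a * s ^ 3 + b * s ^ 4 + c * s ^ 5)) =O[𝓝 0] fun s : ℝ => s ^ 6) :
    (fun s => s - (σ s - a * σ s ^ 3 - b * σ s ^ 4 + (3 * a ^ 2 - c) * σ s ^ 5))
      =O[𝓝 0] fun s : ℝ => s ^ 6 := by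
  -- the polynomial part `P` of `σ`, written as `P s = s + s³ m(s)`
  let m : ℝ → ℝ := fun s => a + b * s + c * s ^ 2
  let P : ℝ → ℝ := fun s => s + s ^ 3 * m s
  let d : ℝ := 3 * a ^ 2 - c
  have hm : ContinuousAt m 0 := by fun_prop
  have hP : ContinuousAt P 0 := by fun_prop
  -- `Q σ - Q P` is `σ - P` times a continuous factor, where `Q` is the truncated inverse series
  have h1 := isBigO_mul_of_continuousAt hσ (g := fun s =>
    1 - a * (σ s ^ 2 + σ s * P s + P s ^ 2)
      - b * (σ s ^ 3 + σ s ^ 2 * P s + σ s * P s ^ 2 + P s ^ 3)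
      + d * (σ s ^ 4 + σ s ^ 3 * P s + σ s ^ 2 * P s ^ 2 + σ s * P s ^ 3 + P s ^ 4))
    (by fun_prop)
  -- `s - Q (P s)` is divisible by `s ^ 6`
  have h2 := isBigO_pow_mul_of_continuousAt 6 (g := fun s =>
    3 * a * (b + c * s) + a * s * m s ^ 2 * (3 + s ^ 2 * m s)
      + b * m s * (4 + 6 * (s ^ 2 * m s) + 4 * (s ^ 2 * m s) ^ 2 + (s ^ 2 * m s) ^ 3)
      - d * s * m s * (5 + 10 * (s ^ 2 * m s) + 10 * (s ^ 2 * m s) ^ 2 + 5 * (s ^ 2 * m s) ^ 3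
        + (s ^ 2 * m s) ^ 4)) (by fun_prop)
  refine (h2.sub h1).congr_left fun s => ?_
  simp only [P, m, d]
  ring

/-- For a unit-speed plane curve `r s = (σ s, η s)` with signed
curvature `κ`, `r 0 = (0,0)`, `r' 0 = (1,0)`, the function `σ` has a local inverse
`s = s(σ)` near `0`, which satisfies
`s(σ) = σ + κ(0)² σ³/3! + 3κ(0)κ'(0) σ⁴/4! + (9κ(0)⁴ + 3κ'(0)² + 4κ(0)κ''(0)) σ⁵/5! + O(σ⁶)`
as `σ → 0`. -/
theorem stmt_5 (r : ℝ → ℝ × ℝ) (κ : ℝ → ℝ) (δ : ℝ) (hδ : 0 < δ)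
    (hr : ContDiffOn ℝ 5 r (Set.Ioo (-δ) δ))
    (hκ : ContDiffOn ℝ 3 κ (Set.Ioo (-δ) δ))
    (hunit : ∀ s ∈ Set.Ioo (-δ) δ, (deriv r s).1 ^ 2 + (deriv r s).2 ^ 2 = 1)
    (hcurv : ∀ s ∈ Set.Ioo (-δ) δ,
      deriv (deriv r) s = κ s • (-(deriv r s).2, (deriv r s).1))
    (h0 : r 0 = (0, 0)) (h1 : deriv r 0 = (1, 0)) :
    ∃ sInv : ℝ → ℝ, ∃ ε δ' : ℝ, 0 < ε ∧ 0 < δ' ∧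
      (∀ s : ℝ, |s| < δ' → sInv ((r s).1) = s) ∧
      (∀ x : ℝ, |x| < ε → (r (sInv x)).1 = x) ∧
      ∃ M : ℝ, ∀ x : ℝ, |x| < ε →
        |sInv x - (x + κ 0 ^ 2 * x ^ 3 / 6 + 3 * κ 0 * deriv κ 0 * x ^ 4 / 24
            + (9 * κ 0 ^ 4 + 3 * (deriv κ 0) ^ 2 + 4 * κ 0 * iteratedDeriv 2 κ 0)
              * x ^ 5 / 120)|
          ≤ M * |x| ^ 6 := by
  have hU : IsOpen (Set.Ioo (-δ) δ) := isOpen_Ioo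
  have h0U : (0 : ℝ) ∈ Set.Ioo (-δ) δ := ⟨by linarith, hδ⟩
  have hnhds : ∀ᶠ s in 𝓝 (0 : ℝ), s ∈ Set.Ioo (-δ) δ := hU.mem_nhds h0U
  have hr1 : ContDiffOn ℝ 4 (deriv r) (Set.Ioo (-δ) δ) := hr.deriv_of_isOpen hU (by norm_num)
  have dr : ∀ᶠ s in 𝓝 (0 : ℝ), HasDerivAt r (deriv r s) s := by
    filter_upwards [hnhds] with s hs
    exact ((hr.contDiffAt (hU.mem_nhds hs)).differentiableAt (by norm_num)).hasDerivAt
  have ddr : ∀ᶠ s in 𝓝 (0 : ℝ),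
      HasDerivAt (deriv r) (κ s • (-(deriv r s).2, (deriv r s).1)) s := by
    filter_upwards [hnhds] with s hs
    rw [← hcurv s hs]
    exact ((hr1.contDiffAt (hU.mem_nhds hs)).differentiableAt (by norm_num)).hasDerivAt
  have hσ : ∀ᶠ s in 𝓝 (0 : ℝ), HasDerivAt (fun s => (r s).1) (deriv r s).1 s :=
    dr.mono fun s hs => hs.fst
  have hp : ∀ᶠ s in 𝓝 (0 : ℝ),
      HasDerivAt (fun s => (deriv r s).1) (-(κ s * (deriv r s).2)) s :=
    ddr.mono fun s hs => by simpa using hs.hasFDerivAt.fst.hasDerivAt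
  have hq : ∀ᶠ s in 𝓝 (0 : ℝ),
      HasDerivAt (fun s => (deriv r s).2) (κ s * (deriv r s).1) s :=
    ddr.mono fun s hs => by simpa using hs.hasFDerivAt.snd.hasDerivAt
  have exp := sigma_expansion hσ hp hq (by simp [h0]) (by simp [h1]) (by simp [h1])
    (taylor_two hU h0U hκ)
  have inv := inverse_poly_expansion hσ.self_of_nhds.continuousAt exp
  have strict : HasStrictDerivAt (fun s => (r s).1) 1 0 := by
    have h : ContDiffAt ℝ 5 (fun s => (r s).1) 0 := (hr.contDiffAt (hU.mem_nhds h0U)).fst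
    have h' := hσ.self_of_nhds
    rw [h1] at h'
    exact h.hasStrictDerivAt' h' (by norm_num)
  have hleft := strict.eventually_left_inverse one_ne_zero
  have hright := strict.eventually_right_inverse one_ne_zero
  have hder := (strict.to_localInverse one_ne_zero).hasDerivAt
  have hg0 := hleft.self_of_nhds
  generalize strict.localInverse _ _ _ one_ne_zero = g at hleft hright hder hg0
  simp only [h0] at hright hder hg0
  have gO : g =O[𝓝 0] fun x : ℝ => x := by
    simpa [hg0] using hder.differentiableAt.isBigO_sub
  have gT : Tendsto g (𝓝 0) (𝓝 0) := by
    simpa [hg0] using hder.continuousAt.tendsto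
  obtain ⟨M, hM⟩ := ((inv.comp_tendsto gT).trans (gO.pow 6)).bound
  obtain ⟨δ', hδ', hl⟩ := Metric.eventually_nhds_iff.1 hleft
  obtain ⟨ε, hε, hx⟩ := Metric.eventually_nhds_iff.1 (hright.and hM)
  refine ⟨g, ε, δ', hε, hδ', fun s hs => hl (by simpa using hs),
    fun x hx' => (hx (by simpa using hx')).1, M, fun x hx' => ?_⟩
  obtain ⟨e, hb⟩ := hx (y := x) (by simpa using hx')
  simp only [Function.comp_apply, e, Real.norm_eq_abs, abs_pow] at hb
  refine le_trans (le_of_eq ?_) hb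
  congr 1
  ring
end

section
/- Let g : ℝ → ℝ be C⁶ on a neighborhood of 0 with g(0) = 0 and g'(0) = 0, set e_i = g⁽ⁱ⁾(0)/i! for i = 2, 3, 4, 5, and assume e₂ > 0. Then for all sufficiently small t > 0 there exist a unique small σ₊(t) > 0 and a unique small σ₋(t) < 0 with g(σ₊(t)) = t and g(σ₋(t)) = t, and as t → 0⁺ they satisfy σ₊(t) = c₁ t^{1/2} + c₂ t + c₃ t^{3/2} + c₄ t² + O(t^{5/2}) and σ₋(t) = -c₁ t^{1/2} + c₂ t - c₃ t^{3/2} + c₄ t² + O(t^{5/2}), where c₁ = e₂^{-1/2}, c₂ = -e₃/(2e₂²), c₃ = (5e₃² - 4e₂e₄)/(8e₂^{7/2}), and c₄ = -(2e₃³ - 3e₂e₃e₄ + e₂²e₅)/(2e₂⁵). -/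
/-!
The solutions are analysed through the signed square root `s` of `t`: with `s = √t` for
`σ₊` and `s = -√t` for `σ₋`, both expansions say that `σ = y + O(|s|⁵)` for the single polynomial
`y = a₁ s + a₂ s² + a₃ s³ + a₄ s⁴`.

Let `p` be the fifth Taylor polynomial of `g` at `0`, so that `g - p = O(x⁶)`
(`taylor_bound_six`). The coefficients `aᵢ` are exactly those for which `p(y) - s² = O(s⁶)`
(`quintic_comp_residual`). If `g x = s²` with `x` and `s` of the same sign, then `x = O(s)`, hence
`p(x) - p(y) = O(s⁶)`. On the other hand `p(x) - p(y) = (x - y) q` with `q = e₂ (x + y) + ⋯`, and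
`|x + y| = |x| + |y|` is at least a constant times `|s|` because `x` and `y` have the same sign;
dividing gives `x - y = O(|s|⁵)` (`root_expansion`).

Existence and uniqueness come from the sign of `g'` near `0` (it is that of `x`, as `g'(0) = 0` and
`g''(0) > 0`), strict monotonicity on each side, and the intermediate value theorem.
-/

open Set Filter Topology

/-- Taylor's theorem with remainder `O(x⁶)`, for a function with vanishing 1-jet at `0`. -/
lemma taylor_bound_six (g : ℝ → ℝ) (δ : ℝ) (hδ : 0 < δ)
    (hg : ContDiffOn ℝ 6 g (Ioo (-δ) δ)) (hg0 : g 0 = 0) (hg1 : deriv g 0 = 0)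
    (e : ℕ → ℝ) (he : ∀ i, e i = iteratedDeriv i g 0 / (Nat.factorial i : ℝ)) :
    ∃ C : ℝ, 0 ≤ C ∧ ∀ᶠ x in 𝓝 (0 : ℝ),
      |g x - (e 2 * x ^ 2 + e 3 * x ^ 3 + e 4 * x ^ 4 + e 5 * x ^ 5)| ≤ C * x ^ 6 := by
  have h0 : (0 : ℝ) ∈ Ioo (-δ) δ := ⟨by linarith, hδ⟩
  have h := taylor_isLittleO (n := 6) (convex_Ioo (-δ) δ) h0 (by exact_mod_cast hg)
  rw [isOpen_Ioo.nhdsWithin_eq h0] at h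
  have hb := h.bound (c := 1) one_pos
  refine ⟨1 + |e 6|, by positivity, ?_⟩
  filter_upwards [hb] with x hx
  have hT : taylorWithinEval g 6 (Ioo (-δ) δ) 0 x
      = e 2 * x ^ 2 + e 3 * x ^ 3 + e 4 * x ^ 4 + e 5 * x ^ 5 + e 6 * x ^ 6 := by
    rw [taylor_within_apply]
    have hi : ∀ i, iteratedDerivWithin i g (Ioo (-δ) δ) 0 = e i * (Nat.factorial i : ℝ) := by
      intro i
      rw [iteratedDerivWithin_of_isOpen isOpen_Ioo h0, he i]
      have : (Nat.factorial i : ℝ) ≠ 0 := by positivity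
      field_simp
    have e0 : e 0 = 0 := by simp [he, hg0]
    have e1 : e 1 = 0 := by simp [he, hg1]
    simp only [hi, Finset.sum_range_succ, Finset.sum_range_zero, e0, e1, sub_zero, smul_eq_mul,
      Nat.factorial]
    push_cast
    ring
  rw [hT] at hx
  have hx6 : |x ^ 6| = x ^ 6 := abs_of_nonneg (by positivity)
  simp only [sub_zero, Real.norm_eq_abs, hx6, one_mul] at hx
  have h6 : |e 6 * x ^ 6| = |e 6| * x ^ 6 := by rw [abs_mul, hx6]
  calc |g x - (e 2 * x ^ 2 + e 3 * x ^ 3 + e 4 * x ^ 4 + e 5 * x ^ 5)|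
      = |(g x - (e 2 * x ^ 2 + e 3 * x ^ 3 + e 4 * x ^ 4 + e 5 * x ^ 5 + e 6 * x ^ 6))
          + e 6 * x ^ 6| := by ring_nf
    _ ≤ _ := abs_add_le _ _
    _ ≤ (1 + |e 6|) * x ^ 6 := by rw [h6]; linarith

/-- If the coefficients of `s², …, s⁵` match, substituting `y = s (a₁ + a₂ s + a₃ s² + a₄ s³)` into
the quintic leaves a residual divisible by `s⁶`, with a continuous cofactor. -/
lemma quintic_comp_residual (e₂ e₃ e₄ e₅ a₁ a₂ a₃ a₄ : ℝ)
    (h2 : e₂ * a₁ ^ 2 = 1)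
    (h3 : 2 * e₂ * a₁ * a₂ + e₃ * a₁ ^ 3 = 0)
    (h4 : e₂ * (a₂ ^ 2 + 2 * a₁ * a₃) + 3 * e₃ * a₁ ^ 2 * a₂ + e₄ * a₁ ^ 4 = 0)
    (h5 : e₂ * (2 * a₁ * a₄ + 2 * a₂ * a₃) + e₃ * (3 * a₁ ^ 2 * a₃ + 3 * a₁ * a₂ ^ 2)
      + 4 * e₄ * a₁ ^ 3 * a₂ + e₅ * a₁ ^ 5 = 0) :
    ∃ R : ℝ → ℝ, Continuous R ∧ ∀ s y : ℝ, y = s * (a₁ + a₂ * s + a₃ * s ^ 2 + a₄ * s ^ 3) →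
      e₂ * y ^ 2 + e₃ * y ^ 3 + e₄ * y ^ 4 + e₅ * y ^ 5 - s ^ 2 = s ^ 6 * R s := by
  -- With `v = a₃ + a₄ s` and `w = a₂ + s v` one has `y / s = a₁ + a₂ s + s² v = a₁ + s w`; the four
  -- summands are the tails of the second to fifth powers of `y / s`.
  refine ⟨fun s =>
    e₂ * ((2 * a₂ * a₄ + a₃ ^ 2) + 2 * a₃ * a₄ * s + a₄ ^ 2 * s ^ 2)
    + e₃ * (a₂ ^ 3 + 3 * (2 * a₁ * a₂ + a₂ ^ 2 * s) * (a₃ + a₄ * s) + 3 * a₁ ^ 2 * a₄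
      + 3 * (a₁ + a₂ * s) * s * (a₃ + a₄ * s) ^ 2 + s ^ 3 * (a₃ + a₄ * s) ^ 3)
    + e₄ * (4 * a₁ ^ 3 * (a₃ + a₄ * s) + 6 * a₁ ^ 2 * (a₂ + s * (a₃ + a₄ * s)) ^ 2
      + 4 * a₁ * s * (a₂ + s * (a₃ + a₄ * s)) ^ 3 + s ^ 2 * (a₂ + s * (a₃ + a₄ * s)) ^ 4)
    + e₅ * (5 * a₁ ^ 4 * (a₂ + s * (a₃ + a₄ * s))
      + 10 * a₁ ^ 3 * s * (a₂ + s * (a₃ + a₄ * s)) ^ 2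
      + 10 * a₁ ^ 2 * s ^ 2 * (a₂ + s * (a₃ + a₄ * s)) ^ 3
      + 5 * a₁ * s ^ 3 * (a₂ + s * (a₃ + a₄ * s)) ^ 4
      + s ^ 4 * (a₂ + s * (a₃ + a₄ * s)) ^ 5), by fun_prop, ?_⟩
  rintro s y rfl
  linear_combination s ^ 2 * h2 + s ^ 3 * h3 + s ^ 4 * h4 + s ^ 5 * h5

/-- The quadratic term dominates near `0`: a root `x` of a perturbed quintic equation is `O(s)`. -/
lemma root_sq_le {e₂ e₃ e₄ e₅ C x s : ℝ} (hx1 : |x| ≤ 1) (hC : 0 ≤ C)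
    (hsmall : (|e₃| + |e₄| + |e₅| + C) * |x| ≤ e₂ / 2)
    (h : |s ^ 2 - (e₂ * x ^ 2 + e₃ * x ^ 3 + e₄ * x ^ 4 + e₅ * x ^ 5)| ≤ C * x ^ 6) :
    e₂ / 2 * x ^ 2 ≤ s ^ 2 := by
  have hx0 := abs_nonneg x
  have hx2 : x ^ 2 = |x| ^ 2 := (sq_abs x).symm
  have hx6 : x ^ 6 = |x| ^ 6 := by rw [← abs_pow]; exact (abs_of_nonneg (by positivity)).symm
  have p4 : |x| ^ 4 ≤ |x| ^ 3 := pow_le_pow_of_le_one hx0 hx1 (by norm_num)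
  have p5 : |x| ^ 5 ≤ |x| ^ 3 := pow_le_pow_of_le_one hx0 hx1 (by norm_num)
  have p6 : |x| ^ 6 ≤ |x| ^ 3 := pow_le_pow_of_le_one hx0 hx1 (by norm_num)
  have b3 : -(|e₃| * |x| ^ 3) ≤ e₃ * x ^ 3 := by
    rw [← abs_pow, ← abs_mul]; exact neg_abs_le _
  have b4 : -(|e₄| * |x| ^ 3) ≤ e₄ * x ^ 4 := by
    have := neg_abs_le (e₄ * x ^ 4)
    rw [abs_mul, abs_pow] at this
    have := mul_le_mul_of_nonneg_left p4 (abs_nonneg e₄)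
    linarith
  have b5 : -(|e₅| * |x| ^ 3) ≤ e₅ * x ^ 5 := by
    have := neg_abs_le (e₅ * x ^ 5)
    rw [abs_mul, abs_pow] at this
    have := mul_le_mul_of_nonneg_left p5 (abs_nonneg e₅)
    linarith
  have b6 : C * x ^ 6 ≤ C * |x| ^ 3 := by
    rw [hx6]; exact mul_le_mul_of_nonneg_left p6 hC
  have h1 := (abs_le.mp h).1
  have h2 := mul_le_mul_of_nonneg_right hsmall (sq_nonneg |x|)
  have h3 : (|e₃| + |e₄| + |e₅| + C) * |x| * |x| ^ 2
    = |e₃| * |x| ^ 3 + |e₄| * |x| ^ 3 + |e₅| * |x| ^ 3 + C * |x| ^ 3 := by ring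
  rw [h3, ← hx2] at h2
  linarith

/-- Lower Lipschitz bound for the quintic between points of the same sign near `0`. -/
lemma quintic_sub_lower {e₂ e₃ e₄ e₅ x y : ℝ} (hxy : 0 ≤ x * y)
    (hm1 : |x| + |y| ≤ 1) (hsmall : (|e₃| + |e₄| + |e₅|) * (|x| + |y|) ≤ e₂ / 2) :
    |x - y| * (e₂ / 2 * (|x| + |y|)) ≤
      |(e₂ * x ^ 2 + e₃ * x ^ 3 + e₄ * x ^ 4 + e₅ * x ^ 5)
        - (e₂ * y ^ 2 + e₃ * y ^ 3 + e₄ * y ^ 4 + e₅ * y ^ 5)| := by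
  have hx0 := abs_nonneg x
  have hy0 := abs_nonneg y
  set m := |x| + |y| with hm
  have hm0 : 0 ≤ m := by positivity
  have hsum : |x + y| = m := by
    rcases mul_nonneg_iff.mp hxy with ⟨h1, h2⟩ | ⟨h1, h2⟩
    · rw [hm, abs_of_nonneg h1, abs_of_nonneg h2, abs_of_nonneg (by linarith)]
    · rw [hm, abs_of_nonpos h1, abs_of_nonpos h2, abs_of_nonpos (by linarith)]; ring
  have q3 : |x ^ 2 + x * y + y ^ 2| ≤ m ^ 2 := by
    rw [abs_of_nonneg (by positivity), ← hsum, sq_abs]; nlinarith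
  have q4 : |x ^ 3 + x ^ 2 * y + x * y ^ 2 + y ^ 3| ≤ m ^ 2 := by
    have : x ^ 3 + x ^ 2 * y + x * y ^ 2 + y ^ 3 = (x + y) * (x ^ 2 + y ^ 2) := by ring
    rw [this, abs_mul, hsum, abs_of_nonneg (by positivity : 0 ≤ x ^ 2 + y ^ 2)]
    have : x ^ 2 + y ^ 2 ≤ m ^ 2 := by rw [← hsum, sq_abs]; nlinarith
    nlinarith [sq_nonneg x, sq_nonneg y]
  have q5 : |x ^ 4 + x ^ 3 * y + x ^ 2 * y ^ 2 + x * y ^ 3 + y ^ 4| ≤ m ^ 2 := by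
    have e1 : x ^ 4 + x ^ 3 * y + x ^ 2 * y ^ 2 + x * y ^ 3 + y ^ 4
      = x ^ 4 + y ^ 4 + (x * y) * (x ^ 2 + y ^ 2) + (x * y) ^ 2 := by ring
    have e2 : m ^ 4 = (x + y) ^ 4 := by
      rw [← hsum, ← abs_pow]; exact abs_of_nonneg (by positivity)
    have e3 : m ^ 4 ≤ m ^ 2 := pow_le_pow_of_le_one hm0 hm1 (by norm_num)
    have e4 : 0 ≤ (x * y) * (x ^ 2 + y ^ 2) := by positivity
    rw [e1, abs_of_nonneg (by positivity)]
    nlinarith [sq_nonneg (x * y)]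
  set Q3 := x ^ 2 + x * y + y ^ 2
  set Q4 := x ^ 3 + x ^ 2 * y + x * y ^ 2 + y ^ 3
  set Q5 := x ^ 4 + x ^ 3 * y + x ^ 2 * y ^ 2 + x * y ^ 3 + y ^ 4
  have hfac : (e₂ * x ^ 2 + e₃ * x ^ 3 + e₄ * x ^ 4 + e₅ * x ^ 5)
        - (e₂ * y ^ 2 + e₃ * y ^ 3 + e₄ * y ^ 4 + e₅ * y ^ 5)
      = (x - y) * (e₂ * (x + y) + (e₃ * Q3 + e₄ * Q4 + e₅ * Q5)) := by
    simp only [Q3, Q4, Q5]; ring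
  rw [hfac, abs_mul]
  refine mul_le_mul_of_nonneg_left ?_ (abs_nonneg _)
  have t1 : |e₃ * Q3 + e₄ * Q4 + e₅ * Q5| ≤ (|e₃| + |e₄| + |e₅|) * m ^ 2 := by
    calc _ ≤ |e₃ * Q3| + |e₄ * Q4| + |e₅ * Q5| := abs_add_three _ _ _
      _ ≤ |e₃| * m ^ 2 + |e₄| * m ^ 2 + |e₅| * m ^ 2 := by
        simp only [abs_mul]; gcongr
      _ = _ := by ring
  have t2 : |e₂ * (x + y)| - |e₃ * Q3 + e₄ * Q4 + e₅ * Q5|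
      ≤ |e₂ * (x + y) + (e₃ * Q3 + e₄ * Q4 + e₅ * Q5)| := by
    have := abs_sub_abs_le_abs_sub (e₂ * (x + y)) (-(e₃ * Q3 + e₄ * Q4 + e₅ * Q5))
    rwa [abs_neg, sub_neg_eq_add] at this
  have t3 : e₂ * m ≤ |e₂ * (x + y)| := by
    rw [abs_mul, hsum]; exact mul_le_mul_of_nonneg_right (le_abs_self _) hm0
  have t4 := mul_le_mul_of_nonneg_right hsmall hm0
  nlinarith

/-- The asymptotic expansion for both branches at once: `s` is the square root of `t` carrying the
sign of the solution `x`. -/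
lemma root_expansion (e₂ e₃ e₄ e₅ a₁ a₂ a₃ a₄ C : ℝ) (he : 0 < e₂) (ha : 0 < a₁) (hC : 0 ≤ C)
    (h2 : e₂ * a₁ ^ 2 = 1)
    (h3 : 2 * e₂ * a₁ * a₂ + e₃ * a₁ ^ 3 = 0)
    (h4 : e₂ * (a₂ ^ 2 + 2 * a₁ * a₃) + 3 * e₃ * a₁ ^ 2 * a₂ + e₄ * a₁ ^ 4 = 0)
    (h5 : e₂ * (2 * a₁ * a₄ + 2 * a₂ * a₃) + e₃ * (3 * a₁ ^ 2 * a₃ + 3 * a₁ * a₂ ^ 2)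
      + 4 * e₄ * a₁ ^ 3 * a₂ + e₅ * a₁ ^ 5 = 0) :
    ∃ ρ M : ℝ, 0 < ρ ∧ ∀ s x : ℝ, |s| < ρ → |x| < ρ → 0 < x * s →
      |s ^ 2 - (e₂ * x ^ 2 + e₃ * x ^ 3 + e₄ * x ^ 4 + e₅ * x ^ 5)| ≤ C * x ^ 6 →
      |x - (a₁ * s + a₂ * s ^ 2 + a₃ * s ^ 3 + a₄ * s ^ 4)| ≤ M * |s| ^ 5 := by
  obtain ⟨R, hRc, hR⟩ := quintic_comp_residual e₂ e₃ e₄ e₅ a₁ a₂ a₃ a₄ h2 h3 h4 h5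
  set Q : ℝ → ℝ := fun s => a₁ + a₂ * s + a₃ * s ^ 2 + a₄ * s ^ 3 with hQ
  have hQc : Continuous Q := by fun_prop
  have hQ0 : Q 0 = a₁ := by simp [hQ]
  have hyc : Continuous fun s => |s * Q s| := by fun_prop
  set D := |e₃| + |e₄| + |e₅| + C with hD
  have hD0 : 0 ≤ D := by positivity
  -- Radius within which all cubic and higher terms are absorbed by half of the quadratic one.
  obtain ⟨η, hη0, hη1, hηD⟩ : ∃ η : ℝ, 0 < η ∧ 2 * η ≤ 1 ∧ D * (2 * η) ≤ e₂ / 2 := by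
    refine ⟨min (1 / 2) (e₂ / (4 * (D + 1))), by positivity, ?_, ?_⟩
    · have := min_le_left (1 / 2) (e₂ / (4 * (D + 1))); linarith
    · have h := min_le_right (1 / 2) (e₂ / (4 * (D + 1)))
      have : min (1 / 2) (e₂ / (4 * (D + 1))) * (4 * (D + 1)) ≤ e₂ :=
        (le_div_iff₀ (by positivity)).mp h
      have : 0 < min (1 / 2) (e₂ / (4 * (D + 1))) := by positivity
      nlinarith
  have ev : ∀ᶠ s in 𝓝 (0 : ℝ), a₁ / 2 < Q s ∧ |R s| < |R 0| + 1 ∧ |s * Q s| < η := by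
    refine ((hQc.tendsto 0).eventually_const_lt (by rw [hQ0]; linarith)).and
      (((hRc.abs.tendsto 0).eventually_lt_const (by linarith)).and
      ((hyc.tendsto 0).eventually_lt_const (by simpa using hη0)))
  obtain ⟨ρ, hρ, hball⟩ := Metric.eventually_nhds_iff.mp ev
  refine ⟨min ρ η, (C * (2 / e₂) ^ 3 + (|R 0| + 1)) / (e₂ / 2 * (a₁ / 2)), by positivity, ?_⟩
  intro s x hs hx hxs h
  have hsρ := lt_of_lt_of_le hs (min_le_left _ _)
  have hxη := lt_of_lt_of_le hx (min_le_right _ _)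
  obtain ⟨hQs, hRs, hys⟩ := hball (y := s) (by simpa using hsρ)
  have hy : a₁ * s + a₂ * s ^ 2 + a₃ * s ^ 3 + a₄ * s ^ 4 = s * Q s := by simp only [hQ]; ring
  rw [hy]
  have hres := hR s (s * Q s) rfl
  set y := s * Q s with hydef
  have hQpos : 0 < Q s := by linarith
  have hs0 : 0 < |s| := abs_pos.mpr (by rintro rfl; simp at hxs)
  have hxy : 0 ≤ x * y := by
    have : x * y = x * s * Q s := by rw [hydef]; ring
    rw [this]; positivity
  have hylow : a₁ / 2 * |s| ≤ |y| := by
    rw [hydef, abs_mul, abs_of_pos hQpos, mul_comm]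
    exact mul_le_mul_of_nonneg_left hQs.le hs0.le
  have hxsq : e₂ / 2 * x ^ 2 ≤ s ^ 2 := by
    refine root_sq_le (by linarith) hC ?_ h
    calc D * |x| ≤ D * (2 * η) := mul_le_mul_of_nonneg_left (by linarith) hD0
      _ ≤ _ := hηD
  have hx6 : x ^ 6 ≤ (2 / e₂) ^ 3 * s ^ 6 := by
    have h1 : x ^ 2 ≤ 2 / e₂ * s ^ 2 := by
      rw [div_mul_eq_mul_div, le_div_iff₀ he]; linarith
    calc x ^ 6 = (x ^ 2) ^ 3 := by ring
      _ ≤ (2 / e₂ * s ^ 2) ^ 3 := pow_le_pow_left₀ (sq_nonneg x) h1 3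
      _ = _ := by ring
  have hlow := quintic_sub_lower (e₂ := e₂) (e₃ := e₃) (e₄ := e₄) (e₅ := e₅) hxy
    (by linarith) (by
      calc (|e₃| + |e₄| + |e₅|) * (|x| + |y|) ≤ D * (2 * η) := by
            apply mul_le_mul (by linarith) (by linarith) (by positivity) hD0
        _ ≤ _ := hηD)
  have hup : |(e₂ * x ^ 2 + e₃ * x ^ 3 + e₄ * x ^ 4 + e₅ * x ^ 5)
        - (e₂ * y ^ 2 + e₃ * y ^ 3 + e₄ * y ^ 4 + e₅ * y ^ 5)|
      ≤ (C * (2 / e₂) ^ 3 + (|R 0| + 1)) * |s| ^ 6 := by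
    have hs6 : |s| ^ 6 = s ^ 6 := by rw [← abs_pow]; exact abs_of_nonneg (by positivity)
    have r1 : |s ^ 6 * R s| ≤ (|R 0| + 1) * s ^ 6 := by
      rw [abs_mul, abs_pow, hs6, mul_comm]
      exact mul_le_mul_of_nonneg_right hRs.le (by positivity)
    have r2 : C * x ^ 6 ≤ C * ((2 / e₂) ^ 3 * s ^ 6) := mul_le_mul_of_nonneg_left hx6 hC
    rw [← hres] at r1
    have r3 : (C * (2 / e₂) ^ 3 + (|R 0| + 1)) * s ^ 6
        = C * ((2 / e₂) ^ 3 * s ^ 6) + (|R 0| + 1) * s ^ 6 := by ring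
    rw [hs6, r3]
    have r4 := abs_add_le
      (e₂ * y ^ 2 + e₃ * y ^ 3 + e₄ * y ^ 4 + e₅ * y ^ 5 - s ^ 2)
      (s ^ 2 - (e₂ * x ^ 2 + e₃ * x ^ 3 + e₄ * x ^ 4 + e₅ * x ^ 5))
    rw [sub_add_sub_cancel] at r4
    rw [abs_sub_comm]
    exact r4.trans ((add_le_add r1 (h.trans r2)).trans_eq (add_comm _ _))
  have hfin : |x - y| * (e₂ / 2 * (a₁ / 2)) * |s|
      ≤ (C * (2 / e₂) ^ 3 + (|R 0| + 1)) * |s| ^ 5 * |s| := by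
    calc |x - y| * (e₂ / 2 * (a₁ / 2)) * |s| = |x - y| * (e₂ / 2 * (a₁ / 2 * |s|)) := by ring
      _ ≤ |x - y| * (e₂ / 2 * (|x| + |y|)) := by
        gcongr; linarith [abs_nonneg x]
      _ ≤ _ := hlow.trans hup
      _ = _ := by ring
  rw [div_mul_eq_mul_div, le_div_iff₀ (by positivity)]
  exact le_of_mul_le_mul_right hfin hs0

/-- The derivative of `g` has the sign of `x` on a punctured neighbourhood of `0`. -/
lemma deriv_sign (g : ℝ → ℝ) (hg1 : deriv g 0 = 0)
    (h2 : 0 < iteratedDeriv 2 g 0) :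
    ∃ r > 0, (∀ x ∈ Ioo (0 : ℝ) r, 0 < deriv g x) ∧ (∀ x ∈ Ioo (-r) (0 : ℝ), deriv g x < 0) := by
  have hd : 0 < deriv (deriv g) 0 := by
    rwa [iteratedDeriv_succ, iteratedDeriv_one] at h2
  have h := eventually_nhdsWithin_sign_eq_of_deriv_pos hd hg1
  obtain ⟨r, hr, hb⟩ := Metric.eventually_nhds_iff.mp h
  refine ⟨r, hr, fun x hx => ?_, fun x hx => ?_⟩
  · have := hb (y := x) (by simp [abs_of_pos hx.1, hx.2])
    rw [sub_zero, sign_pos hx.1] at this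
    exact sign_eq_one_iff.mp this
  · have := hb (y := x) (by simp [abs_of_neg hx.2]; linarith [hx.1])
    rw [sub_zero, sign_neg hx.2] at this
    exact sign_eq_neg_one_iff.mp this


/-- Let `g` be `C⁶` near `0` with `g 0 = 0`, `g' 0 = 0`,
`e i = g⁽ⁱ⁾ 0 / i!` and `e₂ > 0`. Then for all small `t > 0` there are unique small
solutions `σ₋(t) < 0 < σ₊(t)` of `g σ = t`, and as `t → 0⁺`,
`σ₊(t) = c₁ t^{1/2} + c₂ t + c₃ t^{3/2} + c₄ t² + O(t^{5/2})` and
`σ₋(t) = -c₁ t^{1/2} + c₂ t - c₃ t^{3/2} + c₄ t² + O(t^{5/2})`, where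
`c₁ = e₂^{-1/2}`, `c₂ = -e₃/(2e₂²)`, `c₃ = (5e₃² - 4e₂e₄)/(8e₂^{7/2})`,
`c₄ = -(2e₃³ - 3e₂e₃e₄ + e₂²e₅)/(2e₂⁵)`. -/
theorem stmt_6 (g : ℝ → ℝ) (δ : ℝ) (hδ : 0 < δ)
    (hg : ContDiffOn ℝ 6 g (Set.Ioo (-δ) δ))
    (hg0 : g 0 = 0) (hg1 : deriv g 0 = 0)
    (e : ℕ → ℝ) (he : ∀ i, e i = iteratedDeriv i g 0 / (Nat.factorial i : ℝ))
    (he2 : 0 < e 2) :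
    ∃ ε δ' : ℝ, 0 < ε ∧ 0 < δ' ∧ δ' ≤ δ ∧ ∃ σp σm : ℝ → ℝ,
      (∀ t ∈ Set.Ioo (0 : ℝ) ε,
        σp t ∈ Set.Ioo (0 : ℝ) δ' ∧ g (σp t) = t ∧
          (∀ x ∈ Set.Ioo (0 : ℝ) δ', g x = t → x = σp t) ∧
        σm t ∈ Set.Ioo (-δ') (0 : ℝ) ∧ g (σm t) = t ∧
          (∀ x ∈ Set.Ioo (-δ') (0 : ℝ), g x = t → x = σm t)) ∧
      ∃ M : ℝ, ∀ t ∈ Set.Ioo (0 : ℝ) ε,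
        |σp t - ((e 2) ^ (-(1 : ℝ) / 2) * t ^ ((1 : ℝ) / 2)
            + (-(e 3) / (2 * (e 2) ^ 2)) * t
            + ((5 * (e 3) ^ 2 - 4 * e 2 * e 4) / (8 * (e 2) ^ ((7 : ℝ) / 2)))
              * t ^ ((3 : ℝ) / 2)
            + (-(2 * (e 3) ^ 3 - 3 * e 2 * e 3 * e 4 + (e 2) ^ 2 * e 5)
                / (2 * (e 2) ^ 5)) * t ^ 2)|
          ≤ M * t ^ ((5 : ℝ) / 2) ∧
        |σm t - (-((e 2) ^ (-(1 : ℝ) / 2)) * t ^ ((1 : ℝ) / 2)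
            + (-(e 3) / (2 * (e 2) ^ 2)) * t
            - ((5 * (e 3) ^ 2 - 4 * e 2 * e 4) / (8 * (e 2) ^ ((7 : ℝ) / 2)))
              * t ^ ((3 : ℝ) / 2)
            + (-(2 * (e 3) ^ 3 - 3 * e 2 * e 3 * e 4 + (e 2) ^ 2 * e 5)
                / (2 * (e 2) ^ 5)) * t ^ 2)|
          ≤ M * t ^ ((5 : ℝ) / 2) := by
  set k := (e 2) ^ ((1 : ℝ) / 2) with hk
  have hk0 : 0 < k := Real.rpow_pos_of_pos he2 _
  have hk2 : e 2 = k ^ 2 := by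
    rw [hk, ← Real.rpow_natCast, ← Real.rpow_mul he2.le]; norm_num
  have hkinv : (e 2) ^ (-(1 : ℝ) / 2) = k⁻¹ := by
    rw [hk, ← Real.rpow_neg he2.le]; norm_num
  have hk7 : (e 2) ^ ((7 : ℝ) / 2) = k ^ 7 := by
    rw [hk, ← Real.rpow_natCast, ← Real.rpow_mul he2.le]; norm_num
  rw [hkinv, hk7]
  set a₁ := k⁻¹ with ha₁
  set a₂ := -(e 3) / (2 * (e 2) ^ 2) with ha₂
  set a₃ := (5 * (e 3) ^ 2 - 4 * e 2 * e 4) / (8 * k ^ 7) with ha₃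
  set a₄ := -(2 * (e 3) ^ 3 - 3 * e 2 * e 3 * e 4 + (e 2) ^ 2 * e 5) / (2 * (e 2) ^ 5) with ha₄
  obtain ⟨C, hC, hT⟩ := taylor_bound_six g δ hδ hg hg0 hg1 e he
  obtain ⟨ρ₀, hρ₀, hT⟩ := Metric.eventually_nhds_iff.mp hT
  obtain ⟨ρ, M, hρ, hM⟩ := root_expansion (e 2) (e 3) (e 4) (e 5) a₁ a₂ a₃ a₄ C he2
    (by positivity) hC
    (by rw [ha₁, hk2]; field_simp)
    (by rw [ha₁, ha₂, hk2]; field_simp; ring)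
    (by rw [ha₁, ha₂, ha₃, hk2]; field_simp; ring)
    (by rw [ha₁, ha₂, ha₃, ha₄, hk2]; field_simp; ring)
  obtain ⟨r, hr, hpos, hneg⟩ := deriv_sign g hg1 (by
    have := he 2
    rw [this] at he2
    exact (div_pos_iff_of_pos_right (by positivity)).mp he2)
  -- Halving the radius makes `g` continuous on the closed interval `[-d, d]`.
  obtain ⟨d, hd0, hdδ, hdr, hdρ, hdρ₀⟩ :
      ∃ d : ℝ, 0 < d ∧ d < δ ∧ d < r ∧ d < ρ ∧ d < ρ₀ := by
    refine ⟨min (min δ r) (min ρ ρ₀) / 2, by positivity, ?_⟩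
    have h0 : 0 < min (min δ r) (min ρ ρ₀) := by positivity
    have h1 : min (min δ r) (min ρ ρ₀) ≤ min δ r := min_le_left _ _
    have h2 : min (min δ r) (min ρ ρ₀) ≤ min ρ ρ₀ := min_le_right _ _
    have := min_le_left δ r
    have := min_le_right δ r
    have := min_le_left ρ ρ₀
    have := min_le_right ρ ρ₀
    refine ⟨?_, ?_, ?_, ?_⟩ <;> linarith
  have hcont : ContinuousOn g (Icc (-d) d) :=
    hg.continuousOn.mono fun x hx => ⟨by linarith [hx.1], by linarith [hx.2]⟩
  have hcp : ContinuousOn g (Icc 0 d) := hcont.mono (Icc_subset_Icc (by linarith) le_rfl)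
  have hcm : ContinuousOn g (Icc (-d) 0) := hcont.mono (Icc_subset_Icc le_rfl hd0.le)
  have hmono : StrictMonoOn g (Icc 0 d) := by
    refine strictMonoOn_of_deriv_pos (convex_Icc _ _) hcp fun x hx => ?_
    rw [interior_Icc] at hx
    exact hpos x ⟨hx.1, hx.2.trans hdr⟩
  have hanti : StrictAntiOn g (Icc (-d) 0) := by
    refine strictAntiOn_of_deriv_neg (convex_Icc _ _) hcm fun x hx => ?_
    rw [interior_Icc] at hx
    exact hneg x ⟨by linarith [hx.1], hx.2⟩
  have hgp : 0 < g d := by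
    have := hmono ⟨le_rfl, hd0.le⟩ ⟨hd0.le, le_rfl⟩ hd0
    rwa [hg0] at this
  have hgm : 0 < g (-d) := by
    have := hanti ⟨le_rfl, by linarith⟩ ⟨by linarith, le_rfl⟩ (by linarith : -d < 0)
    rwa [hg0] at this
  have hexp : ∀ t, ∃ x, 0 < t → t < g d → x ∈ Ioo 0 d ∧ g x = t := by
    intro t
    by_cases h : 0 < t ∧ t < g d
    · obtain ⟨x, hx, hxt⟩ := intermediate_value_Ioo hd0.le hcp (by rw [hg0]; exact h)
      exact ⟨x, fun _ _ => ⟨hx, hxt⟩⟩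
    · exact ⟨0, fun h1 h2 => absurd ⟨h1, h2⟩ h⟩
  have hexm : ∀ t, ∃ x, 0 < t → t < g (-d) → x ∈ Ioo (-d) 0 ∧ g x = t := by
    intro t
    by_cases h : 0 < t ∧ t < g (-d)
    · obtain ⟨x, hx, hxt⟩ := intermediate_value_Ioo' (by linarith : -d ≤ 0) hcm
        (by rw [hg0]; exact h)
      exact ⟨x, fun _ _ => ⟨hx, hxt⟩⟩
    · exact ⟨0, fun h1 h2 => absurd ⟨h1, h2⟩ h⟩
  choose σp hσp using hexp
  choose σm hσm using hexm
  refine ⟨min (min (g d) (g (-d))) (ρ ^ 2), d, by positivity, hd0, hdδ.le, σp, σm, ?_, M, ?_⟩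
  · intro t ht
    have ht1 := lt_of_lt_of_le ht.2 (min_le_left _ _)
    obtain ⟨p1, p2⟩ := hσp t ht.1 (lt_of_lt_of_le ht1 (min_le_left _ _))
    obtain ⟨m1, m2⟩ := hσm t ht.1 (lt_of_lt_of_le ht1 (min_le_right _ _))
    refine ⟨p1, p2, fun x hx hxt => ?_, m1, m2, fun x hx hxt => ?_⟩
    · exact hmono.injOn (Ioo_subset_Icc_self hx) (Ioo_subset_Icc_self p1) (hxt.trans p2.symm)
    · exact hanti.injOn (Ioo_subset_Icc_self hx) (Ioo_subset_Icc_self m1) (hxt.trans m2.symm)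
  · intro t ht
    have ht0 := ht.1
    have ht1 := lt_of_lt_of_le ht.2 (min_le_left _ _)
    have ht2 := lt_of_lt_of_le ht.2 (min_le_right _ _)
    obtain ⟨p1, p2⟩ := hσp t ht.1 (lt_of_lt_of_le ht1 (min_le_left _ _))
    obtain ⟨m1, m2⟩ := hσm t ht.1 (lt_of_lt_of_le ht1 (min_le_right _ _))
    set s := t ^ ((1 : ℝ) / 2) with hs
    have hs0 : 0 < s := Real.rpow_pos_of_pos ht0 _
    have hst : t = s ^ 2 := by
      rw [hs, ← Real.rpow_natCast, ← Real.rpow_mul ht0.le]; norm_num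
    have hs3 : t ^ ((3 : ℝ) / 2) = s ^ 3 := by
      rw [hs, ← Real.rpow_natCast, ← Real.rpow_mul ht0.le]; norm_num
    have hs5 : t ^ ((5 : ℝ) / 2) = s ^ 5 := by
      rw [hs, ← Real.rpow_natCast, ← Real.rpow_mul ht0.le]; norm_num
    have hs4 : t ^ 2 = s ^ 4 := by rw [hst]; ring
    have hsρ : s < ρ := lt_of_pow_lt_pow_left₀ 2 hρ.le (by rw [← hst]; exact ht2)
    rw [hs3, hs4, hs5]
    constructor
    · have habs : |σp t| < d := by rw [abs_of_pos p1.1]; exact p1.2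
      have hTx := hT (y := σp t) (by simpa using habs.trans hdρ₀)
      rw [p2] at hTx
      nth_rewrite 1 [hst] at hTx
      have := hM s (σp t) (by rwa [abs_of_pos hs0]) (habs.trans hdρ) (mul_pos p1.1 hs0) hTx
      rwa [abs_of_pos hs0, ← hst] at this
    · have habs : |σm t| < d := by rw [abs_of_neg m1.2]; linarith [m1.1]
      have hTx := hT (y := σm t) (by simpa using habs.trans hdρ₀)
      rw [m2] at hTx
      have hst' : t = (-s) ^ 2 := by rw [neg_sq]; exact hst
      nth_rewrite 1 [hst'] at hTx
      have := hM (-s) (σm t) (by rwa [abs_neg, abs_of_pos hs0]) (habs.trans hdρ)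
        (mul_pos_of_neg_of_neg m1.2 (by linarith)) hTx
      rw [abs_neg, abs_of_pos hs0] at this
      convert this using 2
      rw [hst]
      ring
end

section
/- Let g : ℝ → ℝ be C⁶ on a neighborhood of 0 with g(0) = 0 and g'(0) = 0, set e_i = g⁽ⁱ⁾(0)/i! for i = 2, 3, 4, and assume e₂ > 0. For small t > 0 let σ₋(t) < 0 < σ₊(t) be the unique small solutions of g(σ) = t, and define the cap area A(t) = ∫_{σ₋(t)}^{σ₊(t)} (t - g(σ)) dσ. Then, as t → 0⁺, A(t) = (4/3)·e₂^{-1/2}·t^{3/2} + ((5e₃² - 4e₂e₄)/(10·e₂^{7/2}))·t^{5/2} + O(t^{7/2}); in particular, the coefficients of t² and t³ in the expansion vanish. -/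
/-!
Put `w = √e₂` and choose `p, q, r` so that the quintic Taylor polynomial of `g` is `w²` times the
quintic truncation of `(s + p s² + q s³ + r s⁴)²` (`sqPoly`). For a root `s` of `g s = t`, let `z`
be the square root of `t / w²` with the sign of `s`. Comparing squares gives
`z = s + p s² + q s³ + r s⁴ + O(s⁵)`.

Up to an error `O(z⁷)`, the cap area is the difference between `s = σ₊` and `s = σ₋` of
`w² (z² s - ∫₀ˢ sqPoly)`. An explicit polynomial identity (`capSeries_subst`) shows that
`z² s - ∫₀ˢ sqPoly = Φ(z) + O(z⁷)`, with one polynomial `Φ` (`capSeries`) for both endpoints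
(`endpoint_expansion`). The two endpoints have opposite values of `z`, so only the odd powers
`z³, z⁵` of `Φ` survive in the difference, that is `t^{3/2}` and `t^{5/2}`. The smallness of the
roots comes from the intermediate value theorem and uniqueness (`root_tendsto`).
-/

open Filter Topology

namespace CapArea

/-- The quintic truncation of `(s + p s² + q s³ + r s⁴)²`. Every quintic
`s² + a s³ + b s⁴ + c s⁵` has this form for suitable `p`, `q`, `r`. -/
noncomputable def sqPoly (p q r s : ℝ) : ℝ :=
  s ^ 2 + 2 * p * s ^ 3 + (2 * q + p ^ 2) * s ^ 4 + (2 * r + 2 * p * q) * s ^ 5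

/-- The antiderivative of `sqPoly p q r` vanishing at `0`. -/
noncomputable def sqPolyInt (p q r s : ℝ) : ℝ :=
  s ^ 3 / 3 + 2 * p * s ^ 4 / 4 + (2 * q + p ^ 2) * s ^ 5 / 5 + (2 * r + 2 * p * q) * s ^ 6 / 6

/-- The antiderivative of `2 z s(z)`, where
`s(z) = z - p z² + (2p² - q) z³ + (5pq - 5p³ - r) z⁴` is the quartic truncation of the inverse
series of `z = s + p s² + q s³ + r s⁴`. -/
noncomputable def capSeries (p q r z : ℝ) : ℝ :=
  2 * (z ^ 3 / 3 - p * z ^ 4 / 4 + (2 * p ^ 2 - q) * z ^ 5 / 5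
    + (5 * p * q - 5 * p ^ 3 - r) * z ^ 6 / 6)

lemma capSeries_sub_neg (p q r z : ℝ) :
    capSeries p q r z - capSeries p q r (-z)
      = 4 / 3 * z ^ 3 + 4 / 5 * (2 * p ^ 2 - q) * z ^ 5 := by
  simp only [capSeries]; ring

lemma integral_sqPoly (p q r a b : ℝ) :
    ∫ s in a..b, sqPoly p q r s = sqPolyInt p q r b - sqPolyInt p q r a := by
  apply intervalIntegral.integral_eq_sub_of_hasDerivAt
  · intro x _
    have h : ∀ n : ℕ, HasDerivAt (fun s : ℝ => s ^ n) (n * x ^ (n - 1)) x := fun n =>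
      hasDerivAt_pow n x
    have : HasDerivAt (sqPolyInt p q r) _ x := ((((h 3).div_const 3).add (((h 4).const_mul (2 * p)).div_const 4)).add
      (((h 5).const_mul (2 * q + p ^ 2)).div_const 5)).add
      (((h 6).const_mul (2 * r + 2 * p * q)).div_const 6)
    refine this.congr_deriv ?_
    simp only [sqPoly]; push_cast; ring
  · apply Continuous.intervalIntegrable
    unfold sqPoly; fun_prop

/-- Substituting `z = s + p s² + q s³ + r s⁴ + d s⁵` into `z² s - sqPolyInt s - capSeries z`
cancels every power of `s` below the seventh, whatever the value of `d`. -/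
lemma capSeries_subst (p q r D : ℝ) : ∃ K, ∀ s d : ℝ, |s| ≤ 1 → |d| ≤ D →
    |(s + p * s ^ 2 + q * s ^ 3 + r * s ^ 4 + d * s ^ 5) ^ 2 * s - sqPolyInt p q r s
      - capSeries p q r (s + p * s ^ 2 + q * s ^ 3 + r * s ^ 4 + d * s ^ 5)| ≤ K * |s| ^ 7 := by
  -- With `m = z / s = 1 + s a`, the functions `d₂, …, d₆` are the remainders of `m², …, m⁶`
  -- after truncation in `s` at the orders 4, 4, 3, 2, 1.
  let c : ℝ × ℝ → ℝ := fun x => r + x.1 * x.2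
  let b : ℝ × ℝ → ℝ := fun x => q + x.1 * c x
  let a : ℝ × ℝ → ℝ := fun x => p + x.1 * b x
  let m : ℝ × ℝ → ℝ := fun x => 1 + x.1 * a x
  let d₂ : ℝ × ℝ → ℝ := fun x => 2 * x.2 + 2 * p * c x + b x ^ 2
  let d₃ : ℝ × ℝ → ℝ := fun x =>
    3 * x.2 + 3 * (2 * p * c x + b x ^ 2) + b x * (a x ^ 2 + a x * p + p ^ 2)
  let d₄ : ℝ × ℝ → ℝ := fun x =>
    4 * c x + 6 * b x * (a x + p) + 4 * a x ^ 3 + x.1 * a x ^ 4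
  let d₅ : ℝ × ℝ → ℝ := fun x =>
    5 * b x + 10 * a x ^ 2 + 10 * x.1 * a x ^ 3 + 5 * x.1 ^ 2 * a x ^ 4 + x.1 ^ 3 * a x ^ 5
  let d₆ : ℝ × ℝ → ℝ := fun x =>
    a x * (1 + m x + m x ^ 2 + m x ^ 3 + m x ^ 4 + m x ^ 5)
  let R : ℝ × ℝ → ℝ := fun x =>
    d₂ x - 2 / 3 * d₃ x + p / 2 * d₄ x - 2 / 5 * (2 * p ^ 2 - q) * d₅ x
      - 1 / 3 * (5 * p * q - 5 * p ^ 3 - r) * d₆ x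
  have hR : Continuous R := by
    simp only [R, d₂, d₃, d₄, d₅, d₆, m, a, b, c]; fun_prop
  obtain ⟨K, hK⟩ := ((isCompact_Icc (a := (-1 : ℝ)) (b := 1)).prod
    (isCompact_Icc (a := -D) (b := D))).exists_bound_of_continuousOn hR.continuousOn
  refine ⟨K, fun s d hs hd => ?_⟩
  have key : (s + p * s ^ 2 + q * s ^ 3 + r * s ^ 4 + d * s ^ 5) ^ 2 * s - sqPolyInt p q r s
      - capSeries p q r (s + p * s ^ 2 + q * s ^ 3 + r * s ^ 4 + d * s ^ 5)
      = R (s, d) * s ^ 7 := by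
    simp only [R, d₂, d₃, d₄, d₅, d₆, m, a, b, c, sqPolyInt, capSeries]; ring
  rw [key, abs_mul, abs_pow]
  have := hK (s, d) ⟨abs_le.1 hs, abs_le.1 hd⟩
  rw [Real.norm_eq_abs] at this
  gcongr

/-- If `z²` agrees with `sqPoly s` to order six and `z` has the sign of `s`, then `z` agrees with
`s + p s² + q s³ + r s⁴` to order five. Hence `z² s - sqPolyInt s` is a series in `z` alone, up
to order seven. -/
lemma endpoint_expansion (p q r C : ℝ) : ∃ K, 0 ≤ K ∧ ∀ᶠ s in 𝓝 (0 : ℝ), ∀ z : ℝ, s ≠ 0 →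
    0 ≤ z * s → |z ^ 2 - sqPoly p q r s| ≤ C * s ^ 6 →
    |s| ≤ 4 * |z| ∧ |z ^ 2 * s - sqPolyInt p q r s - capSeries p q r z| ≤ K * |z| ^ 7 := by
  -- `E` adds to `|C|` the coefficients of `s⁶`, `s⁷`, `s⁸` in `(s + p s² + q s³ + r s⁴)²`, so that
  -- `|z² - (s + p s² + q s³ + r s⁴)²| ≤ E |s|⁶` for `|s| ≤ 1`.
  set E : ℝ := |C| + (|2 * p * r + q ^ 2| + |2 * q * r| + |r ^ 2|) with hE
  have hE0 : 0 ≤ E := by positivity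
  obtain ⟨K, hK⟩ := capSeries_subst p q r (2 * E)
  have hm : ∀ᶠ s in 𝓝 (0 : ℝ), 1 / 2 < 1 + p * s + q * s ^ 2 + r * s ^ 3 := by
    have : Continuous fun s : ℝ => 1 + p * s + q * s ^ 2 + r * s ^ 3 := by fun_prop
    exact this.tendsto 0 |>.eventually_const_lt (by norm_num)
  have hd : ∀ᶠ s in 𝓝 (0 : ℝ), 2 * E * s ^ 4 < 1 / 4 := by
    have : Continuous fun s : ℝ => 2 * E * s ^ 4 := by fun_prop
    exact this.tendsto 0 |>.eventually_lt_const (by norm_num)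
  have h1 : ∀ᶠ s in 𝓝 (0 : ℝ), |s| < 1 :=
    (continuous_abs.tendsto 0).eventually_lt_const (by norm_num)
  refine ⟨|K| * 4 ^ 7, by positivity, ?_⟩
  filter_upwards [hm, hd, h1] with s hm hd h1 z hs hzs hz
  set u := s + p * s ^ 2 + q * s ^ 3 + r * s ^ 4 with hu
  have hs0 : 0 < |s| := abs_pos.2 hs
  have hus : u * s = s ^ 2 * (1 + p * s + q * s ^ 2 + r * s ^ 3) := by rw [hu]; ring
  have hs2 : 0 < s ^ 2 := by positivity
  have hus' : s ^ 2 / 2 ≤ u * s := by rw [hus]; nlinarith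
  have hsum : |s| / 2 ≤ |z + u| := by
    have h2 : s ^ 2 / 2 ≤ |z + u| * |s| := by
      rw [← abs_mul]; refine le_trans ?_ (le_abs_self _); nlinarith
    rw [← sq_abs] at h2
    nlinarith
  have hua : |s| / 2 ≤ |u| := by
    have h2 : s ^ 2 / 2 ≤ |u| * |s| := by
      rw [← abs_mul]; exact le_trans hus' (le_abs_self _)
    rw [← sq_abs] at h2
    nlinarith
  have hsq : |z ^ 2 - u ^ 2| ≤ E * |s| ^ 6 := by
    have e1 : z ^ 2 - u ^ 2 = (z ^ 2 - sqPoly p q r s)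
        - ((2 * p * r + q ^ 2) + 2 * q * r * s + r ^ 2 * s ^ 2) * s ^ 6 := by
      rw [hu, sqPoly]; ring
    have e2 : |(2 * p * r + q ^ 2) + 2 * q * r * s + r ^ 2 * s ^ 2|
        ≤ |2 * p * r + q ^ 2| + |2 * q * r| + |r ^ 2| := by
      refine (abs_add_three _ _ _).trans ?_
      rw [abs_mul _ s, abs_mul _ (s ^ 2), abs_pow s]
      have : |s| ^ 2 ≤ 1 := pow_le_one₀ (abs_nonneg _) h1.le
      gcongr
      · exact mul_le_of_le_one_right (abs_nonneg _) h1.le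
      · exact mul_le_of_le_one_right (abs_nonneg _) this
    have e3 : s ^ 6 = |s| ^ 6 := (Even.pow_abs (by decide) s).symm
    rw [e1]
    refine (abs_sub _ _).trans ?_
    rw [abs_mul, abs_pow, hE, add_mul]
    rw [e3] at hz
    gcongr
    exact hz.trans (by gcongr; exact le_abs_self C)
  have hdiff : |z - u| ≤ 2 * E * |s| ^ 5 := by
    have h2 : |z - u| * |z + u| ≤ E * |s| ^ 6 := by
      rw [← abs_mul]; rwa [show z ^ 2 - u ^ 2 = (z - u) * (z + u) by ring] at hsq
    have h3 : |z - u| * (|s| / 2) ≤ E * |s| ^ 6 :=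
      (mul_le_mul_of_nonneg_left hsum (abs_nonneg _)).trans h2
    have h4 : |z - u| * |s| ≤ (2 * E * |s| ^ 5) * |s| := by linarith
    exact le_of_mul_le_mul_right h4 hs0
  have hsz : |s| ≤ 4 * |z| := by
    have h2 : |u| ≤ |z| + |z - u| := by
      have := abs_sub_abs_le_abs_sub u z
      rw [abs_sub_comm] at this; linarith
    have h3 : 2 * E * |s| ^ 5 ≤ 1 / 4 * |s| := by
      rw [← Even.pow_abs (by decide) s] at hd
      have := mul_le_mul_of_nonneg_right hd.le hs0.le
      linarith
    linarith
  refine ⟨hsz, ?_⟩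
  have hzd : z = s + p * s ^ 2 + q * s ^ 3 + r * s ^ 4 + ((z - u) / s ^ 5) * s ^ 5 := by
    rw [div_mul_cancel₀ _ (pow_ne_zero 5 hs), ← hu]; ring
  have hdd : |(z - u) / s ^ 5| ≤ 2 * E := by
    rw [abs_div, abs_pow, div_le_iff₀ (by positivity)]; exact hdiff
  have := hK s _ h1.le hdd
  rw [← hzd] at this
  refine this.trans ?_
  calc K * |s| ^ 7 ≤ |K| * (4 * |z|) ^ 7 := by gcongr; exact le_abs_self K
    _ = |K| * 4 ^ 7 * |z| ^ 7 := by ring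

lemma taylor_bound (g : ℝ → ℝ) (δ : ℝ) (hδ : 0 < δ)
    (hg : ContDiffOn ℝ 6 g (Set.Ioo (-δ) δ))
    (hg0 : g 0 = 0) (hg1 : deriv g 0 = 0)
    (e : ℕ → ℝ) (he : ∀ i, e i = iteratedDeriv i g 0 / (Nat.factorial i : ℝ)) :
    ∃ C, ∀ᶠ x in 𝓝 (0 : ℝ),
      |g x - (e 2 * x ^ 2 + e 3 * x ^ 3 + e 4 * x ^ 4 + e 5 * x ^ 5)| ≤ C * x ^ 6 := by
  have h0 : (0 : ℝ) ∈ Set.Ioo (-δ) δ := ⟨by linarith, hδ⟩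
  have h := taylor_isLittleO (n := 6) (convex_Ioo (-δ) δ) h0 (by exact_mod_cast hg)
  rw [isOpen_Ioo.nhdsWithin_eq h0] at h
  refine ⟨1 + |e 6|, ?_⟩
  filter_upwards [h.bound one_pos] with x hx
  have hT : taylorWithinEval g 6 (Set.Ioo (-δ) δ) 0 x
      = e 2 * x ^ 2 + e 3 * x ^ 3 + e 4 * x ^ 4 + e 5 * x ^ 5 + e 6 * x ^ 6 := by
    rw [taylor_within_apply]
    have hi : ∀ k, iteratedDerivWithin k g (Set.Ioo (-δ) δ) 0 = e k * (Nat.factorial k : ℝ) := by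
      intro k
      rw [iteratedDerivWithin_of_isOpen isOpen_Ioo h0, he k]
      field_simp
    have e0 : e 0 = 0 := by rw [he]; simp [hg0]
    have e1 : e 1 = 0 := by rw [he]; simp [hg1]
    simp only [hi, Finset.sum_range_succ, Finset.sum_range_zero, e0, e1, smul_eq_mul, sub_zero]
    simp only [Nat.factorial]
    push_cast
    ring
  rw [hT, Real.norm_eq_abs, Real.norm_eq_abs, sub_zero, abs_pow,
    Even.pow_abs (by decide), one_mul] at hx
  have hx6 : (0 : ℝ) ≤ x ^ 6 := by positivity
  have hsplit : g x - (e 2 * x ^ 2 + e 3 * x ^ 3 + e 4 * x ^ 4 + e 5 * x ^ 5)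
      = (g x - (e 2 * x ^ 2 + e 3 * x ^ 3 + e 4 * x ^ 4 + e 5 * x ^ 5 + e 6 * x ^ 6))
        + e 6 * x ^ 6 := by ring
  rw [hsplit]
  refine (abs_add_le _ _).trans ?_
  rw [abs_mul, abs_of_nonneg hx6, add_mul, one_mul]
  gcongr

/-- The root of `g = t` in `(0, δ')` tends to `0`: the intermediate value theorem gives a root
close to `0`, which is the only one. -/
lemma root_tendsto (g : ℝ → ℝ) (δ' ε : ℝ) (hδ' : 0 < δ') (hε : 0 < ε)
    (hc : ContinuousOn g (Set.Ico 0 δ')) (hg0 : g 0 = 0)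
    (hpos : ∀ᶠ x in 𝓝[>] (0 : ℝ), 0 < g x) (σ : ℝ → ℝ)
    (hσ : ∀ t ∈ Set.Ioo (0 : ℝ) ε, ∀ x ∈ Set.Ioo (0 : ℝ) δ', g x = t → x = σ t) :
    Tendsto σ (𝓝[>] 0) (𝓝 0) := by
  rw [Metric.tendsto_nhds]
  intro η hη
  obtain ⟨x₀, hx₀, hx₀p⟩ :=
    (hpos.and (Ioo_mem_nhdsGT (lt_min hη hδ'))).exists
  have hx₀η := hx₀p.2.trans_le (min_le_left _ _)
  have hx₀δ := hx₀p.2.trans_le (min_le_right _ _)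
  filter_upwards [Ioo_mem_nhdsGT (lt_min hε hx₀)] with t ht
  have hsub := intermediate_value_Ioo hx₀p.1.le
    (hc.mono fun y hy => ⟨hy.1, hy.2.trans_lt hx₀δ⟩)
  obtain ⟨x, hx, hxt⟩ := hsub ⟨by rw [hg0]; exact ht.1, ht.2.trans_le (min_le_right _ _)⟩
  rw [← hσ t ⟨ht.1, ht.2.trans_le (min_le_left _ _)⟩ x ⟨hx.1, hx.2.trans hx₀δ⟩ hxt]
  rw [Real.dist_eq, sub_zero, abs_of_pos hx.1]
  exact hx.2.trans hx₀η

lemma eventually_pos (g : ℝ → ℝ) (a b c d C : ℝ) (ha : 0 < a)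
    (h : ∀ᶠ x in 𝓝 (0 : ℝ),
      |g x - (a * x ^ 2 + b * x ^ 3 + c * x ^ 4 + d * x ^ 5)| ≤ C * x ^ 6) :
    ∀ᶠ x in 𝓝 (0 : ℝ), x ≠ 0 → 0 < g x := by
  have hc : Continuous fun x : ℝ => a + b * x + c * x ^ 2 + d * x ^ 3 - C * x ^ 4 := by fun_prop
  filter_upwards [h, (hc.tendsto 0).eventually_const_lt (u := 0) (by simpa using ha)]
    with x hx hx' hx0
  have h1 := mul_pos (show 0 < x ^ 2 by positivity) hx'
  have h2 := (abs_le.1 hx).1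
  nlinarith

lemma sq_rpow_half {y : ℝ} (hy : 0 ≤ y) (a : ℝ) : (y ^ 2) ^ (a / 2) = y ^ a := by
  rw [← Real.rpow_natCast, ← Real.rpow_mul hy]
  congr 1; push_cast; ring

/-- The expansion in terms of `z = (t / e₂) ^ (1 / 2)` is the claimed one in terms of `t`. -/
lemma target_eq (y w e₃ e₄ : ℝ) (hy : 0 ≤ y) (hw : 0 < w) :
    (4 / 3) * (w ^ 2) ^ (-(1 : ℝ) / 2) * (y ^ 2) ^ ((3 : ℝ) / 2)
      + ((5 * e₃ ^ 2 - 4 * w ^ 2 * e₄) / (10 * (w ^ 2) ^ ((7 : ℝ) / 2))) * (y ^ 2) ^ ((5 : ℝ) / 2)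
    = w ^ 2 * (4 / 3 * (y / w) ^ 3 + 4 / 5 * (2 * (e₃ / (2 * w ^ 2)) ^ 2
        - (e₄ / w ^ 2 - (e₃ / (2 * w ^ 2)) ^ 2) / 2) * (y / w) ^ 5) := by
  simp only [sq_rpow_half hy, sq_rpow_half hw.le, Real.rpow_ofNat, Real.rpow_neg_one]
  field_simp
  ring

end CapArea

open CapArea

/-- Let `g` be `C⁶` near `0` with `g 0 = 0`, `g' 0 = 0`,
`e i = g⁽ⁱ⁾ 0 / i!` and `e₂ > 0`. For small `t > 0` let `σ₋(t) < 0 < σ₊(t)` be the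
unique small solutions of `g σ = t`, and define the cap area
`A t = ∫_{σ₋(t)}^{σ₊(t)} (t - g σ) dσ`. Then, as `t → 0⁺`,
`A t = (4/3) e₂^{-1/2} t^{3/2} + ((5e₃² - 4e₂e₄)/(10 e₂^{7/2})) t^{5/2} + O(t^{7/2})`;
in particular the coefficients of `t²` and `t³` vanish. -/
theorem stmt_7 (g : ℝ → ℝ) (δ : ℝ) (hδ : 0 < δ)
    (hg : ContDiffOn ℝ 6 g (Set.Ioo (-δ) δ))
    (hg0 : g 0 = 0) (hg1 : deriv g 0 = 0)
    (e : ℕ → ℝ) (he : ∀ i, e i = iteratedDeriv i g 0 / (Nat.factorial i : ℝ))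
    (he2 : 0 < e 2)
    (ε δ' : ℝ) (hε : 0 < ε) (hδ' : 0 < δ') (hδ'δ : δ' ≤ δ)
    (σp σm : ℝ → ℝ)
    (hσ : ∀ t ∈ Set.Ioo (0 : ℝ) ε,
      σp t ∈ Set.Ioo (0 : ℝ) δ' ∧ g (σp t) = t ∧
        (∀ x ∈ Set.Ioo (0 : ℝ) δ', g x = t → x = σp t) ∧
      σm t ∈ Set.Ioo (-δ') (0 : ℝ) ∧ g (σm t) = t ∧
        (∀ x ∈ Set.Ioo (-δ') (0 : ℝ), g x = t → x = σm t))
    (A : ℝ → ℝ) (hA : ∀ t, A t = ∫ σ in (σm t)..(σp t), (t - g σ)) :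
    ∃ M ε' : ℝ, 0 < ε' ∧ ∀ t ∈ Set.Ioo (0 : ℝ) ε',
      |A t - ((4 / 3) * (e 2) ^ (-(1 : ℝ) / 2) * t ^ ((3 : ℝ) / 2)
          + ((5 * (e 3) ^ 2 - 4 * e 2 * e 4) / (10 * (e 2) ^ ((7 : ℝ) / 2)))
            * t ^ ((5 : ℝ) / 2))|
        ≤ M * t ^ ((7 : ℝ) / 2) := by
  obtain ⟨C, hC⟩ := taylor_bound g δ hδ hg hg0 hg1 e he
  obtain ⟨w, hw, hw2⟩ : ∃ w : ℝ, 0 < w ∧ e 2 = w ^ 2 :=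
    ⟨√(e 2), Real.sqrt_pos.2 he2, (Real.sq_sqrt he2.le).symm⟩
  set p := e 3 / (2 * w ^ 2) with hp
  set q := (e 4 / w ^ 2 - p ^ 2) / 2 with hq
  set r := (e 5 / w ^ 2 - 2 * p * q) / 2 with hr
  have hP : ∀ x, e 2 * x ^ 2 + e 3 * x ^ 3 + e 4 * x ^ 4 + e 5 * x ^ 5
      = w ^ 2 * sqPoly p q r x := by
    intro x
    have h3 : e 3 = w ^ 2 * (2 * p) := by rw [hp]; field_simp
    have h4 : e 4 = w ^ 2 * (2 * q + p ^ 2) := by rw [hq]; field_simp; ring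
    have h5 : e 5 = w ^ 2 * (2 * r + 2 * p * q) := by rw [hr]; field_simp; ring
    rw [hw2, h3, h4, h5, sqPoly]; ring
  -- Both roots tend to `0`; the negative one is the positive root for `x ↦ g (-x)`.
  have hpos := eventually_pos g _ _ _ _ C he2 hC
  have hcont : ContinuousOn g (Set.Ioo (-δ) δ) := hg.continuousOn
  have hp0 : Tendsto σp (𝓝[>] 0) (𝓝 0) := by
    refine root_tendsto g δ' ε hδ' hε (hcont.mono fun x hx => ⟨by linarith [hx.1], by
      linarith [hx.2]⟩) hg0 ?_ σp fun t ht => (hσ t ht).2.2.1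
    filter_upwards [hpos.filter_mono nhdsWithin_le_nhds, self_mem_nhdsWithin] with x hx hx0
    exact hx (ne_of_gt hx0)
  have hm0 : Tendsto σm (𝓝[>] 0) (𝓝 0) := by
    have hneg : Tendsto (fun t => -σm t) (𝓝[>] 0) (𝓝 0) := by
      refine root_tendsto (fun x => g (-x)) δ' ε hδ' hε ?_ (by simpa using hg0) ?_ _ ?_
      · exact hcont.comp continuous_neg.continuousOn fun x hx =>
          ⟨by linarith [hx.2], by linarith [hx.1]⟩
      · have : ∀ᶠ x in 𝓝 (0 : ℝ), -x ≠ 0 → 0 < g (-x) := by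
          have h := continuous_neg.tendsto (0 : ℝ)
          rw [neg_zero] at h
          exact h.eventually hpos
        filter_upwards [this.filter_mono nhdsWithin_le_nhds, self_mem_nhdsWithin] with x hx hx0
        exact hx (neg_ne_zero.2 (ne_of_gt hx0))
      · intro t ht x hx hgx
        have := (hσ t ht).2.2.2.2.2 (-x) ⟨by linarith [hx.2], by linarith [hx.1]⟩ hgx
        linarith
    simpa using hneg.neg
  obtain ⟨K, hK0, hK⟩ := endpoint_expansion p q r (C / w ^ 2)
  obtain ⟨ρ, hρ, hCρ⟩ := Metric.eventually_nhds_iff.1 hC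
  have hball : ∀ᶠ s in 𝓝 (0 : ℝ), dist s 0 < ρ := Metric.ball_mem_nhds 0 hρ
  suffices h : ∀ᶠ t in 𝓝[>] (0 : ℝ),
      |A t - ((4 / 3) * (e 2) ^ (-(1 : ℝ) / 2) * t ^ ((3 : ℝ) / 2)
          + ((5 * (e 3) ^ 2 - 4 * e 2 * e 4) / (10 * (e 2) ^ ((7 : ℝ) / 2)))
            * t ^ ((5 : ℝ) / 2))|
        ≤ ((2 * w ^ 2 * K + |C| * 4 ^ 6 * 8) / w ^ 7) * t ^ ((7 : ℝ) / 2) by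
    obtain ⟨ε', hε', h⟩ := mem_nhdsGT_iff_exists_Ioo_subset.1 h
    exact ⟨_, ε', hε', fun t ht => h ht⟩
  filter_upwards [Ioo_mem_nhdsGT hε, hp0.eventually hK, hm0.eventually hK,
    hp0.eventually hball, hm0.eventually hball] with t ht hKp hKm hbp hbm
  obtain ⟨hp1, hp2, -, hm1, hm2, -⟩ := hσ t ht
  obtain ⟨y, hy, hyt⟩ : ∃ y : ℝ, 0 < y ∧ t = y ^ 2 :=
    ⟨√t, Real.sqrt_pos.2 ht.1, (Real.sq_sqrt ht.1.le).symm⟩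
  set z := y / w with hz
  have hz0 : 0 < z := div_pos hy hw
  have htz : t = w ^ 2 * z ^ 2 := by rw [hyt, hz]; field_simp
  have hroot : ∀ s, dist s 0 < ρ → g s = t → |z ^ 2 - sqPoly p q r s| ≤ C / w ^ 2 * s ^ 6 := by
    intro s hs hgs
    have h := hCρ hs
    rw [hP, hgs, htz, ← mul_sub, abs_mul, abs_of_pos (by positivity : 0 < w ^ 2)] at h
    rw [div_mul_eq_mul_div, le_div_iff₀ (by positivity)]
    linarith
  obtain ⟨hsp, hEp⟩ := hKp z hp1.1.ne' (mul_nonneg hz0.le hp1.1.le) (hroot _ hbp hp2)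
  obtain ⟨hsm, hEm⟩ := hKm (-z) hm1.2.ne (mul_nonneg_of_nonpos_of_nonpos (by linarith) hm1.2.le)
    (by rw [neg_sq]; exact hroot _ hbm hm2)
  rw [neg_sq] at hEm
  rw [abs_neg] at hEm hsm
  rw [abs_of_pos hz0] at hEp hEm hsp hsm
  have hle : σm t ≤ σp t := hm1.2.le.trans hp1.1.le
  have hgi : IntervalIntegrable g MeasureTheory.volume (σm t) (σp t) := by
    apply ContinuousOn.intervalIntegrable
    rw [Set.uIcc_of_le hle]
    exact hcont.mono fun x hx => ⟨by linarith [hx.1, hm1.1], by linarith [hx.2, hp1.2]⟩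
  have hPc : Continuous (sqPoly p q r) := by unfold sqPoly; fun_prop
  have hPi : IntervalIntegrable (fun x => w ^ 2 * sqPoly p q r x) MeasureTheory.volume
      (σm t) (σp t) := (hPc.const_mul _).intervalIntegrable _ _
  set I := ∫ x in (σm t)..(σp t), (g x - w ^ 2 * sqPoly p q r x) with hI
  have hIb : |I| ≤ |C| * 4 ^ 6 * 8 * z ^ 7 := by
    have h := intervalIntegral.norm_integral_le_of_norm_le_const
      (f := fun x => g x - w ^ 2 * sqPoly p q r x) (a := σm t) (b := σp t)
      (C := |C| * (4 * z) ^ 6) (by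
        intro x hx
        rw [Set.uIoc_of_le hle] at hx
        have hxz : |x| ≤ 4 * z := by
          rw [abs_le]
          exact ⟨by linarith [(abs_le.1 hsm).1, hx.1], by linarith [(abs_le.1 hsp).2, hx.2]⟩
        have hxρ : dist x 0 < ρ := by
          rw [Real.dist_eq, sub_zero] at hbp hbm ⊢
          rw [abs_lt]
          exact ⟨by linarith [(abs_lt.1 hbm).1, hx.1], by linarith [(abs_lt.1 hbp).2, hx.2]⟩
        have := hCρ hxρ
        rw [hP, ← Even.pow_abs (by decide) x] at this
        rw [Real.norm_eq_abs]
        refine this.trans ?_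
        gcongr
        exact le_abs_self C)
    rw [Real.norm_eq_abs] at h
    have hlen : |σp t - σm t| ≤ 8 * z := by
      rw [abs_of_nonneg (by linarith)]
      linarith [(abs_le.1 hsm).1, (abs_le.1 hsp).2]
    calc |I| ≤ |C| * (4 * z) ^ 6 * |σp t - σm t| := h
      _ ≤ |C| * (4 * z) ^ 6 * (8 * z) := by gcongr
      _ = |C| * 4 ^ 6 * 8 * z ^ 7 := by ring
  have hAt : A t = w ^ 2 * ((z ^ 2 * σp t - sqPolyInt p q r (σp t))
      - (z ^ 2 * σm t - sqPolyInt p q r (σm t))) - I := by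
    rw [hA, intervalIntegral.integral_sub (by simp) hgi, hI,
      intervalIntegral.integral_sub hgi hPi, intervalIntegral.integral_const_mul,
      integral_sqPoly, intervalIntegral.integral_const, smul_eq_mul, htz]
    ring
  have ht7 : t ^ ((7 : ℝ) / 2) = w ^ 7 * z ^ 7 := by
    rw [hyt, sq_rpow_half hy.le, Real.rpow_ofNat, hz]; field_simp
  have htarget := target_eq y w (e 3) (e 4) hy.le hw
  rw [← hp, ← hq, ← hz, ← capSeries_sub_neg p q r z, ← hw2, ← hyt] at htarget
  rw [htarget, ht7, hAt, hw2]
  set X := z ^ 2 * σp t - sqPolyInt p q r (σp t) - capSeries p q r z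
  set Y := z ^ 2 * σm t - sqPolyInt p q r (σm t) - capSeries p q r (-z)
  calc _ = |w ^ 2 * (X - Y) - I| := by congr 1; simp only [X, Y]; ring
    _ ≤ w ^ 2 * (|X| + |Y|) + |I| := by
      refine (abs_sub _ _).trans ?_
      rw [abs_mul, abs_of_pos (by positivity : 0 < w ^ 2)]
      gcongr
      exact abs_sub _ _
    _ ≤ w ^ 2 * (K * z ^ 7 + K * z ^ 7) + |C| * 4 ^ 6 * 8 * z ^ 7 := by gcongr
    _ = _ := by field_simp; ring
end

section
/- Let f : ℝ → ℝ be C⁵ on a neighborhood of 0 with f(0) = 0 and f'(0) = 0, set b_i = f⁽ⁱ⁾(0)/i! for i = 2, 3, 4, and assume b₂ > 0. For small h > 0 let σ₋(h) < 0 < σ₊(h) be the unique small solutions of f(σ) = h. Then for all sufficiently small t > 0 there exists a unique small h(t) > 0 with σ₊(h(t)) - σ₋(h(t)) = t, and as t → 0⁺, h(t) = (b₂/4)·t² - ((5b₃² - 4b₂b₄)/(64·b₂))·t⁴ + O(t⁵); in particular, the coefficient of t³ in the expansion vanishes. -/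
/-!
Write the endpoints of the chord of length `t` at height `h` as `s ± t/2`. Subtracting the two
Taylor expansions of `f (s ± t/2) = h` (error `O(t⁵)`) and dividing by `t` gives
`2 b₂ s + b₃ (3 s² + t²/4) + b₄ (4 s³ + s t²) = O(t⁴)`, hence `s = O(t²)` and then
`s = -b₃ t² / (8 b₂) + O(t⁴)`. Substituting this into the average of the two expansions gives the
claimed expansion of `h`; this algebra is `chord_expansion`, and the Taylor bound is
`taylor_remainder_bound`.

Near `0` the function `f` is strictly convex with `f' 0 = 0`, so it is strictly monotone on each
side (`strictMono_strictAnti_near`). Therefore the chord length strictly increases with the height,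
which gives uniqueness, and the intermediate value theorem for `x ↦ f x - f (x - t)` on `[0, t]`
gives existence.
-/

/-- The quantitative core: if `h` is the common value at `s ± t/2` of the quartic
`B2 x² + B3 x³ + B4 x⁴` up to errors `C t⁵`, then `h` has the stated expansion in `t`, with a
constant depending only on `B2`, `B3`, `B4`, `C`. -/
lemma chord_expansion (B2 B3 B4 C : ℝ) (hB2 : 0 < B2) (hC : 0 ≤ C) :
    ∃ M : ℝ, ∀ t s h r₁ r₂ : ℝ, 0 < t → t ≤ 1 → |s| ≤ t / 2 →
      |r₁| ≤ C * t ^ 5 → |r₂| ≤ C * t ^ 5 →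
      h = B2 * (s + t / 2) ^ 2 + B3 * (s + t / 2) ^ 3 + B4 * (s + t / 2) ^ 4 + r₁ →
      h = B2 * (s - t / 2) ^ 2 + B3 * (s - t / 2) ^ 3 + B4 * (s - t / 2) ^ 4 + r₂ →
      |h - ((B2 / 4) * t ^ 2 - ((5 * B3 ^ 2 - 4 * B2 * B4) / (64 * B2)) * t ^ 4)| ≤ M * t ^ 5 := by
  -- `K` and `L` will bound `|s| / t²` and `|s + B3 t² / (8 B2)| / t⁴`.
  obtain ⟨K, hK⟩ : ∃ K, K = (|B3| + |B4| + 2 * C) / (2 * B2) := ⟨_, rfl⟩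
  obtain ⟨L, hL⟩ : ∃ L, L = (2 * C + 3 * |B3| * K ^ 2 + 2 * |B4| * K) / (2 * B2) := ⟨_, rfl⟩
  have hK0 : 0 ≤ K := by rw [hK]; positivity
  have hL0 : 0 ≤ L := by rw [hL]; positivity
  refine ⟨B2 * L ^ 2 + |B3| * L + |B3| * K ^ 3 + |B4| * (K ^ 4 + 2 * K ^ 2) + C, ?_⟩
  intro t s h r₁ r₂ ht ht1 hs hr₁ hr₂ h₁ h₂
  have hp : ∀ m n : ℕ, n ≤ m → t ^ m ≤ t ^ n := fun m n hmn =>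
    pow_le_pow_of_le_one ht.le ht1 hmn
  have key : 2 * B2 * s + B3 * (3 * s ^ 2 + t ^ 2 / 4) + B4 * (4 * s ^ 3 + s * t ^ 2)
      = (r₂ - r₁) / t := by
    rw [eq_div_iff ht.ne']; linear_combination h₂ - h₁
  have hq : |(r₂ - r₁) / t| ≤ 2 * C * t ^ 4 := by
    rw [abs_div, abs_of_pos ht, div_le_iff₀ ht]
    calc |r₂ - r₁| ≤ |r₂| + |r₁| := abs_sub _ _
      _ ≤ 2 * C * t ^ 4 * t := by linarith
  generalize (r₂ - r₁) / t = q at key hq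
  have hs2 : s ^ 2 ≤ t ^ 2 / 4 := by
    rw [← sq_abs]; nlinarith [abs_nonneg s]
  -- In `key` every term but `2 * B2 * s` is `O(t²)`, since `|s| ≤ t / 2`.
  have hsK : |s| ≤ K * t ^ 2 := by
    have e : 2 * B2 * s = q - B3 * (3 * s ^ 2 + t ^ 2 / 4) - B4 * (s * (4 * s ^ 2 + t ^ 2)) := by
      linear_combination key
    have a1 : |B3 * (3 * s ^ 2 + t ^ 2 / 4)| ≤ |B3| * t ^ 2 := by
      rw [abs_mul, abs_of_nonneg (by positivity : 0 ≤ 3 * s ^ 2 + t ^ 2 / 4)]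
      gcongr; linarith
    have a2 : |B4 * (s * (4 * s ^ 2 + t ^ 2))| ≤ |B4| * t ^ 2 := by
      rw [abs_mul, abs_mul, abs_of_nonneg (by positivity : 0 ≤ 4 * s ^ 2 + t ^ 2)]
      gcongr
      calc |s| * (4 * s ^ 2 + t ^ 2) ≤ (1 / 2) * (2 * t ^ 2) := by
            gcongr <;> linarith
        _ = t ^ 2 := by ring
    have a3 : 2 * C * t ^ 4 ≤ 2 * C * t ^ 2 := by gcongr 2 * C * ?_; exact hp _ _ (by norm_num)
    have : |2 * B2 * s| ≤ (|B3| + |B4| + 2 * C) * t ^ 2 := by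
      rw [e]
      have := abs_sub (q - B3 * (3 * s ^ 2 + t ^ 2 / 4)) (B4 * (s * (4 * s ^ 2 + t ^ 2)))
      have := abs_sub q (B3 * (3 * s ^ 2 + t ^ 2 / 4))
      linarith
    rw [abs_mul, abs_of_pos (by positivity : 0 < 2 * B2)] at this
    rw [hK, div_mul_eq_mul_div, le_div_iff₀ (by positivity)]
    linarith
  have hsn : ∀ n : ℕ, |s ^ n| ≤ K ^ n * t ^ (2 * n) := fun n => by
    rw [abs_pow, pow_mul, ← mul_pow]; gcongr
  -- `u` is the deviation of the midpoint from its leading term `-B3 t² / (8 B2)`.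
  obtain ⟨u, hu⟩ : ∃ u, u = s + B3 / (8 * B2) * t ^ 2 := ⟨_, rfl⟩
  have huL : |u| ≤ L * t ^ 4 := by
    have e : 2 * B2 * u = q - 3 * B3 * s ^ 2 - B4 * (s * (4 * s ^ 2 + t ^ 2)) := by
      rw [hu]; field_simp; linear_combination 8 * key
    have a1 : |3 * B3 * s ^ 2| ≤ 3 * |B3| * K ^ 2 * t ^ 4 := by
      rw [abs_mul, abs_mul, mul_assoc (3 * |B3|), abs_of_pos (by norm_num : (0 : ℝ) < 3)]
      gcongr; exact hsn 2
    have a2 : |B4 * (s * (4 * s ^ 2 + t ^ 2))| ≤ 2 * |B4| * K * t ^ 4 := by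
      rw [abs_mul, abs_mul, abs_of_nonneg (by positivity : 0 ≤ 4 * s ^ 2 + t ^ 2)]
      calc |B4| * (|s| * (4 * s ^ 2 + t ^ 2)) ≤ |B4| * (K * t ^ 2 * (2 * t ^ 2)) := by
            gcongr; linarith
        _ = _ := by ring
    have : |2 * B2 * u| ≤ (2 * C + 3 * |B3| * K ^ 2 + 2 * |B4| * K) * t ^ 4 := by
      rw [e]
      have := abs_sub (q - 3 * B3 * s ^ 2) (B4 * (s * (4 * s ^ 2 + t ^ 2)))
      have := abs_sub q (3 * B3 * s ^ 2)
      linarith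
    rw [abs_mul, abs_of_pos (by positivity : 0 < 2 * B2)] at this
    rw [hL, div_mul_eq_mul_div, le_div_iff₀ (by positivity)]
    linarith
  -- In the average of `h₁` and `h₂`, with the leading part of `s` written through `u`, the terms of
  -- order at most `t⁴` are exactly those of the claimed expansion.
  have e : h - ((B2 / 4) * t ^ 2 - ((5 * B3 ^ 2 - 4 * B2 * B4) / (64 * B2)) * t ^ 4)
      = B2 * u ^ 2 + B3 * (u * t ^ 2 / 2) + B3 * s ^ 3 + B4 * (s ^ 4 + 3 / 2 * s ^ 2 * t ^ 2)
        + (r₁ + r₂) / 2 := by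
    have hh : h = B2 * (s ^ 2 + t ^ 2 / 4) + B3 * (s ^ 3 + 3 / 4 * s * t ^ 2)
        + B4 * (s ^ 4 + 3 / 2 * s ^ 2 * t ^ 2 + t ^ 4 / 16) + (r₁ + r₂) / 2 := by
      linear_combination (h₁ + h₂) / 2
    rw [hh, hu]; field_simp; ring
  have c1 : |B2 * u ^ 2| ≤ B2 * L ^ 2 * t ^ 5 := by
    rw [abs_mul, abs_of_pos hB2, abs_pow, mul_assoc]
    gcongr
    calc |u| ^ 2 ≤ (L * t ^ 4) ^ 2 := by gcongr
      _ = L ^ 2 * t ^ 8 := by ring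
      _ ≤ L ^ 2 * t ^ 5 := by gcongr L ^ 2 * ?_; exact hp _ _ (by norm_num)
  have c2 : |B3 * (u * t ^ 2 / 2)| ≤ |B3| * L * t ^ 5 := by
    rw [abs_mul, abs_div, abs_mul, abs_of_pos (by positivity : 0 < t ^ 2), abs_two, mul_assoc]
    gcongr
    calc |u| * t ^ 2 / 2 ≤ |u| * t ^ 2 := half_le_self (by positivity)
      _ ≤ L * t ^ 4 * t ^ 2 := by gcongr
      _ = L * t ^ 6 := by ring
      _ ≤ L * t ^ 5 := by gcongr L * ?_; exact hp _ _ (by norm_num)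
  have c3 : |B3 * s ^ 3| ≤ |B3| * K ^ 3 * t ^ 5 := by
    rw [abs_mul, mul_assoc]
    gcongr
    exact (hsn 3).trans (by gcongr K ^ 3 * ?_; exact hp _ _ (by norm_num))
  have c4 : |B4 * (s ^ 4 + 3 / 2 * s ^ 2 * t ^ 2)| ≤ |B4| * (K ^ 4 + 2 * K ^ 2) * t ^ 5 := by
    rw [abs_mul, mul_assoc |B4|, abs_of_nonneg (by positivity : 0 ≤ s ^ 4 + 3 / 2 * s ^ 2 * t ^ 2)]
    gcongr
    have h4 := (le_abs_self _).trans (hsn 4)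
    have h2 := (le_abs_self _).trans (hsn 2)
    norm_num at h4 h2
    calc s ^ 4 + 3 / 2 * s ^ 2 * t ^ 2 ≤ K ^ 4 * t ^ 8 + 2 * (K ^ 2 * t ^ 4) * t ^ 2 := by
          gcongr; norm_num
      _ = K ^ 4 * t ^ 8 + 2 * K ^ 2 * t ^ 6 := by ring
      _ ≤ K ^ 4 * t ^ 5 + 2 * K ^ 2 * t ^ 5 := by
          gcongr K ^ 4 * ?_ + 2 * K ^ 2 * ?_ <;> exact hp _ _ (by norm_num)
      _ = _ := by ring
  have c5 : |(r₁ + r₂) / 2| ≤ C * t ^ 5 := by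
    rw [abs_div, abs_two]; linarith [abs_add_le r₁ r₂]
  rw [e]
  refine (abs_add_le _ _).trans ?_
  refine (add_le_add_left ((abs_add_le _ _).trans (add_le_add_left ((abs_add_le _ _).trans
    (add_le_add_left (abs_add_le _ _) _)) _)) _).trans ?_
  linarith

open Set Filter Topology

lemma taylor_remainder_bound (f : ℝ → ℝ) (δ : ℝ) (hδ : 0 < δ)
    (hf : ContDiffOn ℝ 5 f (Set.Ioo (-δ) δ))
    (hf0 : f 0 = 0) (hf1 : deriv f 0 = 0)
    (b : ℕ → ℝ) (hb : ∀ i, b i = iteratedDeriv i f 0 / (Nat.factorial i : ℝ)) :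
    ∃ C ≥ 0, ∀ᶠ x in 𝓝 (0 : ℝ), |f x - (b 2 * x ^ 2 + b 3 * x ^ 3 + b 4 * x ^ 4)| ≤ C * |x| ^ 5 := by
  have h0 : (0 : ℝ) ∈ Ioo (-δ) δ := ⟨by linarith, hδ⟩
  have T := taylor_isLittleO (n := 5) (convex_Ioo (-δ) δ) h0 (by exact_mod_cast hf)
  rw [isOpen_Ioo.nhdsWithin_eq h0] at T
  have T1 := T.def one_pos
  refine ⟨1 + |b 5|, by positivity, ?_⟩
  filter_upwards [T1] with x hx
  have hE : taylorWithinEval f 5 (Ioo (-δ) δ) 0 x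
      = b 2 * x ^ 2 + b 3 * x ^ 3 + b 4 * x ^ 4 + b 5 * x ^ 5 := by
    simp only [taylorWithinEval_succ, taylor_within_zero_eval,
      iteratedDerivWithin_of_isOpen isOpen_Ioo h0, hb, hf0, zero_add, iteratedDeriv_one, hf1]
    simp [Nat.factorial]
    ring
  rw [hE] at hx
  simp only [sub_zero, Real.norm_eq_abs, one_mul, abs_pow] at hx
  have e : f x - (b 2 * x ^ 2 + b 3 * x ^ 3 + b 4 * x ^ 4) =
    (f x - (b 2 * x ^ 2 + b 3 * x ^ 3 + b 4 * x ^ 4 + b 5 * x ^ 5)) + b 5 * x ^ 5 := by ring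
  rw [e]
  refine (abs_add_le _ _).trans ?_
  rw [abs_mul, abs_pow]
  linarith

lemma strictMono_strictAnti_near (f : ℝ → ℝ) (δ : ℝ) (hδ : 0 < δ)
    (hf : ContDiffOn ℝ 5 f (Set.Ioo (-δ) δ)) (hf1 : deriv f 0 = 0)
    (h2 : 0 < iteratedDeriv 2 f 0) :
    ∃ η₀ > 0, ∀ η, 0 < η → η < η₀ → StrictMonoOn f (Icc 0 η) ∧ StrictAntiOn f (Icc (-η) 0) := by
  have h0 : (0 : ℝ) ∈ Ioo (-δ) δ := ⟨by linarith, hδ⟩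
  have hd2 : 0 < deriv (deriv f) 0 := by
    rw [iteratedDeriv_succ, iteratedDeriv_one] at h2; exact h2
  have hc : ContDiffOn ℝ 3 (deriv (deriv f)) (Ioo (-δ) δ) :=
    (hf.deriv_of_isOpen (m := 4) isOpen_Ioo (by norm_num)).deriv_of_isOpen isOpen_Ioo
      (by norm_num)
  have hev : ∀ᶠ x in 𝓝 (0 : ℝ), 0 < deriv (deriv f) x :=
    (hc.continuousOn.continuousAt (isOpen_Ioo.mem_nhds h0)).eventually_const_lt hd2
  obtain ⟨r, hr, hball⟩ := Metric.eventually_nhds_iff.1 hev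
  refine ⟨min r δ, by positivity, fun η hη hlt => ?_⟩
  have hlr := hlt.trans_le (min_le_left _ _)
  have hlδ := hlt.trans_le (min_le_right _ _)
  have hsub : Icc (-η) η ⊆ Ioo (-δ) δ := fun x hx => ⟨by linarith [hx.1], by linarith [hx.2]⟩
  have hcd : ContinuousOn (deriv f) (Icc (-η) η) :=
    ((hf.deriv_of_isOpen (m := 4) isOpen_Ioo (by norm_num)).continuousOn).mono hsub
  have hm : StrictMonoOn (deriv f) (Icc (-η) η) := by
    refine strictMonoOn_of_deriv_pos (convex_Icc _ _) hcd fun x hx => hball ?_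
    rw [interior_Icc] at hx
    rw [dist_zero_right, Real.norm_eq_abs, abs_lt]
    exact ⟨by linarith [hx.1], by linarith [hx.2]⟩
  have z : (0 : ℝ) ∈ Icc (-η) η := ⟨by linarith, hη.le⟩
  constructor
  · refine strictMonoOn_of_deriv_pos (convex_Icc _ _)
      (hf.continuousOn.mono ((Icc_subset_Icc_left z.1).trans hsub)) fun x hx => ?_
    rw [interior_Icc] at hx
    rw [← hf1]
    exact hm z ⟨by linarith [hx.1], hx.2.le⟩ hx.1
  · refine strictAntiOn_of_deriv_neg (convex_Icc _ _)
      (hf.continuousOn.mono ((Icc_subset_Icc_right z.2).trans hsub)) fun x hx => ?_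
    rw [interior_Icc] at hx
    rw [← hf1]
    exact hm ⟨hx.1.le, by linarith [hx.2]⟩ z hx.2

/-- Let `f` be `C⁵` near `0` with `f 0 = 0`, `f' 0 = 0`,
`b i = f⁽ⁱ⁾ 0 / i!` and `b₂ > 0`. For small `h > 0` let `σ₋(h) < 0 < σ₊(h)` be
the unique small solutions of `f σ = h`. Then for all small `t > 0` there is a
unique small `h(t) > 0` with `σ₊(h(t)) - σ₋(h(t)) = t`, and as `t → 0⁺`,
`h(t) = (b₂/4) t² - ((5b₃² - 4b₂b₄)/(64 b₂)) t⁴ + O(t⁵)`; in particular the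
coefficient of `t³` vanishes. -/
theorem stmt_9 (f : ℝ → ℝ) (δ : ℝ) (hδ : 0 < δ)
    (hf : ContDiffOn ℝ 5 f (Set.Ioo (-δ) δ))
    (hf0 : f 0 = 0) (hf1 : deriv f 0 = 0)
    (b : ℕ → ℝ) (hb : ∀ i, b i = iteratedDeriv i f 0 / (Nat.factorial i : ℝ))
    (hb2 : 0 < b 2)
    (ε δ' : ℝ) (hε : 0 < ε) (hδ' : 0 < δ') (hδ'δ : δ' ≤ δ)
    (σp σm : ℝ → ℝ)
    (hσ : ∀ h ∈ Set.Ioo (0 : ℝ) ε,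
      σp h ∈ Set.Ioo (0 : ℝ) δ' ∧ f (σp h) = h ∧
        (∀ x ∈ Set.Ioo (0 : ℝ) δ', f x = h → x = σp h) ∧
      σm h ∈ Set.Ioo (-δ') (0 : ℝ) ∧ f (σm h) = h ∧
        (∀ x ∈ Set.Ioo (-δ') (0 : ℝ), f x = h → x = σm h)) :
    ∃ ε' ε₂ : ℝ, 0 < ε' ∧ 0 < ε₂ ∧ ε₂ ≤ ε ∧ ∃ hgt : ℝ → ℝ,
      (∀ t ∈ Set.Ioo (0 : ℝ) ε',
        hgt t ∈ Set.Ioo (0 : ℝ) ε₂ ∧ σp (hgt t) - σm (hgt t) = t ∧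
          (∀ h' ∈ Set.Ioo (0 : ℝ) ε₂, σp h' - σm h' = t → h' = hgt t)) ∧
      ∃ M : ℝ, ∀ t ∈ Set.Ioo (0 : ℝ) ε',
        |hgt t - ((b 2 / 4) * t ^ 2
            - ((5 * (b 3) ^ 2 - 4 * b 2 * b 4) / (64 * b 2)) * t ^ 4)|
          ≤ M * t ^ 5 := by
  obtain ⟨C, hC, hT⟩ := taylor_remainder_bound f δ hδ hf hf0 hf1 b hb
  obtain ⟨r, hr, hT⟩ := Metric.eventually_nhds_iff.1 hT
  have h2 : 0 < iteratedDeriv 2 f 0 := by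
    rw [hb] at hb2
    exact (div_pos_iff_of_pos_right (by positivity)).1 hb2
  obtain ⟨η₀, hη₀, hmono⟩ := strictMono_strictAnti_near f δ hδ hf hf1 h2
  obtain ⟨η, hη, hlt⟩ : ∃ η, 0 < η ∧ η < min η₀ δ' := exists_between (by positivity)
  have hηδ : η < δ' := hlt.trans_le (min_le_right _ _)
  obtain ⟨hinc, hdec⟩ := hmono η hη (hlt.trans_le (min_le_left _ _))
  have hcont : ContinuousOn f (Icc (-η) η) :=
    hf.continuousOn.mono fun x hx => ⟨by linarith [hx.1], by linarith [hx.2]⟩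
  have fp : 0 < f η := hf0 ▸ hinc ⟨le_rfl, hη.le⟩ ⟨hη.le, le_rfl⟩ hη
  have fm : 0 < f (-η) := hf0 ▸ hdec ⟨le_rfl, by linarith⟩ ⟨by linarith, le_rfl⟩ (by linarith)
  obtain ⟨ε₂, hε₂⟩ : ∃ ε₂, ε₂ = min ε (min (f η) (f (-η))) := ⟨_, rfl⟩
  have hε₂0 : 0 < ε₂ := by rw [hε₂]; positivity
  have hε₂ε : ε₂ ≤ ε := hε₂ ▸ min_le_left _ _
  have hε₂p : ε₂ ≤ f η := hε₂ ▸ (min_le_right _ _).trans (min_le_left _ _)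
  have hε₂m : ε₂ ≤ f (-η) := hε₂ ▸ (min_le_right _ _).trans (min_le_right _ _)
  -- Below height `ε₂` the two roots stay in the interval where `f` is monotone on each side.
  have hloc : ∀ h ∈ Ioo 0 ε₂, σp h ∈ Ioo 0 η ∧ σm h ∈ Ioo (-η) 0 := by
    intro h hh
    obtain ⟨-, -, up, -, -, um⟩ := hσ h ⟨hh.1, hh.2.trans_le hε₂ε⟩
    constructor
    · obtain ⟨x, hx, hfx⟩ := intermediate_value_Ioo hη.le
        (hcont.mono (Icc_subset_Icc_left (by linarith)))
        (show h ∈ Ioo (f 0) (f η) from ⟨by rw [hf0]; exact hh.1, hh.2.trans_le hε₂p⟩)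
      rwa [← up x ⟨hx.1, hx.2.trans hηδ⟩ hfx]
    · obtain ⟨x, hx, hfx⟩ := intermediate_value_Ioo' (by linarith : -η ≤ 0)
        (hcont.mono (Icc_subset_Icc_right hη.le))
        (show h ∈ Ioo (f 0) (f (-η)) from ⟨by rw [hf0]; exact hh.1, hh.2.trans_le hε₂m⟩)
      rwa [← um x ⟨by linarith [hx.1], hx.2⟩ hfx]
  have hval : ∀ h ∈ Ioo 0 ε₂, f (σp h) = h ∧ f (σm h) = h := fun h hh =>
    have := hσ h ⟨hh.1, hh.2.trans_le hε₂ε⟩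
    ⟨this.2.1, this.2.2.2.2.1⟩
  -- Hence the chord length is strictly increasing in the height, which gives uniqueness.
  have hw : StrictMonoOn (fun h => σp h - σm h) (Ioo 0 ε₂) := by
    intro h hh k hk hlt
    obtain ⟨p1, m1⟩ := hloc h hh
    obtain ⟨p2, m2⟩ := hloc k hk
    have A : σp h < σp k := (hinc.lt_iff_lt (Ioo_subset_Icc_self p1) (Ioo_subset_Icc_self p2)).1
      (by rwa [(hval h hh).1, (hval k hk).1])
    have B : σm k < σm h := (hdec.lt_iff_gt (Ioo_subset_Icc_self m1) (Ioo_subset_Icc_self m2)).1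
      (by rwa [(hval h hh).2, (hval k hk).2])
    show σp h - σm h < σp k - σm k
    linarith
  have hc0 : ContinuousAt f 0 := hcont.continuousAt (Icc_mem_nhds (by linarith) hη)
  obtain ⟨ρ, hρ, hsmall⟩ := Metric.eventually_nhds_iff.1
    (hc0.eventually_lt_const (show f 0 < ε₂ by rwa [hf0]))
  obtain ⟨ε', hε'⟩ : ∃ ε', ε' = min (min η ρ) (min r 1) := ⟨_, rfl⟩
  -- A chord of length `t` is found directly, without continuity of `σp` and `σm`: the function
  -- `x ↦ f x - f (x - t)` changes sign on `[0, t]`.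
  have hex : ∀ t ∈ Ioo 0 ε', ∃ h ∈ Ioo 0 ε₂, σp h - σm h = t := by
    intro t ht
    have htη : t < η := ht.2.trans_le (hε' ▸ (min_le_left _ _).trans (min_le_left _ _))
    have htρ : t < ρ := ht.2.trans_le (hε' ▸ (min_le_left _ _).trans (min_le_right _ _))
    have ht0 := ht.1
    have ft : 0 < f t := hf0 ▸ hinc ⟨le_rfl, hη.le⟩ ⟨ht0.le, htη.le⟩ ht0
    have fnt : 0 < f (0 - t) := by
      rw [zero_sub]
      exact hf0 ▸ hdec ⟨by linarith, by linarith⟩ ⟨by linarith, le_rfl⟩ (by linarith)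
    have hcg : ContinuousOn (fun x => f x - f (x - t)) (Icc 0 t) := by
      refine (hcont.mono fun x hx => ⟨by linarith [hx.1], by linarith [hx.2]⟩).sub
        (hcont.comp (by fun_prop) fun x hx => ⟨by linarith [hx.1], by linarith [hx.2]⟩)
    obtain ⟨x, hx, hfx⟩ := intermediate_value_Ioo ht0.le hcg
      (show (0 : ℝ) ∈ Ioo (f 0 - f (0 - t)) (f t - f (t - t)) by
        rw [sub_self t, hf0]; exact ⟨by linarith, by linarith⟩)
    have hfx : f x - f (x - t) = 0 := hfx
    obtain ⟨hx0, hxt⟩ := hx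
    have hfx0 : 0 < f x := hf0 ▸ hinc ⟨le_rfl, hη.le⟩ ⟨hx0.le, by linarith⟩ hx0
    have hfxε : f x < ε₂ := hsmall (by
      rw [dist_zero_right, Real.norm_eq_abs, abs_lt]; constructor <;> linarith)
    obtain ⟨-, -, up, -, -, um⟩ := hσ (f x) ⟨hfx0, hfxε.trans_le hε₂ε⟩
    refine ⟨f x, ⟨hfx0, hfxε⟩, ?_⟩
    rw [← up x ⟨hx0, by linarith⟩ rfl,
      ← um (x - t) ⟨by linarith, by linarith⟩ (by linarith)]
    ring
  choose! hgt hgt1 hgt2 using hex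
  obtain ⟨M, hM⟩ := chord_expansion (b 2) (b 3) (b 4) C hb2 hC
  refine ⟨ε', ε₂, by rw [hε']; positivity, hε₂0, hε₂ε, hgt, fun t ht =>
    ⟨hgt1 t ht, hgt2 t ht, fun h' hh' he => hw.injOn hh' (hgt1 t ht) (he.trans (hgt2 t ht).symm)⟩,
    M, fun t ht => ?_⟩
  have htr : t < r := ht.2.trans_le (hε' ▸ (min_le_right _ _).trans (min_le_left _ _))
  have ht1 : t < 1 := ht.2.trans_le (hε' ▸ (min_le_right _ _).trans (min_le_right _ _))
  obtain ⟨v1, v2⟩ := hval _ (hgt1 t ht)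
  obtain ⟨p, m⟩ := hloc _ (hgt1 t ht)
  have hd := hgt2 t ht
  generalize hgt t = h at *
  have hrem : ∀ x, |x| ≤ t → |f x - (b 2 * x ^ 2 + b 3 * x ^ 3 + b 4 * x ^ 4)| ≤ C * t ^ 5 := by
    intro x hx
    refine (hT (by rw [dist_zero_right, Real.norm_eq_abs]; linarith)).trans ?_
    gcongr
  have ep : (σp h + σm h) / 2 + t / 2 = σp h := by linarith
  have em : (σp h + σm h) / 2 - t / 2 = σm h := by linarith
  refine hM t ((σp h + σm h) / 2) h _ _ ht.1 ht1.le ?_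
    (hrem (σp h) ?_) (hrem (σm h) ?_) ?_ ?_
  · rw [abs_le]; constructor <;> linarith [p.1, m.2]
  · rw [abs_le]; constructor <;> linarith [p.1, m.2]
  · rw [abs_le]; constructor <;> linarith [p.1, m.2]
  · rw [ep, v1]; ring
  · rw [em, v2]; ring
end

section
/- Let f : ℝ → ℝ be C⁵ on a neighborhood of 0 with f(0) = 0 and f'(0) = 0, set b_i = f⁽ⁱ⁾(0)/i! for i = 2, 3, 4, and assume b₂ > 0. For small h > 0 let σ₋(h) < 0 < σ₊(h) be the unique small solutions of f(σ) = h, and for small t > 0 let h(t) > 0 be the unique small height with σ₊(h(t)) - σ₋(h(t)) = t. Define A(t) = ∫_{σ₋(h(t))}^{σ₊(h(t))} (h(t) - f(σ)) dσ. Then, as t → 0⁺, A(t) = (b₂/6)·t³ + (1/80)·(4b₄ - 5b₃²/b₂)·t⁵ + O(t⁶); in particular, the coefficient of t⁴ in the expansion vanishes. -/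
/-!
The height plays no role beyond `f p = f m = h`, where `p = σ₊(h(t))`, `m = σ₋(h(t))`, `p - m = t`;
since `m < 0 < p`, both endpoints are at most `t` in absolute value. Replacing `f` by its Taylor
polynomial `P = b₂x² + b₃x³ + b₄x⁴` (`exists_taylor_bound`) changes `A(t)` by `O(t⁶)` and turns it
into the trapezoid error of `P` on `[m, p]`. With the midpoint `c = (p + m) / 2` that error equals
`b₂ t³/6 + b₃ c t³/2 + b₄ (t⁵/20 + c² t³)` exactly, while `P p - P m = O(t⁵)`, divided by `t`,
forces first `c = O(t²)` and then `c = -b₃ t²/(8 b₂) + O(t³)`. Substituting gives the claim; these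
last estimates are `chord_estimate`.
-/

/-- Local fourth-order Taylor bound at a critical zero, with a uniform constant. -/
lemma exists_taylor_bound (f : ℝ → ℝ) (δ : ℝ) (hδ : 0 < δ)
    (hf : ContDiffOn ℝ 5 f (Set.Ioo (-δ) δ))
    (hf0 : f 0 = 0) (hf1 : deriv f 0 = 0)
    (b : ℕ → ℝ) (hb : ∀ i, b i = iteratedDeriv i f 0 / (Nat.factorial i : ℝ)) :
    ∃ C r : ℝ, 0 ≤ C ∧ 0 < r ∧ r ≤ δ ∧ ∀ x, |x| < r →
      |f x - (b 2 * x ^ 2 + b 3 * x ^ 3 + b 4 * x ^ 4)| ≤ C * |x| ^ 5 := by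
  have h0 : (0 : ℝ) ∈ Set.Ioo (-δ) δ := ⟨by linarith, hδ⟩
  have hT := taylor_isLittleO (n := 5) (convex_Ioo (-δ) δ) h0 (by exact_mod_cast hf)
  rw [isOpen_Ioo.nhdsWithin_eq h0] at hT
  have hT1 := hT.def one_pos
  obtain ⟨r, hr, hball⟩ := Metric.eventually_nhds_iff.1 hT1
  refine ⟨1 + |b 5|, min r δ, by positivity, lt_min hr hδ, min_le_right _ _, fun x hx => ?_⟩
  have hx1 := hball (y := x) (by simpa using lt_of_lt_of_le hx (min_le_left _ _))
  have hD : ∀ i, iteratedDerivWithin i f (Set.Ioo (-δ) δ) 0 = b i * (Nat.factorial i : ℝ) := by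
    intro i
    rw [iteratedDerivWithin_of_isOpen isOpen_Ioo h0, hb i,
      div_mul_cancel₀ _ (by exact_mod_cast Nat.factorial_ne_zero i)]
  have hb0 : b 0 = 0 := by simp [hb, hf0]
  have hb1 : b 1 = 0 := by simp [hb, iteratedDeriv_one, hf1]
  have hE : taylorWithinEval f 5 (Set.Ioo (-δ) δ) 0 x
      = b 2 * x ^ 2 + b 3 * x ^ 3 + b 4 * x ^ 4 + b 5 * x ^ 5 := by
    rw [taylor_within_apply]
    simp only [Finset.sum_range_succ, Finset.sum_range_zero, hD, hb0, hb1, Nat.factorial,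
      smul_eq_mul]
    push_cast
    field_simp
    ring
  rw [hE] at hx1
  simp only [Real.norm_eq_abs, sub_zero, one_mul, abs_pow] at hx1
  calc |f x - (b 2 * x ^ 2 + b 3 * x ^ 3 + b 4 * x ^ 4)|
      = |(f x - (b 2 * x ^ 2 + b 3 * x ^ 3 + b 4 * x ^ 4 + b 5 * x ^ 5)) + b 5 * x ^ 5| := by
        congr 1; ring
    _ ≤ _ := abs_add_le _ _
    _ ≤ |x| ^ 5 + |b 5| * |x| ^ 5 := by rw [abs_mul, abs_pow]; gcongr
    _ = _ := by ring

/-- The location of the midpoint `c` of a chord of length `t`, from the divided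
equal-height condition `hQ`, and the resulting bound for the area. Here `ep`, `em` are the Taylor
errors at the two endpoints and `E` is the integrated Taylor error. -/
lemma chord_estimate (β γ κ C : ℝ) (hβ : 0 < β) (hC : 0 ≤ C) :
    ∃ M : ℝ, ∀ t c ep em E : ℝ, 0 < t → t ≤ 1 → |c| ≤ t →
      |ep| ≤ C * t ^ 5 → |em| ≤ C * t ^ 5 → |E| ≤ C * t ^ 6 →
      t * (2 * β * c + γ * (3 * c ^ 2 + t ^ 2 / 4) + κ * (4 * c ^ 3 + c * t ^ 2)) = em - ep →
      |t * (ep + em) / 2 - E + γ * t ^ 3 / 2 * (c + γ * t ^ 2 / (8 * β)) + κ * c ^ 2 * t ^ 3|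
        ≤ M * t ^ 6 := by
  set K₁ := (2 * C + 4 * |γ| + 5 * |κ|) / (2 * β) with hK₁
  set K₂ := (2 * C + 3 * |γ| * K₁ + 5 * |κ|) / (2 * β) with hK₂
  have hK₁0 : 0 ≤ K₁ := by positivity
  refine ⟨2 * C + |γ| / 2 * K₂ + |κ| * K₁, ?_⟩
  intro t c ep em E ht ht1 hc hep hem hE hQ
  obtain ⟨Q, hQdef⟩ : ∃ Q, Q = 2 * β * c + γ * (3 * c ^ 2 + t ^ 2 / 4)
    + κ * (4 * c ^ 3 + c * t ^ 2) := ⟨_, rfl⟩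
  rw [← hQdef] at hQ
  have hQb : |Q| ≤ 2 * C * t ^ 4 := by
    have h1 : t * |Q| ≤ t * (2 * C * t ^ 4) := by
      rw [← abs_of_pos ht, ← abs_mul, abs_of_pos ht, hQ]
      calc |em - ep| ≤ |em| + |ep| := abs_sub _ _
        _ ≤ _ := by nlinarith
    exact le_of_mul_le_mul_left h1 ht
  have h43 : t ^ 4 ≤ t ^ 3 := pow_le_pow_of_le_one ht.le ht1 (by norm_num)
  have h32 : t ^ 3 ≤ t ^ 2 := pow_le_pow_of_le_one ht.le ht1 (by norm_num)
  have hc2 : |c| ^ 2 ≤ t ^ 2 := by gcongr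
  have hc3 : |c| ^ 3 ≤ t ^ 3 := by gcongr
  have hκ : |κ * (4 * c ^ 3 + c * t ^ 2)| ≤ |κ| * (5 * t ^ 3) := by
    rw [abs_mul]
    gcongr
    calc |4 * c ^ 3 + c * t ^ 2| ≤ |4 * c ^ 3| + |c * t ^ 2| := abs_add_le _ _
      _ = 4 * |c| ^ 3 + |c| * t ^ 2 := by
        rw [abs_mul, abs_mul, abs_pow, abs_pow, abs_of_pos ht]; norm_num
      _ ≤ 4 * t ^ 3 + t * t ^ 2 := by gcongr
      _ = _ := by ring
  have hc1 : |c| ≤ K₁ * t ^ 2 := by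
    have hγ : |γ * (3 * c ^ 2 + t ^ 2 / 4)| ≤ |γ| * (4 * t ^ 2) := by
      rw [abs_mul]
      gcongr
      rw [abs_of_nonneg (by positivity), ← sq_abs c]
      nlinarith
    have h1 : 2 * β * |c| ≤ (2 * C + 4 * |γ| + 5 * |κ|) * t ^ 2 := by
      have h2 : 2 * β * |c| = |Q - γ * (3 * c ^ 2 + t ^ 2 / 4) - κ * (4 * c ^ 3 + c * t ^ 2)| := by
        rw [hQdef, ← abs_of_pos (by positivity : 0 < 2 * β), ← abs_mul,
          abs_of_pos (by positivity : 0 < 2 * β)]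
        congr 1; ring
      rw [h2]
      refine (abs_sub _ _).trans ((add_le_add (abs_sub _ _) le_rfl).trans ?_)
      have := mul_le_mul_of_nonneg_left (h43.trans h32) hC
      have := mul_le_mul_of_nonneg_left h32 (abs_nonneg κ)
      linarith
    rw [hK₁, div_mul_eq_mul_div, le_div_iff₀ (by positivity)]
    linarith
  have hcc : |c| ^ 2 ≤ K₁ * t ^ 3 := by
    calc |c| ^ 2 = |c| * |c| := sq _
      _ ≤ (K₁ * t ^ 2) * t := by gcongr
      _ = _ := by ring
  have hd : |c + γ * t ^ 2 / (8 * β)| ≤ K₂ * t ^ 3 := by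
    have h2 : 2 * β * |c + γ * t ^ 2 / (8 * β)|
        = |Q - γ * (3 * c ^ 2) - κ * (4 * c ^ 3 + c * t ^ 2)| := by
      rw [hQdef, ← abs_of_pos (by positivity : 0 < 2 * β), ← abs_mul,
        abs_of_pos (by positivity : 0 < 2 * β)]
      congr 1; field_simp; ring
    have hγ : |γ * (3 * c ^ 2)| ≤ |γ| * (3 * (K₁ * t ^ 3)) := by
      rw [abs_mul]
      gcongr
      rw [abs_of_nonneg (by positivity), ← sq_abs c]
      linarith
    have h3 : 2 * β * |c + γ * t ^ 2 / (8 * β)|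
        ≤ (2 * C + 3 * |γ| * K₁ + 5 * |κ|) * t ^ 3 := by
      rw [h2]
      refine (abs_sub _ _).trans ((add_le_add (abs_sub _ _) le_rfl).trans ?_)
      have := mul_le_mul_of_nonneg_left h43 hC
      linarith
    rw [hK₂, div_mul_eq_mul_div, le_div_iff₀ (by positivity)]
    linarith
  have e1 : |t * (ep + em) / 2| ≤ C * t ^ 6 := by
    rw [mul_div_assoc, abs_mul, abs_of_pos ht]
    have : |(ep + em) / 2| ≤ C * t ^ 5 := by
      rw [abs_le] at hep hem ⊢
      constructor <;> linarith
    calc t * |(ep + em) / 2| ≤ t * (C * t ^ 5) := by gcongr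
      _ = _ := by ring
  have e2 : |γ * t ^ 3 / 2 * (c + γ * t ^ 2 / (8 * β))| ≤ |γ| / 2 * K₂ * t ^ 6 := by
    have : |γ * t ^ 3 / 2| = |γ| * t ^ 3 / 2 := by
      rw [abs_div, abs_mul, abs_pow, abs_of_pos ht]; norm_num
    rw [abs_mul, this]
    calc _ ≤ |γ| * t ^ 3 / 2 * (K₂ * t ^ 3) := by gcongr
      _ = _ := by ring
  have e3 : |κ * c ^ 2 * t ^ 3| ≤ |κ| * K₁ * t ^ 6 := by
    rw [abs_mul, abs_mul, abs_pow, abs_pow, abs_of_pos ht]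
    calc _ ≤ |κ| * (K₁ * t ^ 3) * t ^ 3 := by gcongr
      _ = _ := by ring
  refine (abs_add_le _ _).trans ?_
  refine (add_le_add ((abs_add_le _ _).trans (add_le_add (abs_sub _ _) le_rfl)) le_rfl).trans ?_
  linarith

/-- Let `f` be `C⁵` near `0` with `f 0 = 0`, `f' 0 = 0`,
`b i = f⁽ⁱ⁾ 0 / i!` and `b₂ > 0`. For small `h > 0` let `σ₋(h) < 0 < σ₊(h)` be
the unique small solutions of `f σ = h`, and for small `t > 0` let `h(t) > 0` be
the unique small height with `σ₊(h(t)) - σ₋(h(t)) = t`. Define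
`A t = ∫_{σ₋(h(t))}^{σ₊(h(t))} (h(t) - f σ) dσ`. Then, as `t → 0⁺`,
`A t = (b₂/6) t³ + (1/80)(4b₄ - 5b₃²/b₂) t⁵ + O(t⁶)`; in particular the
coefficient of `t⁴` vanishes. -/
theorem stmt_10 (f : ℝ → ℝ) (δ : ℝ) (hδ : 0 < δ)
    (hf : ContDiffOn ℝ 5 f (Set.Ioo (-δ) δ))
    (hf0 : f 0 = 0) (hf1 : deriv f 0 = 0)
    (b : ℕ → ℝ) (hb : ∀ i, b i = iteratedDeriv i f 0 / (Nat.factorial i : ℝ))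
    (hb2 : 0 < b 2)
    (ε δ' : ℝ) (hε : 0 < ε) (hδ' : 0 < δ') (hδ'δ : δ' ≤ δ)
    (σp σm : ℝ → ℝ)
    (hσ : ∀ h ∈ Set.Ioo (0 : ℝ) ε,
      σp h ∈ Set.Ioo (0 : ℝ) δ' ∧ f (σp h) = h ∧
        (∀ x ∈ Set.Ioo (0 : ℝ) δ', f x = h → x = σp h) ∧
      σm h ∈ Set.Ioo (-δ') (0 : ℝ) ∧ f (σm h) = h ∧
        (∀ x ∈ Set.Ioo (-δ') (0 : ℝ), f x = h → x = σm h))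
    (ε' ε₂ : ℝ) (hε' : 0 < ε') (hε₂ : 0 < ε₂) (hε₂ε : ε₂ ≤ ε)
    (hgt : ℝ → ℝ)
    (hhgt : ∀ t ∈ Set.Ioo (0 : ℝ) ε',
      hgt t ∈ Set.Ioo (0 : ℝ) ε₂ ∧ σp (hgt t) - σm (hgt t) = t ∧
        (∀ h' ∈ Set.Ioo (0 : ℝ) ε₂, σp h' - σm h' = t → h' = hgt t))
    (A : ℝ → ℝ)
    (hA : ∀ t, A t = ∫ σ in (σm (hgt t))..(σp (hgt t)), (hgt t - f σ)) :
    ∃ M ε'' : ℝ, 0 < ε'' ∧ ∀ t ∈ Set.Ioo (0 : ℝ) ε'',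
      |A t - ((b 2 / 6) * t ^ 3
          + (1 / 80) * (4 * b 4 - 5 * (b 3) ^ 2 / b 2) * t ^ 5)|
        ≤ M * t ^ 6 := by
  obtain ⟨C, r, hC, hr, hrδ, hT⟩ := exists_taylor_bound f δ hδ hf hf0 hf1 b hb
  obtain ⟨M, hM⟩ := chord_estimate (b 2) (b 3) (b 4) C hb2 hC
  refine ⟨M, min (min ε' r) 1, by positivity, fun t ht => ?_⟩
  obtain ⟨ht0, ht1⟩ := ht
  have htε : t < ε' := ht1.trans_le ((min_le_left _ _).trans (min_le_left _ _))
  have htr : t < r := ht1.trans_le ((min_le_left _ _).trans (min_le_right _ _))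
  have ht1 : t ≤ 1 := ht1.le.trans (min_le_right _ _)
  obtain ⟨hh, hlen, -⟩ := hhgt t ⟨ht0, htε⟩
  obtain ⟨hp, hfp, -, hm, hfm, -⟩ := hσ (hgt t) ⟨hh.1, hh.2.trans_le hε₂ε⟩
  rw [hA t]
  generalize hgt t = h at *
  generalize σp h = p at *
  generalize σm h = m at *
  have hp0 := hp.1
  have hm0 := hm.2
  -- The chord contains `0`, so every abscissa on it is at most its length in absolute value.
  have habs : ∀ x ∈ Set.Icc m p, |x| ≤ t := fun x hx =>
    abs_le.2 ⟨by linarith [hx.1], by linarith [hx.2]⟩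
  have hmp : m ≤ p := by linarith
  have hTt : ∀ x ∈ Set.Icc m p,
      |f x - (b 2 * x ^ 2 + b 3 * x ^ 3 + b 4 * x ^ 4)| ≤ C * t ^ 5 := fun x hx =>
    (hT x ((habs x hx).trans_lt htr)).trans (by have := habs x hx; gcongr)
  have hfc : IntervalIntegrable f MeasureTheory.volume m p := by
    apply ContinuousOn.intervalIntegrable
    rw [Set.uIcc_of_le hmp]
    refine hf.continuousOn.mono fun x hx => ?_
    exact abs_lt.1 (((habs x hx).trans_lt htr).trans_le hrδ)
  have hPc : IntervalIntegrable (fun x => b 2 * x ^ 2 + b 3 * x ^ 3 + b 4 * x ^ 4)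
      MeasureTheory.volume m p := (by fun_prop : Continuous _).intervalIntegrable _ _
  have hE : |∫ x in m..p, (f x - (b 2 * x ^ 2 + b 3 * x ^ 3 + b 4 * x ^ 4))| ≤ C * t ^ 6 := by
    have := intervalIntegral.norm_integral_le_of_norm_le_const (a := m) (b := p) (C := C * t ^ 5)
      (f := fun x => f x - (b 2 * x ^ 2 + b 3 * x ^ 3 + b 4 * x ^ 4)) (fun x hx => by
        rw [Set.uIoc_of_le hmp] at hx
        exact hTt x ⟨hx.1.le, hx.2⟩)
    rw [hlen, abs_of_pos ht0, Real.norm_eq_abs] at this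
    linarith
  have hPint : ∫ x in m..p, (b 2 * x ^ 2 + b 3 * x ^ 3 + b 4 * x ^ 4)
      = b 2 * ((p ^ 3 - m ^ 3) / 3) + b 3 * ((p ^ 4 - m ^ 4) / 4)
        + b 4 * ((p ^ 5 - m ^ 5) / 5) := by
    rw [intervalIntegral.integral_add, intervalIntegral.integral_add]
    · simp only [intervalIntegral.integral_const_mul, integral_pow]
      norm_num
    all_goals exact (by fun_prop : Continuous _).intervalIntegrable _ _
  have hAint : ∫ x in m..p, (h - f x) = t * h - ∫ x in m..p, f x := by
    rw [intervalIntegral.integral_sub intervalIntegrable_const hfc,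
      intervalIntegral.integral_const, hlen, smul_eq_mul]
  have hsplit := intervalIntegral.integral_sub hfc hPc
  rw [hPint] at hsplit
  have hpt : p = m + t := by linarith
  have key := hM t ((p + m) / 2) (f p - (b 2 * p ^ 2 + b 3 * p ^ 3 + b 4 * p ^ 4))
    (f m - (b 2 * m ^ 2 + b 3 * m ^ 3 + b 4 * m ^ 4)) _ ht0 ht1
    (abs_le.2 ⟨by linarith, by linarith⟩) (hTt p ⟨hmp, le_rfl⟩) (hTt m ⟨le_rfl, hmp⟩) hE
    (by rw [hfp, hfm, hpt]; ring)
  convert key using 2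
  rw [hAint, hsplit, hfp, hfm, hpt]
  field_simp
  ring
end

section
/- Let r : ℝ → ℝ² be C³ on a neighborhood of 0 with ‖r'(s)‖ = 1 for all s near 0 (unit-speed curve), and let κ : ℝ → ℝ be C¹ near 0 with r''(s) = κ(s)·(-(r'(s))₂, (r'(s))₁) for s near 0, and assume κ(0) > 0. Let c > 0 and let s₋, s₊ : (0, ε) → ℝ be functions with s₊(t) = c·t^{1/2} + O(t) and s₋(t) = -c·t^{1/2} + O(t) as t → 0⁺. Then, as t → 0⁺, ∫_{s₋(t)}^{s₊(t)} ∫_{s₋(t)}^{s₊(t)} |(r'(s₃))₁·(r'(s₄))₂ - (r'(s₃))₂·(r'(s₄))₁| ds₃ ds₄ = (8·κ(0)·c³/3)·t^{3/2} + O(t²). -/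
/-!
Write `T = r'`, `x ∧ y` for the planar cross product and `N` for `T` rotated by `π / 2`. Since
`T' = κ N` is differentiable at `0`, Taylor's formula gives
`T s = T 0 + s κ(0) N(0) + O(s²)` (`taylor_bound`), and `T 0 ∧ N 0 = 1`, `N 0 ∧ N 0 = 0` yield
`T a ∧ T b = κ(0) (b - a) + O(ρ²)` for `|a|, |b| ≤ ρ` (`cross_bound`). Taking absolute values and
integrating over `[s₋, s₊]²` with `s₊, s₋ = O(t^{1/2})`, the error contributes `O(t²)`, while
`∫∫ |a - b| = (s₊ - s₋)³ / 3` (`double_integral_bound`). Finally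
`(s₊ - s₋)³ = 8 c³ t^{3/2} + O(t²)`.
-/

lemma integral_abs_sub (m p a : ℝ) (h1 : m ≤ a) (h2 : a ≤ p) :
    ∫ b in m..p, |a - b| = ((a - m) ^ 2 + (p - a) ^ 2) / 2 := by
  have hi : ∀ u v : ℝ, IntervalIntegrable (fun b => |a - b|) MeasureTheory.volume u v :=
    fun u v => (by fun_prop : Continuous fun b => |a - b|).intervalIntegrable u v
  rw [← intervalIntegral.integral_add_adjacent_intervals (hi m a) (hi a p)]
  have e1 : ∫ b in m..a, |a - b| = ∫ b in m..a, (a - b) := by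
    apply intervalIntegral.integral_congr
    intro b hb
    rw [Set.uIcc_of_le h1] at hb
    exact abs_of_nonneg (by linarith [hb.2])
  have e2 : ∫ b in a..p, |a - b| = ∫ b in a..p, (b - a) := by
    apply intervalIntegral.integral_congr
    intro b hb
    rw [Set.uIcc_of_le h2] at hb
    simp only
    rw [abs_of_nonpos (by linarith [hb.1])]
    ring
  rw [e1, e2, intervalIntegral.integral_sub (by simp) (by simp),
    intervalIntegral.integral_sub (by simp) (by simp)]
  simp
  ring

lemma integral_integral_abs_sub (m p : ℝ) (h : m ≤ p) :
    ∫ a in m..p, ∫ b in m..p, |a - b| = (p - m) ^ 3 / 3 := by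
  have e : ∫ a in m..p, ∫ b in m..p, |a - b|
      = ∫ a in m..p, ((a - m) ^ 2 + (p - a) ^ 2) / 2 := by
    apply intervalIntegral.integral_congr
    intro a ha
    rw [Set.uIcc_of_le h] at ha
    exact integral_abs_sub m p a ha.1 ha.2
  rw [e, intervalIntegral.integral_div, intervalIntegral.integral_add
    ((by fun_prop : Continuous fun a : ℝ => (a - m) ^ 2).intervalIntegrable _ _)
    ((by fun_prop : Continuous fun a : ℝ => (p - a) ^ 2).intervalIntegrable _ _),
    intervalIntegral.integral_comp_sub_right (fun x => x ^ 2),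
    intervalIntegral.integral_comp_sub_left (fun x => x ^ 2)]
  simp only [integral_pow]
  ring

/-- An integrand uniformly within `E` of `k * |a - b|` on the square `[m, p]²` has double integral
within `E * (p - m) ^ 2` of the model value. -/
lemma double_integral_bound (F : ℝ → ℝ → ℝ) (hF : Continuous (Function.uncurry F))
    (m p k E : ℝ) (h : m ≤ p)
    (hE : ∀ a ∈ Set.Icc m p, ∀ b ∈ Set.Icc m p, |F a b - k * (|a - b|)| ≤ E) :
    |(∫ a in m..p, ∫ b in m..p, F a b) - k * ((p - m) ^ 3 / 3)| ≤ E * (p - m) ^ 2 := by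
  have hG : Continuous (Function.uncurry fun a b : ℝ => k * |a - b|) := by
    unfold Function.uncurry
    fun_prop
  have ic : ∀ {H : ℝ → ℝ → ℝ}, Continuous (Function.uncurry H) →
      IntervalIntegrable (fun a => ∫ b in m..p, H a b) MeasureTheory.volume m p := fun hH =>
    (intervalIntegral.continuous_parametric_intervalIntegral_of_continuous' hH m p
      ).intervalIntegrable _ _
  have ii : ∀ {H : ℝ → ℝ → ℝ}, Continuous (Function.uncurry H) → ∀ a,
      IntervalIntegrable (H a) MeasureTheory.volume m p := fun hH a =>
    (hH.comp (by fun_prop : Continuous fun b : ℝ => (a, b))).intervalIntegrable _ _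
  have e : k * ((p - m) ^ 3 / 3) = ∫ a in m..p, ∫ b in m..p, k * |a - b| := by
    simp only [intervalIntegral.integral_const_mul]
    rw [integral_integral_abs_sub m p h]
  rw [e, ← intervalIntegral.integral_sub (ic hF) (ic hG)]
  have hpm : |p - m| = p - m := abs_of_nonneg (by linarith)
  have key : ∀ a ∈ Set.uIoc m p,
      ‖(∫ b in m..p, F a b) - ∫ b in m..p, k * |a - b|‖ ≤ E * (p - m) := by
    intro a ha
    rw [Set.uIoc_of_le h] at ha
    rw [← intervalIntegral.integral_sub (ii hF a) (ii hG a)]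
    have := intervalIntegral.norm_integral_le_of_norm_le_const (a := m) (b := p) (C := E)
      (f := fun b => F a b - k * |a - b|) (by
        intro b hb
        rw [Set.uIoc_of_le h] at hb
        exact hE a ⟨ha.1.le, ha.2⟩ b ⟨hb.1.le, hb.2⟩)
    rwa [hpm] at this
  have := intervalIntegral.norm_integral_le_of_norm_le_const key
  rw [hpm, Real.norm_eq_abs] at this
  linarith [this, (by ring : E * (p - m) * (p - m) = E * (p - m) ^ 2)]

/-- Second-order Taylor estimate at `0`, assuming only that the derivative is differentiable
at `0`. -/
lemma taylor_bound (T T' : ℝ → ℝ × ℝ) (δ : ℝ) (hδ : 0 < δ)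
    (hT : ∀ s ∈ Set.Ioo (-δ) δ, HasDerivAt T (T' s) s) (hT' : DifferentiableAt ℝ T' 0) :
    ∃ K η : ℝ, 0 ≤ K ∧ 0 < η ∧ η < δ ∧ ∀ s, |s| ≤ η → ‖T s - T 0 - s • T' 0‖ ≤ K * s ^ 2 := by
  obtain ⟨K, hK, hO⟩ := hT'.isBigO_sub.exists_pos
  rw [Asymptotics.IsBigOWith] at hO
  obtain ⟨η, hη, hb⟩ := Metric.eventually_nhds_iff.1 hO
  refine ⟨K, min η δ / 2, hK.le, by positivity, by linarith [min_le_right η δ], ?_⟩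
  intro s hs
  have hm : 0 < min η δ := lt_min hη hδ
  have hlt : |s| < min η δ := by linarith
  have hsη : |s| < η := hlt.trans_le (min_le_left _ _)
  have hsδ : |s| < δ := hlt.trans_le (min_le_right _ _)
  have := (convex_Icc (-|s|) |s|).norm_image_sub_le_of_norm_hasDerivWithin_le
    (f := fun u => T u - u • T' 0) (f' := fun u => T' u - T' 0) (C := K * |s|)
    (x := 0) (y := s) ?_ ?_ ?_ ?_
  · simp only [zero_smul, sub_zero, Real.norm_eq_abs] at this
    rw [mul_assoc, abs_mul_abs_self, ← sq] at this
    rwa [sub_right_comm]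
  · intro u hu
    have h1 := hT u ⟨by linarith [hu.1], by linarith [hu.2]⟩
    have h2 := (hasDerivAt_id u).smul_const (T' 0)
    simp only [one_smul] at h2
    exact (h1.sub h2).hasDerivWithinAt
  · intro u hu
    have hus : |u| ≤ |s| := abs_le.2 hu
    have := @hb u (by rw [Real.dist_eq, sub_zero]; linarith)
    rw [sub_zero, Real.norm_eq_abs] at this
    exact this.trans (by gcongr)
  · simp
  · exact ⟨neg_abs_le s, le_abs_self s⟩

/-- If `(xa, ya)` and `(xb, yb)` are within `e` of `T + a k N` and `T + b k N`, where `T = (x, y)`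
is a unit vector and `N = (-y, x)`, then the absolute cross product of the two vectors is close to
`k * |a - b|`. -/
lemma cross_bound (x y k a b xa ya xb yb e : ℝ) (h0 : x ^ 2 + y ^ 2 = 1) (hk : 0 ≤ k)
    (ha : |a| ≤ 1) (hxb : |xb| ≤ 1) (hyb : |yb| ≤ 1)
    (h1 : |xa - x - a * (k * -y)| ≤ e) (h2 : |ya - y - a * (k * x)| ≤ e)
    (h3 : |xb - x - b * (k * -y)| ≤ e) (h4 : |yb - y - b * (k * x)| ≤ e) :
    |(|xa * yb - ya * xb|) - k * (|a - b|)| ≤ 2 * (2 + k) * e := by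
  have hx : |x| ≤ 1 := by rw [← sq_le_one_iff_abs_le_one]; nlinarith
  have hy : |y| ≤ 1 := by rw [← sq_le_one_iff_abs_le_one]; nlinarith
  have e0 : 0 ≤ e := (abs_nonneg _).trans h1
  have lin : ∀ u v : ℝ, |u| ≤ 1 → |v| ≤ 1 → |u + a * (k * v)| ≤ 1 + k := by
    intro u v hu hv
    calc |u + a * (k * v)| ≤ |u| + |a * (k * v)| := abs_add_le _ _
      _ = |u| + |a| * (k * |v|) := by rw [abs_mul, abs_mul, abs_of_nonneg hk]
      _ ≤ 1 + 1 * (k * 1) := by gcongr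
      _ = 1 + k := by ring
  have l1 := lin x (-y) hx (by rwa [abs_neg])
  have l2 := lin y x hy hx
  have hk' : k * |a - b| = |k * (b - a)| := by rw [abs_mul, abs_of_nonneg hk, abs_sub_comm]
  rw [hk']
  refine (abs_abs_sub_abs_le _ _).trans ?_
  have id : xa * yb - ya * xb - k * (b - a)
      = (x + a * (k * -y)) * (yb - y - b * (k * x)) + (xa - x - a * (k * -y)) * yb
        - ((y + a * (k * x)) * (xb - x - b * (k * -y)) + (ya - y - a * (k * x)) * xb) := by
    linear_combination (k * (b - a)) * h0
  rw [id]
  have pr : ∀ u v B C : ℝ, |u| ≤ B → |v| ≤ C → |u * v| ≤ B * C := by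
    intro u v B C hu hv
    rw [abs_mul]
    exact mul_le_mul hu hv (abs_nonneg _) ((abs_nonneg _).trans hu)
  have p1 := abs_le.1 (pr _ _ _ _ l1 h4)
  have p2 := abs_le.1 (pr _ _ _ _ h1 hyb)
  have p3 := abs_le.1 (pr _ _ _ _ l2 h3)
  have p4 := abs_le.1 (pr _ _ _ _ h2 hxb)
  rw [abs_le]
  constructor <;> nlinarith [p1.1, p1.2, p2.1, p2.2, p3.1, p3.2, p4.1, p4.2]

/-- Let `r` be a unit-speed plane curve, `C³` near `0`, with
signed curvature `κ`, `C¹` near `0`, and `κ 0 > 0`. Let `c > 0` and let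
`s₊(t) = c t^{1/2} + O(t)`, `s₋(t) = -c t^{1/2} + O(t)` as `t → 0⁺`. Then
`∫_{s₋(t)}^{s₊(t)} ∫_{s₋(t)}^{s₊(t)} |(r'(s₃))₁ (r'(s₄))₂ - (r'(s₃))₂ (r'(s₄))₁| ds₃ ds₄
  = (8 κ(0) c³ / 3) t^{3/2} + O(t²)` as `t → 0⁺`. -/
theorem stmt_13 (r : ℝ → ℝ × ℝ) (κ : ℝ → ℝ) (δ : ℝ) (hδ : 0 < δ)
    (hr : ContDiffOn ℝ 3 r (Set.Ioo (-δ) δ))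
    (hκ : ContDiffOn ℝ 1 κ (Set.Ioo (-δ) δ))
    (hunit : ∀ s ∈ Set.Ioo (-δ) δ, (deriv r s).1 ^ 2 + (deriv r s).2 ^ 2 = 1)
    (hcurv : ∀ s ∈ Set.Ioo (-δ) δ,
      deriv (deriv r) s = κ s • (-(deriv r s).2, (deriv r s).1))
    (hκ0 : 0 < κ 0)
    (c : ℝ) (hc : 0 < c) (ε : ℝ) (hε : 0 < ε) (sp sm : ℝ → ℝ)
    (hsp : ∃ M : ℝ, ∀ t ∈ Set.Ioo (0 : ℝ) ε,
      |sp t - c * t ^ ((1 : ℝ) / 2)| ≤ M * t)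
    (hsm : ∃ M : ℝ, ∀ t ∈ Set.Ioo (0 : ℝ) ε,
      |sm t - (-c) * t ^ ((1 : ℝ) / 2)| ≤ M * t) :
    ∃ M' ε' : ℝ, 0 < ε' ∧ ∀ t ∈ Set.Ioo (0 : ℝ) ε',
      |(∫ s₃ in (sm t)..(sp t), ∫ s₄ in (sm t)..(sp t),
          |(deriv r s₃).1 * (deriv r s₄).2 - (deriv r s₃).2 * (deriv r s₄).1|)
        - (8 * κ 0 * c ^ 3 / 3) * t ^ ((3 : ℝ) / 2)|
        ≤ M' * t ^ 2 := by
  obtain ⟨M₁, hM₁⟩ := hsp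
  obtain ⟨M₂, hM₂⟩ := hsm
  have hT2 : ContDiffOn ℝ 2 (deriv r) (Set.Ioo (-δ) δ) :=
    hr.deriv_of_isOpen isOpen_Ioo (by norm_num)
  have hTd : ∀ s ∈ Set.Ioo (-δ) δ, DifferentiableAt ℝ (deriv r) s := fun s hs =>
    (hT2.differentiableOn (by norm_num)).differentiableAt (isOpen_Ioo.mem_nhds hs)
  have h0 : (0 : ℝ) ∈ Set.Ioo (-δ) δ := ⟨by linarith, hδ⟩
  have hT'd : DifferentiableAt ℝ (deriv (deriv r)) 0 :=
    ((hT2.deriv_of_isOpen (m := 1) isOpen_Ioo (by norm_num)).differentiableOn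
      (by norm_num)).differentiableAt (isOpen_Ioo.mem_nhds h0)
  obtain ⟨K, η, hK, hη, hηδ, htay⟩ :=
    taylor_bound (deriv r) (deriv (deriv r)) δ hδ (fun s hs => (hTd s hs).hasDerivAt) hT'd
  have hmem : ∀ s, |s| ≤ η → s ∈ Set.Ioo (-δ) δ := fun s hs =>
    ⟨by linarith [(abs_le.1 hs).1], by linarith [(abs_le.1 hs).2]⟩
  have hx1 : ∀ s, |s| ≤ η → |(deriv r s).1| ≤ 1 := fun s hs => by
    rw [← sq_le_one_iff_abs_le_one]; nlinarith [hunit s (hmem s hs), sq_nonneg (deriv r s).2]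
  have hy1 : ∀ s, |s| ≤ η → |(deriv r s).2| ≤ 1 := fun s hs => by
    rw [← sq_le_one_iff_abs_le_one]; nlinarith [hunit s (hmem s hs), sq_nonneg (deriv r s).1]
  have htx : ∀ s, |s| ≤ η →
      |(deriv r s).1 - (deriv r 0).1 - s * (κ 0 * -(deriv r 0).2)| ≤ K * s ^ 2 := fun s hs => by
    have := (norm_fst_le _).trans (htay s hs)
    rw [hcurv 0 h0] at this
    simpa using this
  have hty : ∀ s, |s| ≤ η →
      |(deriv r s).2 - (deriv r 0).2 - s * (κ 0 * (deriv r 0).1)| ≤ K * s ^ 2 := fun s hs => by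
    have := (norm_snd_le _).trans (htay s hs)
    rw [hcurv 0 h0] at this
    simpa using this
  -- Precomposing with the retraction onto `[-η, η]` makes the integrand globally continuous.
  let q : ℝ → ℝ := fun s => max (-η) (min η s)
  have hq : ∀ s, |q s| ≤ η := fun s =>
    abs_le.2 ⟨le_max_left _ _, max_le (by linarith) (min_le_left _ _)⟩
  have hqs : ∀ s, |s| ≤ η → q s = s := fun s hs => by
    have := abs_le.1 hs
    simp only [q]
    rw [min_eq_right this.2, max_eq_right this.1]
  have hqc : Continuous fun s => deriv r (q s) :=
    hT2.continuousOn.comp_continuous (by fun_prop) fun s => hmem _ (hq s)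
  let F : ℝ → ℝ → ℝ := fun a b =>
    |(deriv r (q a)).1 * (deriv r (q b)).2 - (deriv r (q a)).2 * (deriv r (q b)).1|
  have hF : Continuous (Function.uncurry F) := by
    have c1 : Continuous fun z : ℝ × ℝ => deriv r (q z.1) := hqc.comp continuous_fst
    have c2 : Continuous fun z : ℝ × ℝ => deriv r (q z.2) := hqc.comp continuous_snd
    exact ((c1.fst.mul c2.snd).sub (c1.snd.mul c2.fst)).abs
  obtain ⟨M, hM, hM1, hM2⟩ : ∃ M : ℝ, 0 < M ∧ M₁ ≤ M ∧ M₂ ≤ M :=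
    ⟨|M₁| + |M₂| + 1, by positivity, by linarith [le_abs_self M₁, abs_nonneg M₂],
      by linarith [le_abs_self M₂, abs_nonneg M₁]⟩
  have hcM : 0 < c + M := by linarith
  obtain ⟨w, hw, hw1, hw2, hw3⟩ : ∃ w : ℝ, 0 < w ∧ M * w ≤ c ∧ (c + M) * w ≤ min η 1 ∧ w ≤ 1 := by
    refine ⟨min (c / M) (min (min η 1 / (c + M)) 1), by positivity, ?_, ?_, ?_⟩
    · rw [mul_comm, ← le_div_iff₀ hM]; exact min_le_left _ _
    · rw [mul_comm, ← le_div_iff₀ hcM]; exact (min_le_right _ _).trans (min_le_left _ _)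
    · exact (min_le_right _ _).trans (min_le_right _ _)
  refine ⟨8 * (2 + κ 0) * K * (c + M) ^ 4 + 8 * κ 0 * M * (c + M) ^ 2, min ε (w ^ 2),
    by positivity, ?_⟩
  rintro t ⟨ht, ht'⟩
  obtain ⟨u, hu, rfl⟩ : ∃ u : ℝ, 0 < u ∧ t = u ^ 2 :=
    ⟨√t, Real.sqrt_pos.2 ht, (Real.sq_sqrt ht.le).symm⟩
  have huw : u < w := lt_of_pow_lt_pow_left₀ 2 hw.le (ht'.trans_le (min_le_right _ _))
  have htε : u ^ 2 ∈ Set.Ioo 0 ε := ⟨ht, ht'.trans_le (min_le_left _ _)⟩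
  have r1 : (u ^ 2 : ℝ) ^ ((1 : ℝ) / 2) = u := by
    rw [← Real.rpow_natCast, ← Real.rpow_mul hu.le]; norm_num
  have r3 : (u ^ 2 : ℝ) ^ ((3 : ℝ) / 2) = u ^ 3 := by
    rw [← Real.rpow_natCast, ← Real.rpow_mul hu.le, ← Real.rpow_natCast]; norm_num
  have hp := hM₁ _ htε
  have hm := hM₂ _ htε
  rw [r1] at hp hm
  rw [r3]
  generalize sp (u ^ 2) = p at *
  generalize sm (u ^ 2) = m at *
  have hp' := abs_le.1 (hp.trans (mul_le_mul_of_nonneg_right hM1 ht.le))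
  have hm' := abs_le.1 (hm.trans (mul_le_mul_of_nonneg_right hM2 ht.le))
  have hMu : M * u ^ 2 ≤ c * u := by
    have : M * u ≤ c := le_trans (by gcongr) hw1
    calc M * u ^ 2 = M * u * u := by ring
      _ ≤ c * u := by gcongr
  have hMu' : M * u ^ 2 ≤ M * u := by
    have : u ≤ 1 := huw.le.trans hw3
    gcongr
    exact pow_le_of_le_one hu.le this two_ne_zero
  have hmp : m ≤ p := by linarith [hp'.1, hm'.2]
  set ρ := (c + M) * u with hρ
  have hρ0 : 0 < ρ := by positivity
  have hρw : ρ ≤ min η 1 := by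
    refine le_trans ?_ hw2
    rw [hρ]; gcongr
  have hρη : ρ ≤ η := hρw.trans (min_le_left _ _)
  have hρ1 : ρ ≤ 1 := hρw.trans (min_le_right _ _)
  have hmρ : -ρ ≤ m := by rw [hρ]; linarith [hm'.1]
  have hpρ : p ≤ ρ := by rw [hρ]; linarith [hp'.2]
  have hIcc : ∀ s ∈ Set.Icc m p, |s| ≤ ρ := fun s hs =>
    abs_le.2 ⟨by linarith [hs.1], by linarith [hs.2]⟩
  have hcongr : (∫ a in m..p, ∫ b in m..p,
        |(deriv r a).1 * (deriv r b).2 - (deriv r a).2 * (deriv r b).1|)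
      = ∫ a in m..p, ∫ b in m..p, F a b := by
    apply intervalIntegral.integral_congr
    intro a ha
    apply intervalIntegral.integral_congr
    intro b hb
    rw [Set.uIcc_of_le hmp] at ha hb
    simp only [F]
    rw [hqs a ((hIcc a ha).trans hρη), hqs b ((hIcc b hb).trans hρη)]
  rw [hcongr]
  have hmain := double_integral_bound F hF m p (κ 0) (2 * (2 + κ 0) * (K * ρ ^ 2)) hmp (by
    intro a ha b hb
    have ha' := hIcc a ha
    have hb' := hIcc b hb
    have haη := ha'.trans hρη
    have hbη := hb'.trans hρη
    have hsq : ∀ s : ℝ, |s| ≤ ρ → K * s ^ 2 ≤ K * ρ ^ 2 := fun s hs => by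
      rw [← sq_abs s]; gcongr
    simp only [F]
    rw [hqs a haη, hqs b hbη]
    exact cross_bound (deriv r 0).1 (deriv r 0).2 (κ 0) a b _ _ _ _ _ (hunit 0 h0) hκ0.le
      (ha'.trans hρ1) (hx1 b hbη) (hy1 b hbη)
      ((htx a haη).trans (hsq a ha')) ((hty a haη).trans (hsq a ha'))
      ((htx b hbη).trans (hsq b hb')) ((hty b hbη).trans (hsq b hb')))
  have hd0 : 0 ≤ p - m := by linarith
  have hd : p - m ≤ 2 * ρ := by linarith
  have hd2 : (p - m) ^ 2 ≤ 4 * ρ ^ 2 :=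
    (pow_le_pow_left₀ hd0 hd 2).trans_eq (by ring)
  have hcu : 0 < 2 * c * u := by positivity
  have hcρ : 2 * c * u ≤ 2 * ρ := by rw [hρ]; linarith [mul_pos hM hu, add_mul c M u]
  have hcube : |(p - m) ^ 3 - (2 * c * u) ^ 3| ≤ (2 * M * u ^ 2) * (12 * ρ ^ 2) := by
    have : (p - m) ^ 3 - (2 * c * u) ^ 3 = (p - m - 2 * c * u) *
        ((p - m) ^ 2 + (p - m) * (2 * c * u) + (2 * c * u) ^ 2) := by ring
    rw [this, abs_mul]
    refine mul_le_mul (abs_le.2 ⟨by linarith [hp'.1, hm'.2], by linarith [hp'.2, hm'.1]⟩) ?_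
      (abs_nonneg _) (by positivity)
    rw [abs_of_nonneg (by positivity)]
    have : (p - m) * (2 * c * u) ≤ (2 * ρ) * (2 * ρ) := by gcongr
    have : (2 * c * u) ^ 2 ≤ (2 * ρ) ^ 2 := by gcongr
    linarith
  have hE : 2 * (2 + κ 0) * (K * ρ ^ 2) * (p - m) ^ 2
      ≤ 2 * (2 + κ 0) * (K * ρ ^ 2) * (4 * ρ ^ 2) := by gcongr
  have hκc : κ 0 / 3 * |(p - m) ^ 3 - (2 * c * u) ^ 3|
      ≤ κ 0 / 3 * ((2 * M * u ^ 2) * (12 * ρ ^ 2)) := by gcongr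
  calc _ = |((∫ a in m..p, ∫ b in m..p, F a b) - κ 0 * ((p - m) ^ 3 / 3))
        + κ 0 / 3 * ((p - m) ^ 3 - (2 * c * u) ^ 3)| := by congr 1; ring
    _ ≤ _ := abs_add_le _ _
    _ = |(∫ a in m..p, ∫ b in m..p, F a b) - κ 0 * ((p - m) ^ 3 / 3)|
        + κ 0 / 3 * |(p - m) ^ 3 - (2 * c * u) ^ 3| := by
      rw [abs_mul, abs_of_nonneg (by positivity : 0 ≤ κ 0 / 3)]
    _ ≤ 2 * (2 + κ 0) * (K * ρ ^ 2) * (4 * ρ ^ 2)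
        + κ 0 / 3 * ((2 * M * u ^ 2) * (12 * ρ ^ 2)) :=
      add_le_add (hmain.trans hE) hκc
    _ = _ := by rw [hρ]; ring
end
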